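/- Let n ≥ 4 and d ≥ 3. There exists a constant C = C(d,n) with the following property. Let F ∈ ℚ[x_0,…,x_n] be a homogeneous polynomial of degree d which is irreducible over ℚ̄, defining X = {F = 0} ⊂ P^n, and suppose X is not covered by its linear divisors: there exists a nonzero x ∈ ℚ̄^{n+1} with F(x) = 0 lying in no (n−1)-dimensional ℚ̄-linear subspace of ℚ̄^{n+1} on which F vanishes identically. Then there exists a nonzero homogeneous polynomial Φ ∈ ℚ[a_0,…,a_n] of degree at most C such that for every nonzero a = (a_0,…,a_n) ∈ ℚ^{n+1} with Φ(a) ≠ 0, and for any ℚ-linear isomorphism φ : ℚ^n → ker(a) ⊂ ℚ^{n+1} (where ker(a) is the kernel of the linear form a_0x_0+⋯+a_nx_n), the hyperplane section Π_a ∩ X is geometrically integral and not covered by its linear divisors; concretely: F∘φ is irreducible over ℚ̄, and there exists a nonzero y ∈ ℚ̄^n with (F∘φ)(y) = 0 lying in no (n−2)-dimensional ℚ̄-linear subspace of ℚ̄^n on which F∘φ vanishes identically. -/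

import Mathlib

open MvPolynomial

/-- The composite `G ∘ ψ` of a polynomial `G` in `m` variables with a linear map
`ψ : k^n → k^m`, as a polynomial in `n` variables. -/
noncomputable def restrictPoly {k : Type*} [CommSemiring k] {m n : ℕ}
    (G : MvPolynomial (Fin m) k) (ψ : (Fin n → k) →ₗ[k] (Fin m → k)) :
    MvPolynomial (Fin n) k :=
  aeval (fun i => ∑ j, C (ψ (Pi.single j 1) i) * X j) G

theorem ultra {K β : Type} [Field K] [IsAlgClosed K] (S : Submonoid (β → K)) (h0 : (0 : β → K) ∉ S) :
    ∃ (U : Ultrafilter β) (E : Type) (_ : Field E) (_ : IsAlgClosed E) (θ : (β → K) →+* E),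
      Function.Surjective θ ∧ (∀ f, θ f = 0 ↔ ∀ᶠ b in (U : Filter β), f b = 0) ∧
      ∀ s ∈ S, θ s ≠ 0 := by
  classical
  let B : FilterBasis β :=
    { sets := {A | ∃ s ∈ S, A = {b | s b ≠ 0}}
      nonempty := ⟨_, 1, S.one_mem, rfl⟩
      inter_sets := by
        rintro _ _ ⟨s, hs, rfl⟩ ⟨t, ht, rfl⟩
        refine ⟨_, ⟨s * t, S.mul_mem hs ht, rfl⟩, ?_⟩
        intro b hb
        simp only [Set.mem_ofPred_eq, Pi.mul_apply, ne_eq, mul_eq_zero, not_or] at hb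
        exact hb }
  have hne : B.filter.NeBot := by
    rw [Filter.neBot_iff]
    intro hbot
    have : (∅ : Set β) ∈ B.filter := by rw [hbot]; trivial
    rw [FilterBasis.mem_filter_iff] at this
    obtain ⟨_, ⟨s, hs, rfl⟩, hsub⟩ := this
    apply h0
    convert hs
    funext b
    by_contra hb
    exact hsub (show b ∈ {b | s b ≠ 0} from fun h => hb h.symm)
  let U := Ultrafilter.of B.filter
  have key : ∀ f : β → K, Filter.Germ.coeRingHom (U : Filter β) f = 0 ↔ ∀ᶠ b in (U : Filter β), f b = 0 := by
    intro f
    exact Filter.Germ.coe_eq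
  have hsurj : Function.Surjective (Filter.Germ.coeRingHom (U : Filter β) (R := K)) := by
    intro y
    induction y using Filter.Germ.inductionOn with
    | _ f => exact ⟨f, rfl⟩
  refine ⟨U, Filter.Germ (U : Filter β) K, inferInstance, ?_, Filter.Germ.coeRingHom _, hsurj, key, ?_⟩
  · apply IsAlgClosed.of_exists_root
    intro p hp hirr
    have hl : p ∈ Polynomial.lifts (Filter.Germ.coeRingHom (U : Filter β) (R := K)) := by
      rw [Polynomial.lifts_iff_coeff_lifts]
      exact fun n => hsurj _
    obtain ⟨q, hq, hqd, hqm⟩ := Polynomial.lifts_and_degree_eq_and_monic hl hp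
    have hroot : ∀ b : β, ∃ x : K, (q.map (Pi.evalRingHom (fun _ : β => K) b)).eval x = 0 := by
      intro b
      apply IsAlgClosed.exists_root
      rw [hqm.degree_map]
      rw [hqd]
      exact (Polynomial.degree_pos_of_irreducible hirr).ne'
    choose x hx using hroot
    refine ⟨Filter.Germ.coeRingHom _ x, ?_⟩
    rw [← hq, Polynomial.eval_map, Polynomial.eval₂_hom]
    have : q.eval x = 0 := by
      funext b
      have := hx b
      rw [Polynomial.eval_map] at this
      have h2 := Polynomial.hom_eval₂ q (RingHom.id _) (Pi.evalRingHom (fun _ : β => K) b) x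
      simp only [RingHom.comp_id] at h2
      change Pi.evalRingHom (fun _ : β => K) b (q.eval x) = 0
      rw [Polynomial.eval, h2]; exact this
    rw [this, map_zero]
  · intro s hs h
    rw [key] at h
    have h1 : {b | s b ≠ 0} ∈ (U : Filter β) :=
      Ultrafilter.of_le _ (B.mem_filter_of_mem ⟨s, hs, rfl⟩)
    have := Filter.Eventually.and h h1
    obtain ⟨b, hb, hb'⟩ := this.exists
    exact hb' hb

theorem valu {K β s : Type} [Field K] [IsAlgClosed K] (p : β → s → K) (x0 : s → K)
    (h : ∀ P : MvPolynomial s K, (∀ b, eval (p b) P = 0) → eval x0 P = 0) :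
    ∃ (U : Ultrafilter β) (E : Type) (_ : Field E) (_ : IsAlgClosed E) (θ : (β → K) →+* E)
      (V : ValuationSubring E),
      Function.Surjective θ ∧ (∀ f, θ f = 0 ↔ ∀ᶠ b in (U : Filter β), f b = 0) ∧
      (∀ c : K, θ (fun _ => c) ∈ V) ∧
      (∀ i, θ (fun b => p b i) ∈ V) ∧
      (∀ i, θ (fun b => p b i) - θ (fun _ => x0 i) ∈ V.nonunits) := by
  let ev : MvPolynomial s K →+* (β → K) := RingHom.pi (fun b => (eval (p b)))
  let S : Submonoid (β → K) := ((nonZeroDivisors K).comap (eval x0 : MvPolynomial s K →+* K)).map ev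
  have h0 : (0 : β → K) ∉ S := by
    rintro ⟨P, hP, h0⟩
    have h1 := h P (fun b => congrFun h0 b)
    have : (eval x0 P) ∈ nonZeroDivisors K := hP
    rw [h1] at this
    exact zero_notMem_nonZeroDivisors this
  obtain ⟨U, E, i1, i2, θ, hs, hU, hS⟩ := ultra S h0
  let g := θ.comp ev
  let A : Subring E := g.range
  let I : Ideal A := Ideal.map g.rangeRestrict (RingHom.ker (eval x0 : MvPolynomial s K →+* K))
  have hI : I ≠ ⊤ := by
    intro ht
    have : (1 : A) ∈ I := by rw [ht]; trivial
    rw [Ideal.mem_map_iff_of_surjective _ g.rangeRestrict_surjective] at this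
    obtain ⟨P, hP, hP1⟩ := this
    have h1 : g P = 1 := congrArg Subtype.val hP1
    have h2 : θ (ev (P - 1)) = 0 := by
      change g (P - 1) = 0
      rw [map_sub, h1, map_one, sub_self]
    refine hS _ ⟨P - 1, ?_, rfl⟩ h2
    change eval x0 (P - 1) ∈ nonZeroDivisors K
    rw [map_sub, show eval x0 P = 0 from hP, map_one]
    simp
  obtain ⟨V, hV1, hV2⟩ := Ideal.image_subset_nonunits_valuationSubring I hI
  have hc : ∀ c : K, θ (fun _ => c) = g (C c) := by
    intro c; change _ = θ _; congr 1; funext b; simp [ev]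
  have hx : ∀ i, θ (fun b => p b i) = g (X i) := by
    intro c; change _ = θ _; congr 1; funext b; simp [ev]
  refine ⟨U, E, i1, i2, θ, V, hs, hU, ?_, ?_, ?_⟩
  · intro c; rw [hc]; exact hV1 ⟨_, rfl⟩
  · intro c; rw [hx]; exact hV1 ⟨_, rfl⟩
  · intro i
    rw [hx, hc, ← map_sub]
    apply hV2
    refine ⟨g.rangeRestrict (X i - C (x0 i)), Ideal.mem_map_of_mem _ ?_, rfl⟩
    rw [RingHom.mem_ker]; simp

theorem comp_bound {K σ τ : Type} [Field K] [Finite σ] [Finite τ] (B : Set ((σ ⊕ τ) → K)) :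
    ∃ Cd : ℕ, ∀ f : σ → K,
      (∃ (a : τ → K) (P : MvPolynomial (σ ⊕ τ) K), (∀ z ∈ B, eval z P = 0) ∧ eval (Sum.elim f a) P ≠ 0) →
      ∃ Φ : MvPolynomial τ K, Φ ≠ 0 ∧ Φ.totalDegree ≤ Cd ∧
        ∀ a, eval a Φ ≠ 0 → Sum.elim f a ∉ B := by
  classical
  let I : Ideal (MvPolynomial (σ ⊕ τ) K) :=
    { carrier := {P | ∀ z ∈ B, eval z P = 0}
      add_mem' := by intro a b ha hb z hz; rw [map_add, ha z hz, hb z hz, add_zero]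
      zero_mem' := by intro z hz; simp
      smul_mem' := by intro c a ha z hz; rw [smul_eq_mul, map_mul, ha z hz, mul_zero] }
  obtain ⟨S, hS⟩ := (inferInstance : IsNoetherianRing (MvPolynomial (σ ⊕ τ) K)).noetherian I
  let sp : (σ → K) → MvPolynomial (σ ⊕ τ) K →ₐ[K] MvPolynomial τ K :=
    fun f => aeval (Sum.elim (fun i => C (f i)) X)
  have hev : ∀ f a P, eval a (sp f P) = eval (Sum.elim f a) P := by
    intro f a P
    have : (eval a).comp (sp f).toRingHom = eval (Sum.elim f a) := by
      apply MvPolynomial.ringHom_ext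
      · intro r; simp [sp]
      · intro i; rcases i with i | i <;> simp [sp]
    exact congrArg (fun g => g P) this
  have hdeg : ∀ P f, (sp f P).totalDegree ≤ P.totalDegree := by
    intro P f
    have := Fintype.ofFinite (σ ⊕ τ)
    simp only [sp]
    rw [aeval_def, eval₂_eq']
    apply MvPolynomial.totalDegree_finsetSum_le
    intro m hm
    refine (MvPolynomial.totalDegree_mul _ _).trans ?_
    have h1 : (algebraMap K (MvPolynomial τ K) (coeff m P)).totalDegree = 0 := totalDegree_C _
    rw [h1, zero_add]
    refine le_trans (MvPolynomial.totalDegree_finsetProd _ _) ?_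
    refine le_trans ?_ (MvPolynomial.le_totalDegree hm)
    rw [Finsupp.sum_fintype _ _ (by simp)]
    refine Finset.sum_le_sum ?_
    intro i _
    refine (totalDegree_pow _ _).trans ?_
    refine (Nat.mul_le_mul_left _ (?_ : _ ≤ 1)).trans (mul_one _).le
    rcases i with i | i <;> simp
  refine ⟨S.sup totalDegree, ?_⟩
  rintro f ⟨a, P, hP, hPa⟩
  have : ∃ Q ∈ S, eval (Sum.elim f a) Q ≠ 0 := by
    by_contra hcon
    push Not at hcon
    apply hPa
    have hPI : P ∈ I := hP
    rw [← hS] at hPI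
    have : Submodule.span (MvPolynomial (σ ⊕ τ) K) (S : Set (MvPolynomial (σ ⊕ τ) K)) ≤ RingHom.ker (eval (Sum.elim f a)) := by
      rw [Submodule.span_le]; exact hcon
    exact this hPI
  obtain ⟨Q, hQ, hQa⟩ := this
  refine ⟨sp f Q, ?_, (hdeg _ _).trans (Finset.le_sup (f := totalDegree) hQ), ?_⟩
  · intro h; rw [← hev, h] at hQa; simp at hQa
  · intro a' ha' hB
    have hQI : Q ∈ I := by rw [← hS]; exact Submodule.subset_span hQ
    rw [hev] at ha'
    exact ha' (hQI _ hB)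

theorem desc_hom {K k : Type} [Field K] [IsAlgClosed K] [Field k] [Algebra K k] (s : Set k) (hs : s.Finite) :
    Nonempty (Algebra.adjoin K s →ₐ[K] K) := by
  let A := Algebra.adjoin K s
  have : Algebra.FiniteType K A := by
    rw [← Subalgebra.fg_iff_finiteType]
    exact ⟨hs.toFinset, by simp [A]⟩
  obtain ⟨m, hm⟩ := Ideal.exists_maximal A
  let : Field (A ⧸ m) := Ideal.Quotient.field m
  have : Module.Finite K (A ⧸ m) := finite_of_finite_type_of_isJacobsonRing K (A ⧸ m)
  have hb : Function.Bijective (algebraMap K (A ⧸ m)) := IsAlgClosed.algebraMap_bijective_of_isIntegral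
  let e : K ≃ₐ[K] (A ⧸ m) := AlgEquiv.ofBijective (Algebra.ofId K (A ⧸ m)) hb
  exact ⟨e.symm.toAlgHom.comp (Ideal.Quotient.mkₐ K m)⟩

section basics
variable {R S : Type*} [CommRing R] [CommRing S]

noncomputable def sb {r N : ℕ} (M : Matrix (Fin r) (Fin N) R) (F : MvPolynomial (Fin N) R) :
    MvPolynomial (Fin r) R :=
  aeval (fun i => ∑ j, C (M j i) * X j) F

def LD {N : ℕ} (F : MvPolynomial (Fin N) R) (a x : Fin N → R) (r : ℕ) : Prop :=
  ∃ (M : Matrix (Fin r) (Fin N) R) (Li : Matrix (Fin N) (Fin r) R) (c : Fin r → R),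
    M * Li = 1 ∧ M.mulVec a = 0 ∧ Matrix.vecMul c M = x ∧ sb M F = 0

def Red {σ : Type*} (F : MvPolynomial σ R) (d : ℕ) : Prop :=
  ∃ G H, F = G * H ∧ G.totalDegree < d ∧ H.totalDegree < d

theorem totalDegree_map_le' {σ : Type*} (φ : R →+* S) (F : MvPolynomial σ R) :
    (map φ F).totalDegree ≤ F.totalDegree :=
  Finset.sup_mono (support_map_subset _ _)

theorem totalDegree_map_inj {σ : Type*} (φ : R →+* S) (hφ : Function.Injective φ) (F : MvPolynomial σ R) :
    (map φ F).totalDegree = F.totalDegree := by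
  unfold totalDegree; rw [support_map_of_injective _ hφ]

theorem totalDegree_C_mul_le' {σ : Type*} (c : R) (F : MvPolynomial σ R) :
    (C c * F).totalDegree ≤ F.totalDegree := by
  rw [← smul_eq_C_mul]; exact totalDegree_smul_le _ _

theorem Red.map {σ : Type*} {F : MvPolynomial σ R} {d : ℕ} (h : Red F d) (φ : R →+* S) :
    Red (MvPolynomial.map φ F) d := by
  obtain ⟨G, H, rfl, h1, h2⟩ := h
  exact ⟨_, _, map_mul _ _ _, (totalDegree_map_le' _ _).trans_lt h1, (totalDegree_map_le' _ _).trans_lt h2⟩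

theorem sb_map {r N : ℕ} (M : Matrix (Fin r) (Fin N) R) (F : MvPolynomial (Fin N) R) (φ : R →+* S) :
    map φ (sb M F) = sb (M.map φ) (map φ F) := by
  unfold sb
  induction F using MvPolynomial.induction_on with
  | C c => simp
  | add p q hp hq => rw [map_add, map_add, hp, hq]; simp only [map_add]
  | mul_X p i hp => simp only [map_mul, hp, aeval_X, map_X, map_sum, map_C, Matrix.map_apply]

theorem eval_sb {r N : ℕ} (M : Matrix (Fin r) (Fin N) R) (F : MvPolynomial (Fin N) R) (c : Fin r → R) :
    eval c (sb M F) = eval (Matrix.vecMul c M) F := by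
  unfold sb
  induction F using MvPolynomial.induction_on with
  | C c => simp
  | add p q hp hq => rw [map_add, map_add, hp, hq]; simp only [map_add]
  | mul_X p i hp =>
    simp only [map_mul, hp, aeval_X, eval_X, map_sum, eval_C, Matrix.vecMul, dotProduct]
    congr 1; exact Finset.sum_congr rfl fun _ _ => mul_comm _ _

theorem sb_mul {r s N : ℕ} (T : Matrix (Fin s) (Fin r) R) (M : Matrix (Fin r) (Fin N) R)
    (F : MvPolynomial (Fin N) R) : sb (T * M) F = sb T (sb M F) := by
  unfold sb
  induction F using MvPolynomial.induction_on with
  | C c => simp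
  | add p q hp hq => rw [map_add, map_add, hp, hq]; simp only [map_add]
  | mul_X p i hp =>
    rw [map_mul, hp, map_mul, map_mul, aeval_X, aeval_X]
    congr 1
    simp only [map_sum, Matrix.mul_apply, map_mul, aeval_X]
    simp only [aeval_C, algebraMap_eq, Finset.mul_sum, Finset.sum_mul]
    rw [Finset.sum_comm]
    refine Finset.sum_congr rfl fun _ _ => Finset.sum_congr rfl fun _ _ => ?_
    ring

theorem sb_totalDegree {r N : ℕ} (M : Matrix (Fin r) (Fin N) R) (F : MvPolynomial (Fin N) R) :
    (sb M F).totalDegree ≤ F.totalDegree := by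
  unfold sb
  rw [aeval_def, eval₂_eq']
  apply MvPolynomial.totalDegree_finsetSum_le
  intro m hm
  refine (MvPolynomial.totalDegree_mul _ _).trans ?_
  have h1 : (algebraMap R (MvPolynomial (Fin r) R) (coeff m F)).totalDegree = 0 := totalDegree_C _
  rw [h1, zero_add]
  refine le_trans (MvPolynomial.totalDegree_finsetProd _ _) ?_
  refine le_trans ?_ (MvPolynomial.le_totalDegree hm)
  rw [Finsupp.sum_fintype _ _ (by simp)]
  refine Finset.sum_le_sum ?_
  intro i _
  refine (totalDegree_pow _ _).trans ?_
  refine (Nat.mul_le_mul_left _ (?_ : _ ≤ 1)).trans (mul_one _).le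
  apply MvPolynomial.totalDegree_finsetSum_le
  intro j _
  refine (totalDegree_C_mul_le' _ _).trans ?_
  exact (totalDegree_monomial_le _ _).trans (by simp)

theorem Red.sb {r N : ℕ} {F : MvPolynomial (Fin N) R} {d : ℕ} (h : Red F d) (M : Matrix (Fin r) (Fin N) R) :
    Red (sb M F) d := by
  obtain ⟨G, H, rfl, h1, h2⟩ := h
  exact ⟨_, _, map_mul _ _ _, (sb_totalDegree _ _).trans_lt h1, (sb_totalDegree _ _).trans_lt h2⟩

theorem LD.map {N : ℕ} {F : MvPolynomial (Fin N) R} {a x : Fin N → R} {r : ℕ} (h : LD F a x r) (φ : R →+* S) :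
    LD (MvPolynomial.map φ F) (φ ∘ a) (φ ∘ x) r := by
  obtain ⟨M, Li, c, h1, h2, h3, h4⟩ := h
  refine ⟨M.map φ, Li.map φ, φ ∘ c, ?_, ?_, ?_, ?_⟩
  · rw [← Matrix.map_mul, h1]; simp
  · ext i; rw [← RingHom.map_mulVec, h2]; simp
  · ext i; rw [← RingHom.map_vecMul, h3]; simp
  · rw [← sb_map, h4, map_zero]

theorem LD.lift {N : ℕ} {F : MvPolynomial (Fin N) R} {a x : Fin N → R} {r : ℕ} (φ : R →+* S)
    (hφ : Function.Injective φ) (M : Matrix (Fin r) (Fin N) S) (Li : Matrix (Fin N) (Fin r) S) (c : Fin r → S)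
    (h1 : M * Li = 1) (h2 : M.mulVec (φ ∘ a) = 0) (h3 : Matrix.vecMul c M = φ ∘ x)
    (h4 : sb M (MvPolynomial.map φ F) = 0) (hM : ∀ i j, M i j ∈ Set.range φ) (hL : ∀ i j, Li i j ∈ Set.range φ)
    (hc : ∀ i, c i ∈ Set.range φ) : LD F a x r := by
  choose M' hM' using hM
  choose L' hL' using hL
  choose c' hc' using hc
  obtain rfl : Matrix.map (Matrix.of M') φ = M := by ext i j; exact hM' i j
  obtain rfl : Matrix.map (Matrix.of L') φ = Li := by ext i j; exact hL' i j
  obtain rfl : φ ∘ c' = c := by ext i; exact hc' i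
  refine ⟨Matrix.of M', Matrix.of L', c', ?_, ?_, ?_, ?_⟩
  · apply Matrix.map_injective hφ
    change Matrix.map _ φ = Matrix.map _ φ
    rw [Matrix.map_mul, h1]; simp
  · ext i; apply hφ; rw [RingHom.map_mulVec, h2]; simp
  · ext i; apply hφ; rw [RingHom.map_vecMul, h3]; simp
  · apply map_injective φ hφ; rw [sb_map, h4, map_zero]

theorem map_lift {σ : Type*} (φ : R →+* S) (G : MvPolynomial σ S) (hG : ∀ m, coeff m G ∈ Set.range φ) :
    ∃ G', MvPolynomial.map φ G' = G := by
  choose g hg using hG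
  refine ⟨∑ m ∈ G.support, monomial m (g m), ?_⟩
  rw [map_sum]
  conv_rhs => rw [G.as_sum]
  simp [hg]

theorem Red.lift {σ : Type*} {F : MvPolynomial σ R} {d : ℕ} (φ : R →+* S) (hφ : Function.Injective φ)
    (G H : MvPolynomial σ S) (h : MvPolynomial.map φ F = G * H) (h1 : G.totalDegree < d) (h2 : H.totalDegree < d)
    (hG : ∀ m, coeff m G ∈ Set.range φ) (hH : ∀ m, coeff m H ∈ Set.range φ) : Red F d := by
  obtain ⟨G, rfl⟩ := map_lift φ G hG
  obtain ⟨H, rfl⟩ := map_lift φ H hH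
  rw [totalDegree_map_inj _ hφ] at h1 h2
  refine ⟨G, H, map_injective φ hφ ?_, h1, h2⟩
  rw [h, map_mul]

end basics

theorem LD.desc {K k : Type} [Field K] [IsAlgClosed K] [Field k] (κ : K →+* k) {N : ℕ}
    {F : MvPolynomial (Fin N) K} {a x : Fin N → K} {r : ℕ}
    (h : LD (MvPolynomial.map κ F) (κ ∘ a) (κ ∘ x) r) : LD F a x r := by
  let _ := κ.toAlgebra
  obtain ⟨M, Li, c, h1, h2, h3, h4⟩ := h
  let s : Set k := (Set.range fun p : Fin r × Fin N => M p.1 p.2) ∪ (Set.range fun p : Fin N × Fin r => Li p.1 p.2)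
    ∪ Set.range c
  have hs : s.Finite := ((Set.finite_range _).union (Set.finite_range _)).union (Set.finite_range _)
  obtain ⟨φ⟩ := desc_hom (K := K) s hs
  have hr : ∀ y ∈ s, y ∈ Set.range ((Algebra.adjoin K s).val : _ →+* k) :=
    fun y hy => ⟨(⟨y, Algebra.subset_adjoin hy⟩ : Algebra.adjoin K s), rfl⟩
  have key : LD (MvPolynomial.map (algebraMap K (Algebra.adjoin K s)) F) ((algebraMap K (Algebra.adjoin K s)) ∘ a)
      ((algebraMap K (Algebra.adjoin K s)) ∘ x) r := by
    refine LD.lift ((Algebra.adjoin K s).val : _ →+* k) Subtype.val_injective M Li c h1 h2 h3 ?_ ?_ ?_ ?_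
    · rw [MvPolynomial.map_map]; exact h4
    · exact fun i j => hr _ (Or.inl (Or.inl ⟨(i, j), rfl⟩))
    · exact fun i j => hr _ (Or.inl (Or.inr ⟨(i, j), rfl⟩))
    · exact fun i => hr _ (Or.inr ⟨i, rfl⟩)
  have := key.map (φ : _ →+* K)
  rw [MvPolynomial.map_map] at this
  have e : (φ : _ →+* K).comp (algebraMap K (Algebra.adjoin K s)) = RingHom.id K := by ext y; simp
  rw [e, ← Function.comp_assoc, ← Function.comp_assoc, ← RingHom.coe_comp, e] at this
  rw [MvPolynomial.map_id] at this
  exact this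

theorem Red.desc {K k σ : Type} [Field K] [IsAlgClosed K] [Field k] (κ : K →+* k) 
    {F : MvPolynomial σ K} {d : ℕ} (h : Red (MvPolynomial.map κ F) d) : Red F d := by
  let _ := κ.toAlgebra
  obtain ⟨G, H, h, h1, h2⟩ := h
  let s : Set k := ((fun m => coeff m G) '' G.support) ∪ ((fun m => coeff m H) '' H.support)
  have hs : s.Finite := (G.support.finite_toSet.image _).union (H.support.finite_toSet.image _)
  obtain ⟨φ⟩ := desc_hom (K := K) s hs
  have hr : ∀ y ∈ s, y ∈ Set.range ((Algebra.adjoin K s).val : _ →+* k) :=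
    fun y hy => ⟨(⟨y, Algebra.subset_adjoin hy⟩ : Algebra.adjoin K s), rfl⟩
  have key : Red (MvPolynomial.map (algebraMap K (Algebra.adjoin K s)) F) d := by
    refine Red.lift ((Algebra.adjoin K s).val : _ →+* k) Subtype.val_injective G H ?_ h1 h2 ?_ ?_
    · rw [MvPolynomial.map_map]; exact h
    · intro m
      by_cases hm : coeff m G = 0
      · exact ⟨0, by rw [hm]; simp⟩
      · exact hr _ (Or.inl ⟨m, by simpa using hm, rfl⟩)
    · intro m
      by_cases hm : coeff m H = 0
      · exact ⟨0, by rw [hm]; simp⟩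
      · exact hr _ (Or.inr ⟨m, by simpa using hm, rfl⟩)
  have := key.map (φ : _ →+* K)
  rw [MvPolynomial.map_map] at this
  have e : (φ : _ →+* K).comp (algebraMap K (Algebra.adjoin K s)) = RingHom.id K := by ext y; simp
  rw [e] at this
  rw [MvPolynomial.map_id] at this
  exact this

theorem LD_iff {K : Type*} [Field K] [Infinite K] {N : ℕ} (F : MvPolynomial (Fin N) K) (a x : Fin N → K) (r : ℕ) :
    LD F a x r ↔ ∃ W : Submodule K (Fin N → K), Module.finrank K W = r ∧ x ∈ W ∧ (∀ z ∈ W, z ⬝ᵥ a = 0) ∧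
      ∀ z ∈ W, eval z F = 0 := by
  constructor
  · rintro ⟨M, Li, c, h1, h2, h3, h4⟩
    have hinj : Function.Injective (Matrix.vecMulLinear M) := by
      intro y z h
      have := congrArg (fun w => Matrix.vecMul w Li) h
      simpa [Matrix.vecMul_vecMul, h1] using this
    refine ⟨LinearMap.range (Matrix.vecMulLinear M), ?_, ⟨c, h3⟩, ?_, ?_⟩
    · rw [LinearMap.finrank_range_of_inj hinj]; simp
    · rintro _ ⟨y, rfl⟩
      rw [Matrix.vecMulLinear_apply, ← Matrix.dotProduct_mulVec, h2]; simp
    · rintro _ ⟨y, rfl⟩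
      rw [Matrix.vecMulLinear_apply, ← eval_sb, h4]; simp
  · rintro ⟨W, hr, hx, ha, hF⟩
    let b := Module.finBasisOfFinrankEq K W hr
    let M : Matrix (Fin r) (Fin N) K := fun j => (b j : Fin N → K)
    let g := W.subtype ∘ₗ b.equivFun.symm.toLinearMap
    have hg : ∀ c, g c = Matrix.vecMul c M := by
      intro c
      simp only [g, LinearMap.comp_apply]
      rw [Matrix.vecMul_eq_sum]
      simp [Module.Basis.equivFun_symm_apply, M]
    have hgW : ∀ c, g c ∈ W := fun c => (b.equivFun.symm c).2
    have hker : LinearMap.ker g = ⊥ := by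
      rw [LinearMap.ker_eq_bot]
      exact (Subtype.val_injective).comp b.equivFun.symm.injective
    obtain ⟨l, hl⟩ := LinearMap.exists_leftInverse_of_injective g hker
    refine ⟨M, Matrix.of fun i j => l (Pi.single i 1) j, b.equivFun ⟨x, hx⟩, ?_, ?_, ?_, ?_⟩
    · ext i j
      have h1 := LinearMap.congr_fun hl (Pi.single i 1)
      have h2 : g (Pi.single i 1) = M i := by rw [hg, Matrix.single_one_vecMul]; rfl
      simp only [LinearMap.comp_apply, h2, LinearMap.id_apply] at h1
      have h3 : M i = ∑ k, M i k • (Pi.single k (1 : K) : Fin N → K) := by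
        ext k; simp [Finset.sum_apply, Pi.single_apply]
      rw [h3, map_sum] at h1
      have h4 := congrFun h1 j
      simp only [map_smul, Finset.sum_apply, Pi.smul_apply, smul_eq_mul] at h4
      rw [Matrix.mul_apply]; simp only [Matrix.of_apply]
      rw [h4, Matrix.one_apply, Pi.single_apply]; simp [eq_comm]
    · ext i; exact ha _ (b i).2
    · rw [← hg]; simp [g]
    · apply MvPolynomial.funext
      intro c; rw [eval_sb, ← hg, hF _ (hgW c)]; simp

theorem exists_scale {E ι : Type*} [Field E] (V : ValuationSubring E) (s : Finset ι) (w : ι → E)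
    (hw : ∃ i ∈ s, w i ≠ 0) : ∃ i ∈ s, w i ≠ 0 ∧ ∀ j ∈ s, w j / w i ∈ V := by
  obtain ⟨i1, hi1s, hi1⟩ := hw
  obtain ⟨i, his, hi⟩ := Finset.exists_max_image s (fun i => V.valuation (w i)) ⟨i1, hi1s⟩
  have h0 : w i ≠ 0 := by
    intro h
    have := hi i1 hi1s
    rw [h, map_zero, le_zero_iff, Valuation.zero_iff] at this
    exact hi1 this
  refine ⟨i, his, h0, fun j hj => ?_⟩
  rw [← V.valuation_le_one_iff, map_div₀]
  exact div_le_one_of_le₀ (hi j hj) zero_le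

theorem int_basis {E ι : Type} [Field E] [Fintype ι] (V : ValuationSubring E) (r : ℕ) :
    ∀ W : Submodule E (ι → E), Module.finrank E W = r →
    ∃ (p : Fin r → ι) (u : Fin r → ι → E), (∀ j, u j ∈ W) ∧ (∀ j i, u j i ∈ V) ∧
      (∀ j j', u j (p j') = if j = j' then 1 else 0) ∧ ∀ x ∈ W, x = ∑ j, x (p j) • u j := by
  classical
  induction r with
  | zero =>
    intro W hW
    rw [Submodule.finrank_eq_zero] at hW
    subst hW
    refine ⟨Fin.elim0, Fin.elim0, fun j => j.elim0, fun j => j.elim0, fun j => j.elim0, ?_⟩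
    intro x hx
    simpa using hx
  | succ r ih =>
    intro W hW
    have hne : W ≠ ⊥ := by
      rintro rfl; simp at hW
    obtain ⟨w, hw, hw0⟩ := Submodule.exists_mem_ne_zero_of_ne_bot hne
    obtain ⟨i0, _, h0, hV⟩ := exists_scale V Finset.univ w (by
      by_contra h; push Not at h; exact hw0 (funext fun i => h i (Finset.mem_univ i)))
    let w' := (w i0)⁻¹ • w
    have hw' : w' ∈ W := W.smul_mem _ hw
    have hw'V : ∀ j, w' j ∈ V := fun j => by
      have := hV j (Finset.mem_univ _); rw [div_eq_inv_mul] at this; exact this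
    have hw'1 : w' i0 = 1 := by simp [w', h0]
    let W' := W ⊓ LinearMap.ker (LinearMap.proj i0 : (ι → E) →ₗ[E] E)
    have hfr : Module.finrank E W' = r := by
      let f : W →ₗ[E] E := (LinearMap.proj i0 : (ι → E) →ₗ[E] E).comp W.subtype
      have h1 := LinearMap.finrank_range_add_finrank_ker f
      have h2 : LinearMap.range f = ⊤ := by
        rw [LinearMap.range_eq_top]
        intro c
        exact ⟨c • ⟨w', hw'⟩, by simp [f, hw'1]⟩
      have h3 : Module.finrank E (LinearMap.ker f) = Module.finrank E W' := by
        have : W' = (LinearMap.ker f).map W.subtype := by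
          ext x; simp only [W', Submodule.mem_inf, Submodule.mem_map]
          constructor
          · rintro ⟨a, b⟩; exact ⟨⟨x, a⟩, b, rfl⟩
          · rintro ⟨⟨y, hy⟩, b, rfl⟩; exact ⟨hy, b⟩
        rw [this]
        exact (LinearEquiv.finrank_eq (Submodule.equivMapOfInjective _ Subtype.val_injective _))
      rw [h2, finrank_top, Module.finrank_self] at h1
      omega
    obtain ⟨p', u', hu1, hu2, hu3, hu4⟩ := ih W' hfr
    have hz : ∀ j, u' j i0 = 0 := fun j => (hu1 j).2
    let u0 := w' - ∑ j, w' (p' j) • u' j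
    have hu0 : ∀ j, u0 (p' j) = 0 := by
      intro j; simp [u0, hu3]
    have hu0i : u0 i0 = 1 := by simp [u0, hz, hw'1]
    have hu0W : u0 ∈ W := W.sub_mem hw' (W.sum_mem fun j _ => W.smul_mem _ (hu1 j).1)
    refine ⟨Fin.cons i0 p', Fin.cons u0 u', ?_, ?_, ?_, ?_⟩
    · intro j; refine Fin.cases ?_ (fun j => ?_) j
      · exact hu0W
      · exact (hu1 j).1
    · intro j i; refine Fin.cases ?_ (fun j => ?_) j
      · simp only [Fin.cons_zero, u0, Pi.sub_apply, Finset.sum_apply, Pi.smul_apply, smul_eq_mul]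
        exact V.toSubring.sub_mem (hw'V i) (V.toSubring.sum_mem fun j _ => V.toSubring.mul_mem (hw'V _) (hu2 _ _))
      · exact hu2 j i
    · intro j j'
      refine Fin.cases ?_ (fun j => ?_) j <;> refine Fin.cases ?_ (fun j' => ?_) j'
      · simp [hu0i]
      · simp [hu0, (Fin.succ_ne_zero _).symm]
      · simp [hz]
      · simp [hu3]
    · intro x hx
      have hx' : x - x i0 • u0 ∈ W' := ⟨W.sub_mem hx (W.smul_mem _ hu0W), by simp [hu0i]⟩
      have := hu4 _ hx'
      rw [sub_eq_iff_eq_add] at this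
      rw [Fin.sum_univ_succ]
      simp only [Fin.cons_zero, Fin.cons_succ]
      rw [add_comm]
      conv_lhs => rw [this]
      congr 1
      apply Finset.sum_congr rfl
      intro j _; simp [hu0]

theorem LD.toV {E : Type} [Field E] (V : ValuationSubring E) {N : ℕ} {F : MvPolynomial (Fin N) V}
    {a x : Fin N → V} {r : ℕ} (h : LD (MvPolynomial.map V.subtype F) (V.subtype ∘ a) (V.subtype ∘ x) r) :
    LD F a x r := by
  classical
  obtain ⟨M, Li, c, h1, h2, h3, h4⟩ := h
  have hinj : Function.Injective (Matrix.vecMulLinear M) := by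
    intro y z h
    have := congrArg (fun w => Matrix.vecMul w Li) h
    simpa [Matrix.vecMul_vecMul, h1] using this
  obtain ⟨p, u, hu1, hu2, hu3, hu4⟩ := int_basis V r (LinearMap.range (Matrix.vecMulLinear M)) (by
    rw [LinearMap.finrank_range_of_inj hinj]; simp)
  choose T hT using hu1
  have hTM : Matrix.of u = Matrix.of T * M := by
    ext i j
    have := congrFun (hT i) j
    rw [Matrix.mul_apply]
    simp only [Matrix.of_apply]
    rw [← this]; rfl
  refine LD.lift V.subtype Subtype.val_injective (Matrix.of u) (Matrix.of fun i j => if p j = i then 1 else 0)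
    (fun j => x (p j)) ?_ ?_ ?_ ?_ ?_ ?_ ?_
  · ext i j
    rw [Matrix.mul_apply, Matrix.one_apply, ← hu3]
    simp
  · rw [hTM, ← Matrix.mulVec_mulVec, h2, Matrix.mulVec_zero]
  · rw [Matrix.vecMul_eq_sum]
    exact (hu4 (V.subtype ∘ x) ⟨c, h3⟩).symm
  · rw [hTM, sb_mul, h4]; simp [sb]
  · intro i j; exact ⟨⟨u i j, hu2 i j⟩, rfl⟩
  · intro i j
    by_cases hh : p j = i
    · exact ⟨1, by simp [hh]⟩
    · exact ⟨0, by simp [hh]⟩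
  · intro i; exact ⟨x (p i), rfl⟩

theorem LD.spec {K E : Type} [Field K] [IsAlgClosed K] [Field E] (V : ValuationSubring E) (κ : K →+* V) {N : ℕ}
    {F : MvPolynomial (Fin N) V} {F0 : MvPolynomial (Fin N) K} {a x : Fin N → V} {a0 x0 : Fin N → K} {r : ℕ}
    (hF : MvPolynomial.map (IsLocalRing.residue V) F = MvPolynomial.map ((IsLocalRing.residue V).comp κ) F0)
    (ha : ∀ i, IsLocalRing.residue V (a i) = IsLocalRing.residue V (κ (a0 i)))
    (hx : ∀ i, IsLocalRing.residue V (x i) = IsLocalRing.residue V (κ (x0 i)))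
    (h : LD (MvPolynomial.map V.subtype F) (V.subtype ∘ a) (V.subtype ∘ x) r) : LD F0 a0 x0 r := by
  apply LD.desc ((IsLocalRing.residue V).comp κ)
  have := (LD.toV V h).map (IsLocalRing.residue V)
  have e1 : IsLocalRing.residue V ∘ a = ((IsLocalRing.residue V).comp κ) ∘ a0 := funext ha
  have e2 : IsLocalRing.residue V ∘ x = ((IsLocalRing.residue V).comp κ) ∘ x0 := funext hx
  rw [hF, e1, e2] at this
  exact this

theorem prim_scale {E σ : Type} [Field E] (V : ValuationSubring E) (G : MvPolynomial σ E) (hG : G ≠ 0) :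
    ∃ (c : E) (G' : MvPolynomial σ V), G = C c * map V.subtype G' ∧ map (IsLocalRing.residue V) G' ≠ 0 ∧
      G'.totalDegree ≤ G.totalDegree := by
  obtain ⟨m, hm, h0, hV⟩ := exists_scale V G.support (fun m => coeff m G) (by
    obtain ⟨m, hm⟩ := support_nonempty.mpr hG
    exact ⟨m, hm, by simpa using hm⟩)
  obtain ⟨G', hG'⟩ := map_lift V.subtype (C (coeff m G)⁻¹ * G) (by
    intro m'
    rw [coeff_C_mul]
    by_cases hm' : m' ∈ G.support
    · exact ⟨⟨_, hV m' hm'⟩, by simp [div_eq_inv_mul]⟩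
    · exact ⟨0, by simp at hm'; simp [hm']⟩)
  refine ⟨coeff m G, G', ?_, ?_, ?_⟩
  · rw [hG', ← mul_assoc, ← C_mul, mul_inv_cancel₀ h0]; simp
  · intro h
    have h1 := congrArg (coeff m) h
    rw [coeff_map, coeff_zero] at h1
    have h2 := congrArg (coeff m) hG'
    rw [coeff_map, coeff_C_mul, inv_mul_cancel₀ h0] at h2
    have : coeff m G' = 1 := Subtype.val_injective h2
    rw [this] at h1; simp at h1
  · rw [← totalDegree_map_inj V.subtype Subtype.val_injective, hG']
    exact totalDegree_C_mul_le' _ _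

theorem Red.toV {E σ : Type} [Field E] (V : ValuationSubring E) {F : MvPolynomial σ V} {d : ℕ}
    (hF : MvPolynomial.map (IsLocalRing.residue V) F ≠ 0) (h : Red (MvPolynomial.map V.subtype F) d) : Red F d := by
  obtain ⟨G, H, h, h1, h2⟩ := h
  have hF0 : MvPolynomial.map V.subtype F ≠ 0 := by
    intro h0
    apply hF
    have : F = 0 := map_injective V.subtype Subtype.val_injective (by rw [h0, map_zero])
    rw [this, map_zero]
  have hG : G ≠ 0 := by rintro rfl; rw [zero_mul] at h; exact hF0 h
  have hH : H ≠ 0 := by rintro rfl; rw [mul_zero] at h; exact hF0 h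
  obtain ⟨c, G, rfl, hG', hGd⟩ := prim_scale V G hG
  obtain ⟨e, H, rfl, hH', hHd⟩ := prim_scale V H hH
  have hGH : MvPolynomial.map (IsLocalRing.residue V) (G * H) ≠ 0 := by
    rw [map_mul]; exact mul_ne_zero hG' hH'
  obtain ⟨m, hm⟩ := ne_zero_iff.mp hGH
  rw [coeff_map] at hm
  have hu : IsUnit (coeff m (G * H)) := by
    by_contra hu
    exact hm ((IsLocalRing.residue_eq_zero_iff _).mpr hu)
  obtain ⟨v, hv⟩ := hu
  have h' : MvPolynomial.map V.subtype F = C (c * e) * MvPolynomial.map V.subtype (G * H) := by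
    rw [h, map_mul, map_mul]; ring
  have hc := congrArg (coeff m) h'
  rw [coeff_map, coeff_C_mul, coeff_map, ← hv] at hc
  have hce : V.subtype (coeff m F * ↑v⁻¹) = c * e := by
    rw [map_mul, hc, mul_assoc, ← map_mul]; simp
  refine ⟨C (coeff m F * ↑v⁻¹) * G, H, ?_, ?_, ?_⟩
  · apply map_injective V.subtype Subtype.val_injective
    rw [h', mul_assoc, map_mul _ (C _), MvPolynomial.map_C, hce]
  · exact ((totalDegree_C_mul_le' _ _).trans hGd).trans_lt h1
  · exact hHd.trans_lt h2

theorem Red.spec {K E σ : Type} [Field K] [IsAlgClosed K] [Field E] (V : ValuationSubring E) (κ : K →+* V)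
    {F : MvPolynomial σ V} {F0 : MvPolynomial σ K} {d : ℕ} (hF0 : F0 ≠ 0)
    (hF : MvPolynomial.map (IsLocalRing.residue V) F = MvPolynomial.map ((IsLocalRing.residue V).comp κ) F0)
    (h : Red (MvPolynomial.map V.subtype F) d) : Red F0 d := by
  apply Red.desc ((IsLocalRing.residue V).comp κ)
  rw [← hF]
  apply Red.map
  apply Red.toV V _ h
  rw [hF]
  intro h0
  exact hF0 (map_injective _ (RingHom.injective _) (by rw [h0, map_zero]))

section los
variable {K E β : Type} [Field K] [Field E] {U : Ultrafilter β} (θ : (β → K) →+* E)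
  (hU : ∀ f, θ f = 0 ↔ ∀ᶠ b in (U : Filter β), f b = 0)

include hU in
theorem los_eq (f g : β → K) (h : ∀ᶠ b in (U : Filter β), f b = g b) : θ f = θ g := by
  rw [← sub_eq_zero, ← map_sub, hU]
  exact h.mono fun b hb => by simp [hb]

include hU in
theorem los_map_zero {σ : Type} (G : MvPolynomial σ (β → K))
    (h : ∀ᶠ b in (U : Filter β), map (Pi.evalRingHom (fun _ => K) b) G = 0) : map θ G = 0 := by
  ext m
  rw [coeff_map, coeff_zero, hU]
  refine h.mono fun b hb => ?_
  have := congrArg (coeff m) hb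
  rwa [coeff_map] at this

include hU in
theorem los_LD {N r : ℕ} (F : MvPolynomial (Fin N) (β → K)) (a x : Fin N → β → K)
    (h : ∀ᶠ b in (U : Filter β), LD (map (Pi.evalRingHom (fun _ => K) b) F) (fun i => a i b) (fun i => x i b) r) :
    LD (map θ F) (θ ∘ a) (θ ∘ x) r := by
  classical
  have h' : ∀ b, ∃ (M : Matrix (Fin r) (Fin N) K) (Li : Matrix (Fin N) (Fin r) K) (c : Fin r → K),
      LD (map (Pi.evalRingHom (fun _ => K) b) F) (fun i => a i b) (fun i => x i b) r →
        M * Li = 1 ∧ M.mulVec (fun i => a i b) = 0 ∧ Matrix.vecMul c M = (fun i => x i b) ∧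
        sb M (map (Pi.evalRingHom (fun _ => K) b) F) = 0 := by
    intro b
    by_cases hb : LD (map (Pi.evalRingHom (fun _ => K) b) F) (fun i => a i b) (fun i => x i b) r
    · obtain ⟨M, Li, c, hh⟩ := hb
      exact ⟨M, Li, c, fun _ => hh⟩
    · exact ⟨0, 0, 0, fun h => absurd h hb⟩
  choose M Li c hM using h'
  let M' : Matrix (Fin r) (Fin N) (β → K) := Matrix.of fun i j b => M b i j
  let L' : Matrix (Fin N) (Fin r) (β → K) := Matrix.of fun i j b => Li b i j
  let c' : Fin r → β → K := fun i b => c b i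
  have hMb : ∀ b, M'.map (Pi.evalRingHom (fun _ => K) b) = M b := fun b => rfl
  refine ⟨M'.map θ, L'.map θ, θ ∘ c', ?_, ?_, ?_, ?_⟩
  · rw [← Matrix.map_mul, ← Matrix.map_one θ (map_zero _) (map_one _)]
    ext i j
    refine los_eq θ hU _ _ (h.mono fun b hb => ?_)
    have := congrFun (congrFun (hM b hb).1 i) j
    rw [Matrix.mul_apply] at this ⊢
    rw [Finset.sum_apply]
    refine this.trans ?_
    rw [Matrix.one_apply, Matrix.one_apply]; split_ifs <;> rfl
  · ext i
    rw [← RingHom.map_mulVec, Pi.zero_apply, hU]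
    refine h.mono fun b hb => ?_
    have := congrFun (hM b hb).2.1 i
    simp only [Matrix.mulVec, dotProduct, Finset.sum_apply] at this ⊢
    exact this
  · ext i
    rw [← RingHom.map_vecMul]
    refine los_eq θ hU _ _ (h.mono fun b hb => ?_)
    have := congrFun (hM b hb).2.2.1 i
    simp only [Matrix.vecMul, dotProduct, Finset.sum_apply] at this ⊢
    exact this
  · rw [← sb_map]
    apply los_map_zero θ hU
    refine h.mono fun b hb => ?_
    rw [sb_map, hMb]
    exact (hM b hb).2.2.2

include hU in
theorem los_Red {σ : Type} [Finite σ] {d : ℕ} (F : MvPolynomial σ (β → K))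
    (h : ∀ᶠ b in (U : Filter β), Red (map (Pi.evalRingHom (fun _ => K) b) F) d) :
    Red (map θ F) d := by
  classical
  have h' : ∀ b, ∃ G H : MvPolynomial σ K, Red (map (Pi.evalRingHom (fun _ => K) b) F) d →
      map (Pi.evalRingHom (fun _ => K) b) F = G * H ∧ G.totalDegree < d ∧ H.totalDegree < d := by
    intro b
    by_cases hb : Red (map (Pi.evalRingHom (fun _ => K) b) F) d
    · obtain ⟨G, H, hh⟩ := hb
      exact ⟨G, H, fun _ => hh⟩
    · exact ⟨0, 0, fun h => absurd h hb⟩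
  choose G H hGH using h'
  let S : Finset (σ →₀ ℕ) := ((Finsupp.finite_of_degree_le (σ := σ) d).toFinset).filter (fun m => m.degree < d)
  have hS : ∀ m, m ∈ S ↔ m.degree < d := by
    intro m; simp only [S, Finset.mem_filter, Set.Finite.mem_toFinset, Set.mem_ofPred_eq]
    constructor
    · exact fun h => h.2
    · exact fun h => ⟨h.le, h⟩
  have asm : ∀ G : β → MvPolynomial σ K, ∃ G' : MvPolynomial σ (β → K), (0 < d → G'.totalDegree < d) ∧
      ∀ b, (G b).totalDegree < d → map (Pi.evalRingHom (fun _ => K) b) G' = G b := by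
    intro G
    refine ⟨∑ m ∈ S, monomial m (fun b => coeff m (G b)), ?_, ?_⟩
    · intro hd
      rw [← Nat.le_sub_one_iff_lt hd]
      apply totalDegree_finsetSum_le
      intro m hm
      rw [hS] at hm
      refine (totalDegree_monomial_le _ _).trans ?_
      exact Nat.le_sub_one_of_lt hm
    · intro b hb
      rw [map_sum]
      simp only [map_monomial, Pi.evalRingHom_apply]
      ext m
      rw [coeff_sum]
      simp only [coeff_monomial, Finset.sum_ite_eq']
      split_ifs with hm
      · rfl
      · symm; by_contra h0
        apply hm; rw [hS]
        exact lt_of_le_of_lt (le_totalDegree (mem_support_iff.mpr h0)) hb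
  obtain ⟨G', hG1, hG2⟩ := asm G
  obtain ⟨H', hH1, hH2⟩ := asm H
  obtain ⟨b0, hb0⟩ := h.exists
  have hd : 0 < d := lt_of_le_of_lt (Nat.zero_le _) (hGH b0 hb0).2.1
  refine ⟨map θ G', map θ H', ?_, (totalDegree_map_le' _ _).trans_lt (hG1 hd), (totalDegree_map_le' _ _).trans_lt (hH1 hd)⟩
  rw [← sub_eq_zero, ← map_mul, ← map_sub]
  apply los_map_zero θ hU
  refine h.mono fun b hb => ?_
  obtain ⟨h1, h2, h3⟩ := hGH b hb
  rw [map_sub, map_mul, hG2 b h2, hH2 b h3, h1, sub_self]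

end los

abbrev Mon (N d : ℕ) : Type := ↥(Finset.finsuppAntidiag (Finset.univ : Finset (Fin N)) d)

noncomputable def polyOf {R : Type*} [CommRing R] {N d : ℕ} (f : Mon N d → R) : MvPolynomial (Fin N) R :=
  ∑ m : Mon N d, monomial m.1 (f m)

theorem polyOf_map {R S : Type*} [CommRing R] [CommRing S] {N d : ℕ} (f : Mon N d → R) (φ : R →+* S) :
    map φ (polyOf f) = polyOf (φ ∘ f) := by
  simp [polyOf, map_sum]

theorem polyOf_hom {R : Type*} [CommRing R] {N d : ℕ} (f : Mon N d → R) : (polyOf f).IsHomogeneous d := by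
  apply IsHomogeneous.sum
  intro m _
  apply isHomogeneous_monomial
  have := m.2
  rw [Finset.mem_finsuppAntidiag] at this
  rw [Finsupp.degree_eq_sum]; exact this.1

theorem polyOf_coeff {R : Type*} [CommRing R] {N d : ℕ} (F : MvPolynomial (Fin N) R) (hF : F.IsHomogeneous d) :
    polyOf (d := d) (fun m => coeff m.1 F) = F := by
  classical
  ext m
  rw [polyOf, coeff_sum]
  simp only [coeff_monomial]
  by_cases hm : m ∈ Finset.finsuppAntidiag (Finset.univ : Finset (Fin N)) d
  · rw [Finset.sum_eq_single ⟨m, hm⟩]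
    · simp
    · intro b _ hb; rw [if_neg]; rintro rfl; exact hb rfl
    · simp
  · rw [Finset.sum_eq_zero]
    · symm; by_contra h0
      apply hm
      rw [Finset.mem_finsuppAntidiag]
      refine ⟨?_, Finset.subset_univ _⟩
      have := hF h0
      rw [Pi.one_def, ← Finsupp.degree_eq_weight_one] at this
      rw [← Finsupp.degree_eq_sum]
      exact this
    · rintro ⟨b, hb⟩ _; rw [if_neg]; rintro rfl; exact hm hb

theorem pack {K : Type} [Field K] [IsAlgClosed K] {N d : ℕ} (B : Set ((Mon N d ⊕ Fin N) → K))
    (f0 : Mon N d → K) (a0 : Fin N → K)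
    (h : ∀ P : MvPolynomial (Mon N d ⊕ Fin N) K, (∀ z ∈ B, eval z P = 0) → eval (Sum.elim f0 a0) P = 0) :
    ∃ (U : Ultrafilter B) (E : Type) (_ : Field E) (_ : IsAlgClosed E) (θ : (B → K) →+* E) (V : ValuationSubring E)
      (κ : K →+* V) (FV : MvPolynomial (Fin N) V) (a : Fin N → V),
      Function.Surjective θ ∧ (∀ f, θ f = 0 ↔ ∀ᶠ b in (U : Filter B), f b = 0) ∧
      map V.subtype FV = map θ (polyOf fun m (b : B) => b.1 (Sum.inl m)) ∧
      (∀ i, V.subtype (a i) = θ (fun b => b.1 (Sum.inr i))) ∧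
      map (IsLocalRing.residue V) FV = map ((IsLocalRing.residue V).comp κ) (polyOf f0) ∧
      (∀ i, IsLocalRing.residue V (a i) = IsLocalRing.residue V (κ (a0 i))) ∧
      FV.IsHomogeneous d := by
  obtain ⟨U, E, i1, i2, θ, V, h1, h2, h3, h4, h5⟩ := valu (fun (b : B) => b.1) (Sum.elim f0 a0) (by
    intro P hP; exact h P (fun z hz => hP ⟨z, hz⟩))
  let κ : K →+* V := (θ.comp (Pi.constRingHom B K)).codRestrict V.toSubring (fun c => h3 c)
  have hres : ∀ i, IsLocalRing.residue V ⟨_, h4 i⟩ = IsLocalRing.residue V (κ (Sum.elim f0 a0 i)) := by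
    intro i
    rw [← sub_eq_zero, ← map_sub, IsLocalRing.residue_eq_zero_iff, ← ValuationSubring.coe_mem_nonunits_iff]
    exact h5 i
  refine ⟨U, E, i1, i2, θ, V, κ, polyOf fun m => ⟨_, h4 (Sum.inl m)⟩, fun i => ⟨_, h4 (Sum.inr i)⟩, h1, h2, ?_, ?_, ?_, ?_, polyOf_hom _⟩
  · rw [polyOf_map, polyOf_map]; rfl
  · intro i; rfl
  · rw [polyOf_map, polyOf_map]; congr 1; funext m; exact hres (Sum.inl m)
  · intro i; exact hres (Sum.inr i)

theorem Yclosed {K : Type} [Field K] [IsAlgClosed K] {N r : ℕ} (F : MvPolynomial (Fin N) K) (x0 : Fin N → K)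
    (h : ∀ P : MvPolynomial (Fin N) K, (∀ x, LD F 0 x r → eval x P = 0) → eval x0 P = 0) : LD F 0 x0 r := by
  obtain ⟨U, E, i1, i2, θ, V, h1, h2, h3, h4, h5⟩ := valu (fun (b : {x // LD F 0 x r}) => b.1) x0 (by
    intro P hP; exact h P (fun z hz => hP ⟨z, hz⟩))
  let κ : K →+* V := (θ.comp (Pi.constRingHom _ K)).codRestrict V.toSubring (fun c => h3 c)
  have hres : ∀ i, IsLocalRing.residue V ⟨_, h4 i⟩ = IsLocalRing.residue V (κ (x0 i)) := by
    intro i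
    rw [← sub_eq_zero, ← map_sub, IsLocalRing.residue_eq_zero_iff, ← ValuationSubring.coe_mem_nonunits_iff]
    exact h5 i
  refine LD.spec V κ (F := map κ F) (a := 0) (x := fun i => ⟨_, h4 i⟩) (by rw [MvPolynomial.map_map]) (by simp) hres ?_
  have := los_LD (U := U) (r := r) θ h2 (map (Pi.constRingHom _ K) F) (fun _ => 0) (fun i b => b.1 i) (by
    refine Filter.Eventually.of_forall fun b => ?_
    rw [MvPolynomial.map_map]
    have e : (Pi.evalRingHom (fun _ => K) b).comp (Pi.constRingHom {x // LD F 0 x r} K) = RingHom.id K := by ext; rfl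
    rw [e, MvPolynomial.map_id]
    exact b.2)
  rw [MvPolynomial.map_map] at this ⊢
  convert this using 1
  · rfl
  · funext i; exact (map_zero θ).symm
  · rfl

def Bad1 (K : Type) [Field K] (n d : ℕ) : Set ((Mon (n+1) d ⊕ Fin (n+1)) → K) :=
  {z | ∃ (M : Matrix (Fin n) (Fin (n+1)) K) (Li : Matrix (Fin (n+1)) (Fin n) K),
    M * Li = 1 ∧ M.mulVec (fun i => z (Sum.inr i)) = 0 ∧ Red (sb M (polyOf fun m => z (Sum.inl m))) d}

def Bad2 (K : Type) [Field K] (n d : ℕ) : Set ((Mon (n+1) d ⊕ Fin (n+1)) → K) :=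
  {z | ∀ x : Fin (n+1) → K, x ≠ 0 → x ⬝ᵥ (fun i => z (Sum.inr i)) = 0 →
    eval x (polyOf fun m => z (Sum.inl m)) = 0 →
    LD (polyOf fun m => z (Sum.inl m)) (fun i => z (Sum.inr i)) x (n - 2)}

theorem ev_map {R S : Type*} [CommRing R] [CommRing S] {σ : Type*} (φ : R →+* S) (w : σ → R) (F : MvPolynomial σ R) :
    eval (φ ∘ w) (MvPolynomial.map φ F) = φ (eval w F) := by
  have : (eval (φ ∘ w)).comp (MvPolynomial.map φ) = φ.comp (eval w) := by
    apply MvPolynomial.ringHom_ext <;> simp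
  exact congrArg (fun g => g F) this

theorem lift_ker {K E : Type} [Field K] [Field E] (V : ValuationSubring E) (κ : K →+* V) {N : ℕ}
    (a : Fin N → V) (a0 : Fin N → K) (ha0 : a0 ≠ 0)
    (ha : ∀ i, IsLocalRing.residue V (a i) = IsLocalRing.residue V (κ (a0 i)))
    (w : Fin N → K) (hw : w ⬝ᵥ a0 = 0) :
    ∃ w' : Fin N → V, w' ⬝ᵥ a = 0 ∧ ∀ i, IsLocalRing.residue V (w' i) = IsLocalRing.residue V (κ (w i)) := by
  classical
  obtain ⟨j, hj⟩ := Function.ne_iff.mp ha0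
  have hu : IsUnit (a j) := by
    by_contra hu
    have h1 := (IsLocalRing.residue_eq_zero_iff (R := V) _).mpr hu
    rw [ha] at h1
    exact hj (((IsLocalRing.residue V).comp κ).injective (by simpa using h1))
  obtain ⟨u, hu⟩ := hu
  let t := (κ ∘ w) ⬝ᵥ a
  have ht : IsLocalRing.residue V t = 0 := by
    simp only [t, dotProduct, map_sum, map_mul, ha, Function.comp]
    have := congrArg ((IsLocalRing.residue V).comp κ) hw
    simpa [dotProduct] using this
  refine ⟨κ ∘ w - Pi.single j (t * ↑u⁻¹), ?_, ?_⟩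
  · rw [sub_dotProduct, single_dotProduct, ← hu]
    change t - _ = 0
    simp
  · intro i
    rw [Pi.sub_apply, map_sub]
    by_cases hi : i = j
    · subst hi; simp [ht]
    · simp [Pi.single_apply, hi]

theorem row_space {E : Type} [Field E] {n : ℕ} (M : Matrix (Fin n) (Fin (n+1)) E) (Li : Matrix (Fin (n+1)) (Fin n) E)
    (a : Fin (n+1) → E) (ha : a ≠ 0) (h1 : M * Li = 1) (h2 : M.mulVec a = 0) (w : Fin (n+1) → E) (hw : w ⬝ᵥ a = 0) :
    ∃ c, Matrix.vecMul c M = w := by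
  have hinj : Function.Injective (Matrix.vecMulLinear M) := by
    intro y z h
    have := congrArg (fun w => Matrix.vecMul w Li) h
    simpa [Matrix.vecMul_vecMul, h1] using this
  let f : (Fin (n+1) → E) →ₗ[E] E := (dotProductBilin E E).flip a
  have hf : ∀ w, f w = w ⬝ᵥ a := fun w => rfl
  have hle : LinearMap.range (Matrix.vecMulLinear M) ≤ LinearMap.ker f := by
    rintro _ ⟨y, rfl⟩
    rw [LinearMap.mem_ker, hf, Matrix.vecMulLinear_apply, ← Matrix.dotProduct_mulVec, h2]; simp
  have hfr : Module.finrank E (LinearMap.ker f) = n := by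
    have h3 := LinearMap.finrank_range_add_finrank_ker f
    obtain ⟨j, hj⟩ := Function.ne_iff.mp ha
    have : LinearMap.range f = ⊤ := by
      rw [LinearMap.range_eq_top]
      intro c
      refine ⟨Pi.single j (c / a j), ?_⟩
      rw [hf, single_dotProduct, div_mul_cancel₀]; exact hj
    rw [this, finrank_top, Module.finrank_self, Module.finrank_fin_fun] at h3
    omega
  have heq := Submodule.eq_of_le_of_finrank_eq hle (by
    rw [hfr, LinearMap.finrank_range_of_inj hinj]; simp)
  have : w ∈ LinearMap.ker f := hw
  rw [← heq] at this
  exact this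

theorem residue_ne {K E : Type} [Field K] [Field E] (V : ValuationSubring E) (κ : K →+* V) {ι : Type}
    (a : ι → V) (a0 : ι → K) (ha0 : a0 ≠ 0)
    (ha : ∀ i, IsLocalRing.residue V (a i) = IsLocalRing.residue V (κ (a0 i))) : V.subtype ∘ a ≠ 0 := by
  intro h
  apply ha0
  funext i
  have h1 : a i = 0 := Subtype.val_injective (congrFun h i)
  have h2 := ha i
  rw [h1, map_zero] at h2
  exact ((IsLocalRing.residue V).comp κ).injective (by simpa using h2.symm)

theorem Bad1_closed {K : Type} [Field K] [IsAlgClosed K] {n d : ℕ} (f0 : Mon (n+1) d → K) (a0 : Fin (n+1) → K)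
    (ha0 : a0 ≠ 0)
    (h : ∀ P : MvPolynomial (Mon (n+1) d ⊕ Fin (n+1)) K, (∀ z ∈ Bad1 K n d, eval z P = 0) → eval (Sum.elim f0 a0) P = 0)
    (M0 : Matrix (Fin n) (Fin (n+1)) K) (hM0 : M0.mulVec a0 = 0) (hne : sb M0 (polyOf f0) ≠ 0) :
    Red (sb M0 (polyOf f0)) d := by
  obtain ⟨U, E, i1, i2, θ, V, κ, FV, a, hs, hU, hF, ha, hFr, har, hhom⟩ := pack _ _ _ h
  have hz : ∀ z : Bad1 K n d, ∃ (M : Matrix (Fin n) (Fin (n+1)) K) (Li : Matrix (Fin (n+1)) (Fin n) K),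
    M * Li = 1 ∧ M.mulVec (fun i => z.1 (Sum.inr i)) = 0 ∧ Red (sb M (polyOf fun m => z.1 (Sum.inl m))) d := fun z => z.2
  choose M Li hM1 hM2 hM3 using hz
  let M' : Matrix (Fin n) (Fin (n+1)) (Bad1 K n d → K) := Matrix.of fun i j b => M b i j
  let L' : Matrix (Fin (n+1)) (Fin n) (Bad1 K n d → K) := Matrix.of fun i j b => Li b i j
  have e1 : M' * L' = 1 := by
    ext i j b
    have := congrFun (congrFun (hM1 b) i) j
    rw [Matrix.mul_apply] at this ⊢
    rw [Finset.sum_apply]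
    refine this.trans ?_
    rw [Matrix.one_apply, Matrix.one_apply]; split_ifs <;> rfl
  have e2 : M'.mulVec (fun i (b : Bad1 K n d) => b.1 (Sum.inr i)) = 0 := by
    ext i b
    have := congrFun (hM2 b) i
    simp only [Matrix.mulVec, dotProduct, Finset.sum_apply] at this ⊢
    exact this
  have e3 : Red (sb (M'.map θ) (map V.subtype FV)) d := by
    rw [hF, ← sb_map]
    apply los_Red θ hU
    refine Filter.Eventually.of_forall fun b => ?_
    rw [sb_map, polyOf_map]
    exact hM3 b
  have hE1 : M'.map θ * L'.map θ = 1 := by rw [← Matrix.map_mul, e1]; simp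
  have hE2 : (M'.map θ).mulVec (V.subtype ∘ a) = 0 := by
    ext i
    have : V.subtype ∘ a = θ ∘ (fun i (b : Bad1 K n d) => b.1 (Sum.inr i)) := funext ha
    rw [this, ← RingHom.map_mulVec, e2]; simp
  have haE := residue_ne V κ a a0 ha0 har
  have hl : ∀ i, ∃ w' : Fin (n+1) → V, w' ⬝ᵥ a = 0 ∧
      ∀ j, IsLocalRing.residue V (w' j) = IsLocalRing.residue V (κ (M0 i j)) := fun i =>
    lift_ker V κ a a0 ha0 har (M0 i) (congrFun hM0 i)
  choose W hW1 hW2 using hl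
  have hT : ∀ i, ∃ c, Matrix.vecMul c (M'.map θ) = V.subtype ∘ (W i) := fun i =>
    row_space _ _ _ haE hE1 hE2 _ (by
      have := congrArg V.subtype (hW1 i)
      simpa [dotProduct] using this)
  choose T hT using hT
  refine Red.spec V κ (F := sb (Matrix.of W) FV) hne ?_ ?_
  · rw [sb_map, hFr, sb_map]
    congr 1
    ext i j; exact hW2 i j
  · rw [sb_map]
    have : (Matrix.of W).map V.subtype = Matrix.of T * (M'.map θ) := by
      ext i j
      rw [Matrix.mul_apply]
      exact (congrFun (hT i) j).symm
    rw [this, sb_mul]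
    exact e3.sb _

section lead
variable {R : Type*} [CommRing R]
open Polynomial in
theorem lead_aux {N d : ℕ} (F : MvPolynomial (Fin N) R) (hF : F.IsHomogeneous d) (y v : Fin N → R) :
    (MvPolynomial.aeval (fun i => Polynomial.C (y i) + Polynomial.X * Polynomial.C (v i)) F : R[X]).natDegree ≤ d ∧
    (MvPolynomial.aeval (fun i => Polynomial.C (y i) + Polynomial.X * Polynomial.C (v i)) F : R[X]).coeff d
      = MvPolynomial.eval v F := by
  have hlin : ∀ i, (Polynomial.C (y i) + Polynomial.X * Polynomial.C (v i)).natDegree ≤ 1 := by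
    intro i
    rw [mul_comm]
    refine (natDegree_add_le _ _).trans ?_
    rw [natDegree_C]
    exact max_le (Nat.zero_le _) ((natDegree_C_mul_le _ _).trans natDegree_X_le)
  have hlin2 : ∀ i, (Polynomial.C (y i) + Polynomial.X * Polynomial.C (v i)).coeff 1 = v i := by
    intro i; simp [Polynomial.coeff_C]
  have hmon : ∀ (m : Fin N →₀ ℕ) (s : Finset (Fin N)),
      (∏ i ∈ s, (Polynomial.C (y i) + Polynomial.X * Polynomial.C (v i)) ^ m i).natDegree ≤ ∑ i ∈ s, m i ∧
      (∏ i ∈ s, (Polynomial.C (y i) + Polynomial.X * Polynomial.C (v i)) ^ m i).coeff (∑ i ∈ s, m i) =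
        ∏ i ∈ s, v i ^ m i := by
    intro m s
    classical
    induction s using Finset.induction_on with
    | empty => simp
    | insert i s hi ih =>
      rw [Finset.prod_insert hi, Finset.sum_insert hi, Finset.prod_insert hi]
      have h1 : ((Polynomial.C (y i) + Polynomial.X * Polynomial.C (v i)) ^ m i).natDegree ≤ m i := by
        refine (natDegree_pow_le).trans ?_
        exact (Nat.mul_le_mul_left _ (hlin i)).trans (by simp)
      have h2 : ((Polynomial.C (y i) + Polynomial.X * Polynomial.C (v i)) ^ m i).coeff (m i) = v i ^ m i := by
        have := Polynomial.coeff_pow_of_natDegree_le (hlin i) (m := m i)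
        rw [mul_one, hlin2] at this; exact this
      refine ⟨natDegree_mul_le_of_le h1 ih.1, ?_⟩
      rw [coeff_mul_add_eq_of_natDegree_le h1 ih.1, h2, ih.2]
  have hdeg : ∀ m ∈ F.support, ∑ i, m i = d := by
    intro m hm
    have := hF (MvPolynomial.mem_support_iff.mp hm)
    rw [Pi.one_def, ← Finsupp.degree_eq_weight_one] at this
    rw [← Finsupp.degree_eq_sum]; exact this
  rw [MvPolynomial.aeval_def, MvPolynomial.eval₂_eq', MvPolynomial.eval_eq']
  constructor
  · apply Polynomial.natDegree_sum_le_of_forall_le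
    intro m hm
    refine (natDegree_C_mul_le _ _).trans ?_
    rw [← hdeg m hm]; exact (hmon m _).1
  · rw [Polynomial.finsetSum_coeff]
    apply Finset.sum_congr rfl
    intro m hm
    rw [Polynomial.algebraMap_eq, Polynomial.coeff_C_mul]
    congr 1
    rw [← (hmon m _).2, hdeg m hm]
theorem line_eval {N : ℕ} (F : MvPolynomial (Fin N) R) (y v : Fin N → R) (s : R) :
    Polynomial.eval s (MvPolynomial.aeval (fun i => Polynomial.C (y i) + Polynomial.X * Polynomial.C (v i)) F)
      = MvPolynomial.eval (y + s • v) F := by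
  have : (Polynomial.evalRingHom s).comp (aeval (R := R) (fun i => Polynomial.C (y i) + Polynomial.X * Polynomial.C (v i))).toRingHom
        = eval (y + s • v) := by
    apply MvPolynomial.ringHom_ext
    · intro r; simp
    · intro i
      rw [RingHom.comp_apply, AlgHom.toRingHom_eq_coe, RingHom.coe_coe, aeval_X, eval_X, Polynomial.coe_evalRingHom]
      simp [Polynomial.eval_add, Polynomial.eval_mul]
      exact mul_comm _ _
  exact congrArg (fun φ => φ F) this
end lead

open Polynomial in
theorem root_in_m {E : Type} [Field E] [IsAlgClosed E] (V : ValuationSubring E) (g : E[X]) (d : ℕ)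
    (hd : g.natDegree ≤ d) (hc : V.valuation (g.coeff d) = 1) (h0 : V.valuation (g.coeff 0) < 1) :
    ∃ s, g.eval s = 0 ∧ V.valuation s < 1 := by
  have hne : g.coeff d ≠ 0 := by intro h; rw [h] at hc; simp at hc
  have hd' : g.natDegree = d := le_antisymm hd (le_natDegree_of_ne_zero hne)
  have hg0 : g ≠ 0 := by rintro rfl; simp at hne
  have hsp := IsAlgClosed.splits g
  by_contra hcon
  push Not at hcon
  have hroots : ∀ s ∈ g.roots, 1 ≤ V.valuation s := fun s hs => hcon s (by
    rw [mem_roots hg0] at hs; exact hs)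
  have hprod := hsp.coeff_zero_eq_leadingCoeff_mul_prod_roots
  have h1 : ∀ m : Multiset E, (∀ s ∈ m, 1 ≤ V.valuation s) → 1 ≤ V.valuation m.prod := by
    intro m
    induction m using Multiset.induction_on with
    | empty => simp
    | cons a m ih =>
      intro h
      rw [Multiset.prod_cons, map_mul]
      exact one_le_mul (h a (Multiset.mem_cons_self _ _)) (ih fun s hs => h s (Multiset.mem_cons_of_mem hs))
  have h2 := h1 _ hroots
  have h3 : V.valuation (g.coeff 0) = V.valuation g.roots.prod := by
    rw [hprod, map_mul, map_mul, leadingCoeff, hd', hc]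
    simp
  rw [h3] at h0
  exact absurd h0 (not_lt.mpr h2)

theorem Bad2_closed {K : Type} [Field K] [IsAlgClosed K] {n d : ℕ} (f0 : Mon (n+1) d → K) (a0 : Fin (n+1) → K)
    (ha0 : a0 ≠ 0)
    (h : ∀ P : MvPolynomial (Mon (n+1) d ⊕ Fin (n+1)) K, (∀ z ∈ Bad2 K n d, eval z P = 0) → eval (Sum.elim f0 a0) P = 0)
    (v : Fin (n+1) → K) (hv : v ⬝ᵥ a0 = 0) (hFv : eval v (polyOf f0) ≠ 0)
    (x : Fin (n+1) → K) (hx0 : x ≠ 0) (hx : x ⬝ᵥ a0 = 0) (hFx : eval x (polyOf f0) = 0) :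
    LD (polyOf f0) a0 x (n-2) := by
  obtain ⟨U, E, i1, i2, θ, V, κ, FV, a, hs, hU, hF, ha, hFr, har, hhom⟩ := pack _ _ _ h
  obtain ⟨x', hx'1, hx'2⟩ := lift_ker V κ a a0 ha0 har x hx
  obtain ⟨v', hv'1, hv'2⟩ := lift_ker V κ a a0 ha0 har v hv
  have hres : ∀ (w : Fin (n+1) → K) (w' : Fin (n+1) → V),
      (∀ j, IsLocalRing.residue V (w' j) = IsLocalRing.residue V (κ (w j))) →
      IsLocalRing.residue V (eval w' FV) = IsLocalRing.residue V (κ (eval w (polyOf f0))) := by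
    intro w w' hw
    rw [← ev_map, hFr, show IsLocalRing.residue V ∘ w' = ((IsLocalRing.residue V).comp κ) ∘ w from funext hw,
      ev_map]
    rfl
  have hsub : ∀ w' : Fin (n+1) → V, eval (V.subtype ∘ w') (map V.subtype FV) = V.subtype (eval w' FV) := by
    intro w'
    exact ev_map _ _ _
  let g : Polynomial E := aeval (fun i => Polynomial.C ((x' i : V) : E) + Polynomial.X * Polynomial.C ((v' i : V) : E))
    (map V.subtype FV)
  have hl := lead_aux (map V.subtype FV) (hhom.map _) (V.subtype ∘ x') (V.subtype ∘ v')
  have hge : ∀ s, g.eval s = eval (V.subtype ∘ x' + s • (V.subtype ∘ v')) (map V.subtype FV) := by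
    intro s
    exact line_eval _ _ _ _
  obtain ⟨s, hs1, hs2⟩ := root_in_m V g d hl.1 (by
    have := hl.2
    rw [hsub] at this
    change V.valuation (Polynomial.coeff g d) = 1
    rw [show Polynomial.coeff g d = V.subtype (eval v' FV) from this]
    change V.valuation ((eval v' FV : V) : E) = 1
    rw [← ValuationSubring.valuation_eq_one_iff]
    by_contra hu
    have h1 := (IsLocalRing.residue_eq_zero_iff (R := V) _).mpr hu
    rw [hres v v' hv'2] at h1
    exact hFv (((IsLocalRing.residue V).comp κ).injective (by simpa using h1))) (by
    rw [Polynomial.coeff_zero_eq_eval_zero, hge, zero_smul, add_zero, hsub]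
    change V.valuation ((eval x' FV : V) : E) < 1
    rw [← ValuationSubring.valuation_lt_one_iff, ← IsLocalRing.residue_eq_zero_iff, hres x x' hx'2, hFx]
    simp)
  have hsV : s ∈ V := (V.valuation_le_one_iff s).mp hs2.le
  let s' : V := ⟨s, hsV⟩
  have hs'r : IsLocalRing.residue V s' = 0 := by
    rw [IsLocalRing.residue_eq_zero_iff, ValuationSubring.valuation_lt_one_iff]; exact hs2
  let y : Fin (n+1) → V := x' + s' • v'
  have hyr : ∀ i, IsLocalRing.residue V (y i) = IsLocalRing.residue V (κ (x i)) := by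
    intro i; simp [y, hs'r, hx'2]
  refine LD.spec V κ hFr har hyr ?_
  choose Y hY using fun i => hs (V.subtype (y i))
  have hy0 := residue_ne V κ y x hx0 hyr
  have hya : y ⬝ᵥ a = 0 := by simp [y, add_dotProduct, smul_dotProduct, hx'1, hv'1]
  have hFy : eval (V.subtype ∘ y) (map V.subtype FV) = 0 := by
    rw [← hs1, hge]; congr 1
  rw [hF]
  have eY : V.subtype ∘ y = θ ∘ Y := funext fun i => (hY i).symm
  have ea : V.subtype ∘ a = θ ∘ (fun i (b : Bad2 K n d) => b.1 (Sum.inr i)) := funext ha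
  rw [eY, ea]
  apply los_LD θ hU
  have c1 : ∀ᶠ b in (U : Filter (Bad2 K n d)), (fun i => Y i b) ⬝ᵥ (fun i => b.1 (Sum.inr i)) = 0 := by
    have : θ (Y ⬝ᵥ (fun i (b : Bad2 K n d) => b.1 (Sum.inr i))) = 0 := by
      have h1 := congrArg V.subtype hya
      simp only [dotProduct, map_sum, map_mul, map_zero] at h1 ⊢
      rw [← h1]
      refine Finset.sum_congr rfl fun i _ => ?_
      rw [hY, ha]
    rw [hU] at this
    refine this.mono fun b hb => ?_
    simpa [dotProduct, Finset.sum_apply] using hb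
  have c2 : ∀ᶠ b in (U : Filter (Bad2 K n d)), eval (fun i => Y i b) (polyOf fun m => b.1 (Sum.inl m)) = 0 := by
    rw [hF, eY, eval_map, ← coe_eval₂Hom] at hFy
    have e : eval₂Hom θ (θ ∘ Y) = θ.comp (eval Y) := by
      apply MvPolynomial.ringHom_ext <;> simp
    rw [e, RingHom.comp_apply, hU] at hFy
    refine hFy.mono fun b hb => ?_
    rw [← hb]
    have e : (Pi.evalRingHom (fun _ => K) b).comp (eval Y) = (eval (fun i => Y i b)).comp (map (Pi.evalRingHom (fun _ => K) b)) := by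
      apply MvPolynomial.ringHom_ext <;> simp
    have := congrArg (fun φ => φ (polyOf fun m (b : Bad2 K n d) => b.1 (Sum.inl m))) e
    simp only [RingHom.comp_apply, polyOf_map] at this
    exact this.symm
  have c3 : ∀ᶠ b in (U : Filter (Bad2 K n d)), (fun i => Y i b) ≠ 0 := by
    obtain ⟨i, hi⟩ := Function.ne_iff.mp hy0
    have : θ (Y i) ≠ 0 := by rw [hY]; exact hi
    rw [Ne, hU, ← Ultrafilter.eventually_not] at this
    exact this.mono fun b hb h0 => hb (congrFun h0 i)
  filter_upwards [c1, c2, c3] with b h1 h2 h3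
  rw [polyOf_map]
  exact b.2 _ h3 h1 h2

theorem fac_unit {R : Type*} [Field R] {σ : Type*} {A : MvPolynomial σ R} (h : IsUnit A) : A.totalDegree = 0 := by
  obtain ⟨B, hB⟩ := h.exists_right_inv
  have hA : A ≠ 0 := h.ne_zero
  have hB0 : B ≠ 0 := by rintro rfl; simp at hB
  have := totalDegree_mul_of_isDomain hA hB0
  rw [hB, totalDegree_one] at this
  omega

theorem irr_not_Red {R : Type*} [Field R] {σ : Type*} {F : MvPolynomial σ R} (h : Irreducible F) {d : ℕ}
    (hd : F.totalDegree = d) : ¬ Red F d := by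
  rintro ⟨G, H, rfl, h1, h2⟩
  have h0 := h.ne_zero
  have := totalDegree_mul_of_isDomain (left_ne_zero_of_mul h0) (right_ne_zero_of_mul h0)
  rcases h.isUnit_or_isUnit rfl with hu | hu
  · have := fac_unit hu; omega
  · have := fac_unit hu; omega

theorem not_Red_irr {R : Type*} [Field R] {σ : Type*} {F : MvPolynomial σ R} {d : ℕ}
    (hd : F.totalDegree = d) (hd0 : 0 < d) (h : ¬ Red F d) : Irreducible F := by
  have hne : F ≠ 0 := by rintro rfl; simp at hd; omega
  refine ⟨fun hu => ?_, ?_⟩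
  · have := fac_unit hu; omega
  · intro A B hAB
    by_contra hcon
    push Not at hcon
    have hA : A ≠ 0 := by rintro rfl; simp at hAB; exact hne hAB
    have hB : B ≠ 0 := by rintro rfl; simp at hAB; exact hne hAB
    have hdeg := totalDegree_mul_of_isDomain hA hB
    rw [← hAB, hd] at hdeg
    have key : ∀ A : MvPolynomial σ R, A ≠ 0 → ¬ IsUnit A → 0 < A.totalDegree := by
      intro A hA hu
      by_contra h0
      have h0 : A.totalDegree = 0 := by omega
      rw [totalDegree_eq_zero_iff_eq_C] at h0
      apply hu
      rw [h0]
      refine IsUnit.map _ (IsUnit.mk0 _ ?_)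
      intro hc; rw [hc, map_zero] at h0; exact hA h0
    have := key A hA hcon.1
    have := key B hB hcon.2
    exact h ⟨A, B, hAB, by omega, by omega⟩

theorem geom_irr {L : Type} [Field L] [CharZero L] {σ : Type} [Finite σ] (f : MvPolynomial σ L) (hf : Irreducible f)
    (p : σ → L) (hp : eval p f = 0) (i : σ) (hi : eval p (pderiv i f) ≠ 0) :
    Irreducible (map (algebraMap L (AlgebraicClosure L)) f) := by
  set ι := algebraMap L (AlgebraicClosure L) with hι
  have hinj : Function.Injective (map ι : MvPolynomial σ L → _) := map_injective _ ι.injective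
  have hf0 : map ι f ≠ 0 := by
    intro h; apply hf.ne_zero; apply hinj; simpa using h
  obtain ⟨s, hs, hsp⟩ := WfDvdMonoid.exists_factors _ hf0
  have hpi : eval (ι ∘ p) (map ι f) = 0 := by rw [ev_map, hp, map_zero]
  have hdi : eval (ι ∘ p) (pderiv i (map ι f)) ≠ 0 := by
    rw [pderiv_map, ev_map]; simpa using hi
  have hG : ∃ G ∈ s, eval (ι ∘ p) G = 0 := by
    obtain ⟨u, hu⟩ := hsp
    rw [← hu, map_mul, mul_eq_zero] at hpi
    rcases hpi with h | h
    · rw [map_multiset_prod, Multiset.prod_eq_zero_iff, Multiset.mem_map] at h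
      exact h
    · exact absurd h (u.isUnit.map _).ne_zero
  obtain ⟨G0, hG0s, hG0p⟩ := hG
  have hG0 := hs _ hG0s
  obtain ⟨m, hm⟩ := ne_zero_iff.mp hG0.ne_zero
  have hu : IsUnit (C (coeff m G0)⁻¹ : MvPolynomial σ (AlgebraicClosure L)) := IsUnit.map _ (IsUnit.mk0 _ (inv_ne_zero hm))
  set G := C (coeff m G0)⁻¹ * G0 with hGdef
  have hG : Irreducible G := by
    rw [hGdef, irreducible_isUnit_mul hu]
    exact hG0
  have hGm : coeff m G = 1 := by rw [hGdef, coeff_C_mul, inv_mul_cancel₀ hm]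
  have hGp : eval (ι ∘ p) G = 0 := by rw [hGdef, map_mul, hG0p, mul_zero]
  have hGd : G ∣ map ι f := by
    rw [hGdef, hu.mul_left_dvd]
    exact (Multiset.dvd_prod hG0s).trans hsp.dvd
  clear_value G
  obtain ⟨H, hH⟩ := hGd
  have hHp : eval (ι ∘ p) H ≠ 0 := by
    intro h
    apply hdi
    rw [hH, Derivation.leibniz, map_add, smul_eq_mul, smul_eq_mul, map_mul, map_mul, h, hGp]; simp
  have hfix : ∀ g : AlgebraicClosure L ≃ₐ[L] AlgebraicClosure L, map (g : AlgebraicClosure L →+* AlgebraicClosure L) G = G ∧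
      map (g : AlgebraicClosure L →+* AlgebraicClosure L) H = H := by
    intro g
    set γ : AlgebraicClosure L →+* AlgebraicClosure L := (g : AlgebraicClosure L →+* AlgebraicClosure L)
    have hγ : γ.comp ι = ι := by ext x; exact g.commutes x
    have hγf : map γ (map ι f) = map ι f := by rw [MvPolynomial.map_map, hγ]
    have hγp : γ ∘ (ι ∘ p) = ι ∘ p := by funext j; exact g.commutes _
    have hγG : Irreducible (map γ G) := by
      have := (MulEquiv.irreducible_iff (mapEquiv σ (g : AlgebraicClosure L ≃+* AlgebraicClosure L))).mpr hG
      exact this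
    have hγGp : eval (ι ∘ p) (map γ G) = 0 := by
      rw [← hγp, ev_map, hGp, map_zero]
    have hdvd : map γ G ∣ G * H := by
      rw [← hH, ← hγf, hH, map_mul]; exact dvd_mul_right _ _
    have hdG : map γ G ∣ G := by
      rcases (UniqueFactorizationMonoid.irreducible_iff_prime.mp hγG).dvd_or_dvd hdvd with h | ⟨k, hk⟩
      · exact h
      · exfalso; apply hHp; rw [hk, map_mul, hγGp, zero_mul]
    have hass : Associated (map γ G) G := hγG.associated_of_dvd hG hdG
    obtain ⟨u, hu⟩ := hass
    have hu2 := fac_unit u.isUnit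
    rw [totalDegree_eq_zero_iff_eq_C] at hu2
    rw [hu2, mul_comm] at hu
    have h1 := congrArg (coeff m) hu
    rw [coeff_C_mul, coeff_map, hGm, map_one, mul_one] at h1
    rw [h1, C_1, one_mul] at hu
    refine ⟨hu, ?_⟩
    have : G * map γ H = G * H := by
      conv_lhs => rw [← hu]
      rw [← map_mul, ← hH, hγf]
    exact mul_left_cancel₀ hG.ne_zero this
  have hrange : ∀ x : AlgebraicClosure L, (∀ g : AlgebraicClosure L ≃ₐ[L] AlgebraicClosure L, g x = x) → x ∈ Set.range ι := by
    intro x hx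
    have := (InfiniteGalois.mem_bot_iff_fixed (k := L) x).mpr hx
    rw [IntermediateField.mem_bot] at this
    exact this
  obtain ⟨g, hg⟩ := map_lift ι G (fun m => hrange _ fun γ => by
    have := congrArg (coeff m) (hfix γ).1
    rwa [coeff_map] at this)
  obtain ⟨h, hh⟩ := map_lift ι H (fun m => hrange _ fun γ => by
    have := congrArg (coeff m) (hfix γ).2
    rwa [coeff_map] at this)
  have hfgh : f = g * h := by
    apply hinj
    rw [map_mul, hg, hh, hH]
  rcases hf.isUnit_or_isUnit hfgh with h1 | h1
  · exfalso
    apply hG.not_isUnit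
    rw [← hg]; exact h1.map _
  · rw [hH, ← hh, irreducible_mul_isUnit (h1.map _)]
    exact hG

theorem nullst {K σ : Type} [Field K] [IsAlgClosed K] [Finite σ] {F G : MvPolynomial σ K} (hF : Prime F)
    (h : ∀ x, eval x F = 0 → eval x G = 0) : F ∣ G := by
  have h1 := vanishingIdeal_zeroLocus_eq_radical (K := K) (Ideal.span {F})
  have hp : (Ideal.span {F}).IsPrime := (Ideal.span_singleton_prime hF.ne_zero).mpr hF
  rw [hp.radical] at h1
  rw [← Ideal.mem_span_singleton, ← h1]
  intro x hx
  exact h x (hx F (Ideal.mem_span_singleton_self F))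

theorem pd_zero {K : Type} [Field K] [CharZero K] {N d : ℕ} {F : MvPolynomial (Fin N) K} (hF : F.IsHomogeneous d)
    (hd : 0 < d) (hF0 : F ≠ 0) : ∃ i, pderiv i F ≠ 0 := by
  by_contra h
  push Not at h
  have := hF.sum_X_mul_pderiv
  simp only [h, mul_zero, Finset.sum_const_zero] at this
  rw [nsmul_eq_mul, eq_comm, mul_eq_zero] at this
  rcases this with h | h
  · have : ((d : ℕ) : MvPolynomial (Fin N) K) = C (d : K) := by simp
    rw [this, C_eq_zero] at h
    exact hd.ne' (by exact_mod_cast h)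
  · exact hF0 h

theorem not_dvd_hom {K : Type} [Field K] {N d e : ℕ} {F G : MvPolynomial (Fin N) K} (hF : F.IsHomogeneous d)
    (hG : G.IsHomogeneous e) (hG0 : G ≠ 0) (hed : e < d) : ¬ F ∣ G := by
  rintro ⟨H, rfl⟩
  have hF0 := left_ne_zero_of_mul hG0
  have h := totalDegree_mul_of_isDomain hF0 (right_ne_zero_of_mul hG0)
  rw [hF.totalDegree hF0, hG.totalDegree hG0] at h
  omega

theorem smooth_point {K : Type} [Field K] [CharZero K] [IsAlgClosed K] {N d : ℕ} {F : MvPolynomial (Fin N) K}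
    (hF : F.IsHomogeneous d) (hd : 0 < d) (hI : Irreducible F) :
    ∃ p i, eval p F = 0 ∧ eval p (pderiv i F) ≠ 0 := by
  obtain ⟨i, hi⟩ := pd_zero hF hd hI.ne_zero
  by_contra hcon
  push Not at hcon
  refine not_dvd_hom hF hF.pderiv hi (by omega) (nullst (UniqueFactorizationMonoid.irreducible_iff_prime.mp hI) ?_)
  intro x hx
  exact hcon x i hx

theorem smooth_point2 {K : Type} [Field K] [CharZero K] [IsAlgClosed K] {N d : ℕ} {F : MvPolynomial (Fin N) K}
    (hF : F.IsHomogeneous d) (hd : 2 ≤ d) (hI : Irreducible F) :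
    ∃ p i k, eval p F = 0 ∧ eval p (pderiv i F) ≠ 0 ∧ k ≠ i ∧ p k ≠ 0 := by
  obtain ⟨p, i, hp, hi⟩ := smooth_point hF (by omega) hI
  by_contra hcon
  have hk : ∀ k, k ≠ i → p k = 0 := by
    intro k hki; by_contra h; exact hcon ⟨p, i, k, hp, hi, hki, h⟩
  have h1 := congrArg (eval p) hF.sum_X_mul_pderiv
  rw [map_sum, nsmul_eq_mul, map_mul, hp, mul_zero, Finset.sum_eq_single i] at h1
  · rw [map_mul, eval_X, mul_eq_zero] at h1
    rcases h1 with h1 | h1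
    · apply hi
      have hp0 : p = 0 := by
        funext k; by_cases h : k = i
        · rw [h, h1]; rfl
        · exact hk k h
      rw [hp0]
      have := hF.pderiv (i := i)
      have h2 := this.coeff_eq_zero (d := 0) (by simp; omega)
      rw [← constantCoeff_eq] at h2
      rw [← h2, constantCoeff_eq]
      exact congrArg (fun g => g (pderiv i F)) eval_zero
    · exact hi h1
  · intro b _ hb; rw [map_mul, eval_X, hk b hb, zero_mul]
  · simp

section pencil
variable {n : ℕ} (u : Fin (n+1)) (v : Fin n)

def Pm {R : Type*} [CommRing R] (t : R) : Matrix (Fin n) (Fin (n+1)) R :=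
  Matrix.of fun j i => u.insertNth (α := fun _ => R) (if j = v then t else 0) (Pi.single j 1) i

theorem Pm_map {R S : Type*} [CommRing R] [CommRing S] (φ : R →+* S) (t : R) : (Pm u v t).map φ = Pm u v (φ t) := by
  ext j i
  refine Fin.succAboveCases u ?_ (fun i => ?_) i
  · simp [Pm]; split_ifs <;> simp
  · by_cases h : i = j
    · subst h; simp [Pm]
    · simp [Pm, h]

theorem Pm_vec {R : Type*} [CommRing R] (t : R) (c : Fin n → R) :
    Matrix.vecMul c (Pm u v t) = u.insertNth (α := fun _ => R) (t * c v) c := by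
  funext i
  refine Fin.succAboveCases u ?_ (fun i => ?_) i
  · simp [Pm, Matrix.vecMul, dotProduct, mul_comm]
  · simp [Pm, Matrix.vecMul, dotProduct, Pi.single_apply]

noncomputable def pe {K L : Type} [Field K] [Field L] (κ : K →+* L) (t : L) :
    MvPolynomial (Fin (n+1)) K →+* MvPolynomial (Fin n) L :=
  (aeval (R := L) (fun i => ∑ j, C (Pm u v t j i) * X j) : MvPolynomial (Fin (n+1)) L →ₐ[L] MvPolynomial (Fin n) L).toRingHom.comp (map κ)

theorem pe_sb {K L : Type} [Field K] [Field L] (κ : K →+* L) (t : L) (F : MvPolynomial (Fin (n+1)) K) :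
    pe u v κ t F = sb (Pm u v t) (map κ F) := rfl

theorem pe_C {K L : Type} [Field K] [Field L] (κ : K →+* L) (t : L) (c : K) : pe u v κ t (C c) = C (κ c) := by
  rw [pe_sb, map_C, sb, algHom_C]; rfl

theorem pe_X {K L : Type} [Field K] [Field L] (κ : K →+* L) (t : L) (j : Fin n) : pe u v κ t (X (u.succAbove j)) = X j := by
  rw [pe_sb, map_X, sb, aeval_X, Finset.sum_eq_single j]
  · simp [Pm]
  · intro b _ hb; simp [Pm, Pi.single_apply, hb, hb.symm]
  · simp

theorem pe_Xu {K L : Type} [Field K] [Field L] (κ : K →+* L) (t : L) : pe u v κ t (X u) = C t * X v := by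
  rw [pe_sb, map_X, sb, aeval_X, Finset.sum_eq_single v]
  · simp [Pm]
  · intro b _ hb; simp [Pm, hb]
  · simp

theorem pe_eval {K L : Type} [Field K] [Field L] (κ : K →+* L) (t : L) (F : MvPolynomial (Fin (n+1)) K) (c : Fin n → K)
    (hc : c v = 0) : eval (κ ∘ c) (pe u v κ t F) = κ (eval (u.insertNth (α := fun _ => K) 0 c) F) := by
  rw [pe_sb, eval_sb, Pm_vec, ← ev_map]
  congr 2
  funext i
  refine Fin.succAboveCases u ?_ (fun i => ?_) i
  · simp [hc]
  · simp

theorem pe_pderiv {K L : Type} [Field K] [Field L] (κ : K →+* L) (t : L) (i : Fin n) (hi : i ≠ v)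
    (F : MvPolynomial (Fin (n+1)) K) : pderiv i (pe u v κ t F) = pe u v κ t (pderiv (u.succAbove i) F) := by
  induction F using MvPolynomial.induction_on with
  | C c => rw [pe_C]; simp
  | add p q hp hq => simp [hp, hq]
  | mul_X p j hp =>
    rw [map_mul, Derivation.leibniz, Derivation.leibniz, map_add, smul_eq_mul, smul_eq_mul, smul_eq_mul, smul_eq_mul,
      map_mul, map_mul, hp]
    congr 2
    refine Fin.succAboveCases u ?_ (fun j => ?_) j
    · rw [pe_Xu, Derivation.leibniz, pderiv_C, pderiv_X_of_ne hi.symm, pderiv_X_of_ne (Fin.succAbove_ne u i).symm]; simp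
    · rw [pe_X]
      by_cases h : j = i
      · subst h; simp
      · rw [pderiv_X_of_ne h, pderiv_X_of_ne (by simpa using h)]; simp

theorem pe_inj {K : Type} [Field K] [Infinite K] :
    Function.Injective (pe u v ((algebraMap (Polynomial K) (FractionRing (Polynomial K))).comp Polynomial.C)
      (algebraMap (Polynomial K) (FractionRing (Polynomial K)) Polynomial.X)) := by
  rw [injective_iff_map_eq_zero]
  intro Q hQ
  set al := algebraMap (Polynomial K) (FractionRing (Polynomial K))
  have h1 : map al (sb (Pm u v Polynomial.X) (map Polynomial.C Q)) = 0 := by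
    rw [sb_map, Pm_map, MvPolynomial.map_map]; exact hQ
  have h2 : sb (Pm u v Polynomial.X) (map Polynomial.C Q) = 0 := by
    apply map_injective al (IsFractionRing.injective _ _)
    rw [h1, map_zero]
  have h3 : X (u.succAbove v) * Q = 0 := by
    apply MvPolynomial.funext
    intro ξ
    rw [map_mul, map_zero, mul_eq_zero, eval_X, or_iff_not_imp_left]
    intro hξ
    have h4 := congrArg (map (Polynomial.evalRingHom (ξ u / ξ (u.succAbove v)))) h2
    rw [sb_map, Pm_map, MvPolynomial.map_map] at h4
    have h5 := congrArg (eval (fun j => ξ (u.succAbove j))) h4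
    rw [eval_sb, Pm_vec] at h5
    have h6 : (Polynomial.evalRingHom (ξ u / ξ (u.succAbove v))).comp Polynomial.C = RingHom.id K := by
      ext; simp
    rw [h6, MvPolynomial.map_id, map_zero, map_zero] at h5
    rw [← h5]
    congr 2
    funext i
    refine Fin.succAboveCases u ?_ (fun i => ?_) i
    · simp [div_mul_cancel₀ _ hξ]
    · simp
  exact (mul_eq_zero.mp h3).resolve_left (X_ne_zero _)

theorem pe_dense {K : Type} [Field K] (P : MvPolynomial (Fin n) (FractionRing (Polynomial K))) :
    ∃ (s Q : MvPolynomial (Fin (n+1)) K) (w : FractionRing (Polynomial K)) (m : ℕ), w ≠ 0 ∧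
      pe u v ((algebraMap (Polynomial K) (FractionRing (Polynomial K))).comp Polynomial.C)
      (algebraMap (Polynomial K) (FractionRing (Polynomial K)) Polynomial.X) s = C w * X v ^ m ∧
      pe u v ((algebraMap (Polynomial K) (FractionRing (Polynomial K))).comp Polynomial.C)
      (algebraMap (Polynomial K) (FractionRing (Polynomial K)) Polynomial.X) Q = C w * X v ^ m * P := by
  set al := algebraMap (Polynomial K) (FractionRing (Polynomial K))
  set ev := pe u v (al.comp Polynomial.C) (al Polynomial.X) with hev
  have hX : ∀ j, ev (X (u.succAbove j)) = X j := fun j => pe_X u v _ _ j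
  have hsub : ∀ p : Polynomial K, ∃ m Q, ev Q = C (al p) * X v ^ m := by
    intro p
    induction p using Polynomial.induction_on' with
    | add p q hp hq =>
      obtain ⟨m1, Q1, h1⟩ := hp
      obtain ⟨m2, Q2, h2⟩ := hq
      refine ⟨m1 + m2, Q1 * X (u.succAbove v) ^ m2 + Q2 * X (u.succAbove v) ^ m1, ?_⟩
      rw [map_add, map_mul, map_mul, map_pow, map_pow, hX, h1, h2, map_add, C_add]; ring
    | monomial k a =>
      refine ⟨k, C a * X u ^ k, ?_⟩
      rw [map_mul, map_pow, hev, pe_C, pe_Xu, ← Polynomial.C_mul_X_pow_eq_monomial, map_mul al, map_pow al, C_mul, C_pow]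
      simp only [RingHom.comp_apply]; ring
  induction P using MvPolynomial.induction_on with
  | C c =>
    obtain ⟨p, q, hq, rfl⟩ := IsFractionRing.div_surjective (A := Polynomial K) c
    obtain ⟨m1, Q1, h1⟩ := hsub p
    obtain ⟨m2, Q2, h2⟩ := hsub q
    have hq0 : al q ≠ 0 := IsFractionRing.to_map_ne_zero_of_mem_nonZeroDivisors hq
    refine ⟨Q2 * X (u.succAbove v) ^ m1, Q1 * X (u.succAbove v) ^ m2, al q, m1 + m2, hq0, ?_, ?_⟩
    · rw [map_mul, h2, map_pow, hX]; ring
    · rw [map_mul, h1, map_pow, hX]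
      have : C (al p) = (C (al q) * C (al p / al q) : MvPolynomial (Fin n) _) := by
        rw [← C_mul, mul_div_cancel₀ _ hq0]
      rw [this]; ring
  | add p q hp hq =>
    obtain ⟨s1, Q1, w1, m1, hw1, h1, h1'⟩ := hp
    obtain ⟨s2, Q2, w2, m2, hw2, h2, h2'⟩ := hq
    refine ⟨s1 * s2, Q1 * s2 + Q2 * s1, w1 * w2, m1 + m2, mul_ne_zero hw1 hw2, ?_, ?_⟩
    · rw [map_mul, h1, h2, C_mul]; ring
    · rw [map_add, map_mul, map_mul, h1, h2, h1', h2', C_mul]; ring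
  | mul_X p j hp =>
    obtain ⟨s1, Q1, w1, m1, hw1, h1, h1'⟩ := hp
    refine ⟨s1, Q1 * X (u.succAbove j), w1, m1, hw1, h1, ?_⟩
    rw [map_mul, hX, h1']; ring

theorem pe_prime {K : Type} [Field K] [Infinite K] (F : MvPolynomial (Fin (n+1)) K) (hF : Prime F)
    (f : MvPolynomial (Fin n) (FractionRing (Polynomial K)))
    (hf : f = pe u v ((algebraMap (Polynomial K) (FractionRing (Polynomial K))).comp Polynomial.C)
      (algebraMap (Polynomial K) (FractionRing (Polynomial K)) Polynomial.X) F)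
    (hnu : ¬ IsUnit f) (hv : ¬ X v ∣ f) : Prime f := by
  have hinj := pe_inj (K := K) u v
  have hdense := pe_dense (K := K) u v
  set ev := pe u v ((algebraMap (Polynomial K) (FractionRing (Polynomial K))).comp Polynomial.C)
      (algebraMap (Polynomial K) (FractionRing (Polynomial K)) Polynomial.X) with hev
  have hf0 : f ≠ 0 := by
    rw [hf]; intro h; exact hF.ne_zero (hinj (by rw [h, map_zero]))
  have key : ∀ (w : FractionRing (Polynomial K)) (m : ℕ) (g : MvPolynomial (Fin n) (FractionRing (Polynomial K))), w ≠ 0 →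
      f ∣ C w * X v ^ m * g → f ∣ g := by
    intro w m g hw h
    have hu : IsUnit (C w : MvPolynomial (Fin n) (FractionRing (Polynomial K))) := IsUnit.map _ (IsUnit.mk0 _ hw)
    rw [mul_assoc, hu.dvd_mul_left] at h
    obtain ⟨k, hk⟩ := h
    have h1 : X v ^ m ∣ k := (X_prime (i := v)).pow_dvd_of_dvd_mul_left m hv ⟨g, hk.symm⟩
    obtain ⟨k', rfl⟩ := h1
    refine ⟨k', mul_left_cancel₀ (pow_ne_zero m (X_ne_zero v)) ?_⟩
    rw [hk]; ring
  refine ⟨hf0, hnu, fun g h ⟨c, hc⟩ => ?_⟩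
  obtain ⟨s1, Q1, w1, m1, hw1, h1, h1'⟩ := hdense g
  obtain ⟨s2, Q2, w2, m2, hw2, h2, h2'⟩ := hdense h
  obtain ⟨s3, Q3, w3, m3, hw3, h3, h3'⟩ := hdense c
  have e : Q1 * Q2 * s3 = F * (Q3 * s1 * s2) := by
    apply hinj
    simp only [map_mul, h1', h2', h3', h1, h2, h3]
    rw [← hf]
    linear_combination (C w1 * X v ^ m1 * (C w2 * X v ^ m2) * (C w3 * X v ^ m3)) * hc
  rcases hF.dvd_or_dvd ⟨_, e⟩ with hd | hd
  · rcases hF.dvd_or_dvd hd with hd | hd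
    · left
      have := map_dvd ev hd
      rw [← hf, h1'] at this
      exact key _ _ _ hw1 this
    · right
      have := map_dvd ev hd
      rw [← hf, h2'] at this
      exact key _ _ _ hw2 this
  · exfalso
    have := map_dvd ev hd
    rw [← hf, h3] at this
    exact hnu (isUnit_of_dvd_one (key _ _ 1 hw3 (by rwa [mul_one])))
end pencil

theorem sb_one {R : Type*} [CommRing R] {N : ℕ} (F : MvPolynomial (Fin N) R) : sb 1 F = F := by
  unfold sb
  have : (fun i => ∑ j, C ((1 : Matrix (Fin N) (Fin N) R) j i) * X j : Fin N → MvPolynomial (Fin N) R) = X := by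
    funext i
    rw [Finset.sum_eq_single i]
    · simp
    · intro b _ hb; simp [Matrix.one_apply, hb]
    · simp
  rw [this, aeval_X_left]; rfl

theorem pderiv_sb {R : Type*} [CommRing R] {r N : ℕ} (M : Matrix (Fin r) (Fin N) R) (F : MvPolynomial (Fin N) R) (i : Fin r) :
    pderiv i (sb M F) = ∑ j, C (M i j) * sb M (pderiv j F) := by
  unfold sb
  induction F using MvPolynomial.induction_on with
  | C c => rw [algHom_C]; simp [algebraMap_eq]
  | add p q hp hq => simp only [map_add, hp, hq, mul_add, Finset.sum_add_distrib]
  | mul_X p k hp =>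
    have h1 : pderiv i (∑ j, C (M j k) * X j) = C (M i k) := by
      rw [map_sum, Finset.sum_eq_single i]
      · simp [Derivation.leibniz]
      · intro b _ hb; simp [Derivation.leibniz, pderiv_X_of_ne hb]
      · simp
    rw [map_mul, aeval_X, Derivation.leibniz, h1, hp, smul_eq_mul, smul_eq_mul, Finset.mul_sum]
    simp only [Derivation.leibniz, map_add, smul_eq_mul, map_mul, aeval_X, mul_add, Finset.sum_add_distrib]
    congr 1
    · rw [Finset.sum_eq_single k]
      · simp; ring
      · intro b _ hb; rw [pderiv_X_of_ne hb.symm]; simp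
      · simp
    · refine Finset.sum_congr rfl fun j _ => by ring

theorem sb_hom {R : Type*} [CommRing R] {r N d : ℕ} (M : Matrix (Fin r) (Fin N) R) {F : MvPolynomial (Fin N) R}
    (hF : F.IsHomogeneous d) : (sb M F).IsHomogeneous d := by
  unfold sb
  have := hF.aeval (fun i => ∑ j, C (M j i) * X j) (n := 1) (fun i => IsHomogeneous.sum _ _ _ fun j _ => by
    simpa using (isHomogeneous_C _ (M j i)).mul (isHomogeneous_X R j))
  simpa using this

theorem eval_smul_hom {R : Type*} [CommRing R] {σ : Type*} [Fintype σ] {d : ℕ} {F : MvPolynomial σ R}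
    (hF : F.IsHomogeneous d) (t : R) (x : σ → R) : eval (t • x) F = t ^ d * eval x F := by
  rw [eval_eq', eval_eq', Finset.mul_sum]
  refine Finset.sum_congr rfl fun m hm => ?_
  have h := hF (mem_support_iff.mp hm)
  rw [Pi.one_def, ← Finsupp.degree_eq_weight_one, Finsupp.degree_eq_sum] at h
  simp only [Pi.smul_apply, smul_eq_mul, mul_pow, Finset.prod_mul_distrib]
  rw [Finset.prod_pow_eq_pow_sum, h]; ring

theorem bertini0 {K : Type} [Field K] [IsAlgClosed K] [CharZero K] {n d : ℕ} (hn : 3 ≤ n) (hd : 2 ≤ d)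
    (F : MvPolynomial (Fin (n+1)) K) (hF : F.IsHomogeneous d) (hI : Irreducible F) (i k : Fin (n+1)) (hik : i ≠ k)
    (h0 : eval (Pi.single k 1) F = 0) (h1 : eval (Pi.single k 1) (pderiv i F) ≠ 0) :
    ∃ u v t, ¬ Red (sb (Pm u v t) F) d := by
  classical
  have hcard : ∀ s : Finset (Fin (n+1)), s.card ≤ 3 → ∃ u, u ∉ s := by
    intro s hs
    by_contra h
    push Not at h
    have : s = Finset.univ := Finset.eq_univ_of_forall h
    rw [this, Finset.card_univ, Fintype.card_fin] at hs; omega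
  obtain ⟨u, hu⟩ := hcard {i, k} (Finset.card_le_two.trans (by norm_num))
  obtain ⟨v', hv'⟩ := hcard {i, k, u} Finset.card_le_three
  simp only [Finset.mem_insert, Finset.mem_singleton, not_or] at hu hv'
  obtain ⟨i, rfl⟩ := Fin.exists_succAbove_eq (Ne.symm hu.1)
  obtain ⟨k, rfl⟩ := Fin.exists_succAbove_eq (Ne.symm hu.2)
  obtain ⟨v, rfl⟩ := Fin.exists_succAbove_eq hv'.2.2
  have hvi : v ≠ i := fun h => hv'.1 (by rw [h])
  have hvk : v ≠ k := fun h => hv'.2.1 (by rw [h])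
  by_contra hcon
  push Not at hcon
  have hcon := hcon u v
  let L := FractionRing (Polynomial K)
  let al := algebraMap (Polynomial K) L
  let f := pe u v (al.comp Polynomial.C) (al Polynomial.X) F
  have hcz : CharZero L := charZero_of_injective_ringHom (al.comp Polynomial.C).injective
  have hp : u.insertNth (α := fun _ => K) 0 (Pi.single k 1) = Pi.single (u.succAbove k) 1 := by
    funext j
    refine Fin.succAboveCases u ?_ (fun j => ?_) j
    · simp [Pi.single_apply, (Fin.succAbove_ne u k).symm]
    · simp [Pi.single_apply]
  have hev : ∀ G, eval ((al.comp Polynomial.C) ∘ Pi.single k 1) (pe u v (al.comp Polynomial.C) (al Polynomial.X) G) =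
      (al.comp Polynomial.C) (eval (Pi.single (u.succAbove k) 1) G) := by
    intro G
    rw [pe_eval u v _ _ G _ (by simp [hvk]), hp]
  have hf0 : eval ((al.comp Polynomial.C) ∘ Pi.single k 1) f = 0 := by rw [hev, h0, map_zero]
  have hf1 : eval ((al.comp Polynomial.C) ∘ Pi.single k 1) (pderiv i f) ≠ 0 := by
    rw [pe_pderiv u v _ _ i hvi.symm, hev]
    exact fun h => h1 ((al.comp Polynomial.C).injective (by rw [h, map_zero]))
  have hprime : Prime f := by
    refine pe_prime u v F (UniqueFactorizationMonoid.irreducible_iff_prime.mp hI) f rfl ?_ ?_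
    · intro hu
      exact (hu.map (eval ((al.comp Polynomial.C) ∘ Pi.single k 1))).ne_zero hf0
    · rintro ⟨g, hg⟩
      apply hf1
      rw [hg, Derivation.leibniz, pderiv_X_of_ne hvi, smul_zero, add_zero, smul_eq_mul, map_mul, eval_X]
      simp [hvk]
  have hirr := geom_irr f hprime.irreducible _ hf0 i hf1
  have hfh : f.IsHomogeneous d := sb_hom _ (hF.map _)
  refine irr_not_Red hirr (d := d) ?_ ?_
  · exact (hfh.map _).totalDegree hirr.ne_zero
  let pf : Polynomial K →+* (K → K) := RingHom.pi fun b => Polynomial.evalRingHom b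
  have hpf : Function.Injective pf := by
    intro p q h
    apply Polynomial.funext
    intro b; exact congrFun h b
  obtain ⟨U, E, i1, i2, θ, hs, hU, hS⟩ := ultra (Submonoid.map pf (nonZeroDivisors (Polynomial K))) (by
    rintro ⟨p, hp, hp0⟩
    exact nonZeroDivisors.ne_zero hp (hpf (by rw [hp0, map_zero])))
  have hθ : ∀ y : nonZeroDivisors (Polynomial K), IsUnit ((θ.comp pf) y) := fun y =>
    IsUnit.mk0 _ (hS _ ⟨y, y.2, rfl⟩)
  let LE : L →+* E := IsLocalization.lift hθ
  have hLE : ∀ p, LE (al p) = θ (pf p) := fun p => IsLocalization.lift_eq hθ p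
  letI : Algebra L E := LE.toAlgebra
  let κ : AlgebraicClosure L →ₐ[L] E := IsAlgClosed.lift
  apply Red.desc (κ : AlgebraicClosure L →+* E)
  have hκ : (κ : AlgebraicClosure L →+* E).comp (algebraMap L (AlgebraicClosure L)) = LE := κ.comp_algebraMap
  rw [MvPolynomial.map_map, hκ]
  let F' : MvPolynomial (Fin n) (Polynomial K) := sb (Pm u v Polynomial.X) (map Polynomial.C F)
  have e1 : map LE f = map θ (map pf F') := by
    have : f = map al F' := by
      rw [sb_map, Pm_map, MvPolynomial.map_map]; rfl
    rw [this, MvPolynomial.map_map, MvPolynomial.map_map]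
    rw [show LE.comp al = θ.comp pf from RingHom.ext hLE]
  rw [e1]
  apply los_Red θ hU
  refine Filter.Eventually.of_forall fun b => ?_
  rw [MvPolynomial.map_map, sb_map, Pm_map, MvPolynomial.map_map]
  have e2 : ((Pi.evalRingHom (fun _ => K) b).comp pf).comp Polynomial.C = RingHom.id K := by
    ext c; simp [pf]
  rw [e2, MvPolynomial.map_id]
  exact hcon _

theorem bertini {K : Type} [Field K] [IsAlgClosed K] [CharZero K] {n d : ℕ} (hn : 3 ≤ n) (hd : 2 ≤ d)
    (F : MvPolynomial (Fin (n+1)) K) (hF : F.IsHomogeneous d) (hI : Irreducible F) :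
    ∃ (a : Fin (n+1) → K) (M : Matrix (Fin n) (Fin (n+1)) K), a ≠ 0 ∧ M.mulVec a = 0 ∧ ¬ Red (sb M F) d := by
  obtain ⟨p, i, k, hp, hpi, hki, hpk⟩ := smooth_point2 hF hd hI
  let q : Fin (n+1) → K := (p k)⁻¹ • p
  let Nn : Matrix (Fin (n+1)) (Fin (n+1)) K := Matrix.vecMulVec (Pi.single k 1) (q - Pi.single k 1)
  have hq : q k = 1 := by simp [q, inv_mul_cancel₀ hpk]
  have hNN : Nn * Nn = 0 := by
    simp only [Nn, Matrix.vecMulVec_mul_vecMulVec]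
    simp [hq]
  have hT1 : (1 - Nn) * (1 + Nn) = 1 := by
    have : (1 - Nn) * (1 + Nn) = 1 - Nn * Nn := by noncomm_ring
    rw [this, hNN, sub_zero]
  have hT2 : (1 + Nn) * (1 - Nn) = 1 := by
    have : (1 + Nn) * (1 - Nn) = 1 - Nn * Nn := by noncomm_ring
    rw [this, hNN, sub_zero]
  have hev : ∀ G : MvPolynomial (Fin (n+1)) K, eval (Pi.single k 1) (sb (1 + Nn) G) = eval q G := by
    intro G
    rw [eval_sb, Matrix.vecMul_add, Matrix.vecMul_one]
    congr 2
    simp [Nn, Matrix.vecMul_vecMulVec]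
  have hI' : Irreducible (sb (1 + Nn) F) := by
    have hnz : sb (1 + Nn) F ≠ 0 := by
      intro h
      apply hI.ne_zero
      rw [← sb_one F, ← hT1, sb_mul, h]; simp [sb]
    refine not_Red_irr ((sb_hom _ hF).totalDegree hnz) (by omega) ?_
    intro h
    have := h.sb (1 - Nn)
    rw [← sb_mul, hT1, sb_one] at this
    exact irr_not_Red hI (hF.totalDegree hI.ne_zero) this
  obtain ⟨u, v, t, h⟩ := bertini0 hn hd (sb (1 + Nn) F) (sb_hom _ hF) hI' i k hki.symm
    (by rw [hev, eval_smul_hom hF, hp, mul_zero]) (by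
      rw [pderiv_sb, map_sum, Finset.sum_eq_single i]
      · rw [map_mul, hev, eval_smul_hom hF.pderiv]
        simp [Nn, Matrix.vecMulVec_apply, hki.symm, hpk, hpi]
      · intro b _ hb
        simp [Nn, Matrix.vecMulVec_apply, hki.symm, Matrix.one_apply, hb.symm]
      · simp)
  let a : Fin (n+1) → K := Pi.single u 1 - Pi.single (u.succAbove v) t
  have ha : a ≠ 0 := by
    intro h
    have := congrFun h u
    simp [a] at this
  refine ⟨(1 - Nn).mulVec a, Pm u v t * (1 + Nn), ?_, ?_, ?_⟩
  · intro h
    apply ha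
    have := congrArg ((1 + Nn).mulVec) h
    rwa [Matrix.mulVec_mulVec, hT2, Matrix.one_mulVec, Matrix.mulVec_zero] at this
  · rw [← Matrix.mulVec_mulVec, Matrix.mulVec_mulVec _ (1 + Nn) (1 - Nn), hT2, Matrix.one_mulVec]
    simp only [a, Matrix.mulVec_sub, Matrix.mulVec_single]
    ext j
    by_cases h : v = j
    · simp [Pm, h]
    · simp [Pm, h, Ne.symm h]
  · rwa [sb_mul]

theorem lift_gen {Ω E B : Type} [Field Ω] [CharZero Ω] [Field E] [CommRing B] (i : Ω →+* E) (j : Ω →+* B) (g : B →+* E)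
    (hg : g.comp j = i) (hs : Function.Surjective g) (hk : IsNilpotent (RingHom.ker g)) :
    ∃ δ : E →+* B, g.comp δ = RingHom.id E ∧ δ.comp i = j := by
  letI := i.toAlgebra
  letI := j.toAlgebra
  let g' : B →ₐ[Ω] E := { g with commutes' := fun r => by exact congrArg (fun φ => φ r) hg }
  haveI : Algebra.FormallySmooth Ω E := by
    obtain ⟨ι, v, hv⟩ := exists_isTranscendenceBasis' Ω E
    haveI := hv.isAlgebraic_field
    exact Algebra.FormallySmooth.of_algebraicIndependent_of_isSeparable hv.1
  let δ := Algebra.FormallySmooth.liftOfSurjective (AlgHom.id Ω E) g' hs hk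
  have h := Algebra.FormallySmooth.comp_liftOfSurjective (AlgHom.id Ω E) g' hs hk
  refine ⟨δ.toRingHom, ?_, ?_⟩
  · ext x; exact congrArg (fun φ => φ x) h
  · ext x; exact δ.commutes x

theorem deriv_ext {K E : Type} [Field K] [Field E] [CharZero E] (κ : K →+* E) {N : ℕ} (F : MvPolynomial (Fin N) K)
    (hF : Prime F) (ξ : Fin N → E) (h0 : eval ξ (map κ F) = 0) (h1 : ∀ G, ¬ F ∣ G → eval ξ (map κ G) ≠ 0)
    (w : Fin N → E) (hw : ∑ i, w i * eval ξ (map κ (pderiv i F)) = 0) :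
    ∃ D : Derivation ℤ E E, (∀ c, D (κ c) = 0) ∧ ∀ i, D (ξ i) = w i := by
  classical
  let e : MvPolynomial (Fin N) K →+* DualNumber E :=
    eval₂Hom ((TrivSqZeroExt.inlHom E E).comp κ) (fun i => TrivSqZeroExt.inl (ξ i) + TrivSqZeroExt.inr (w i))
  have hfst : ∀ G, (e G).fst = eval ξ (map κ G) := by
    intro G
    induction G using MvPolynomial.induction_on with
    | C a => simp [e]
    | add p q hp hq => simp [hp, hq]
    | mul_X p i hp => simp [hp]; left; simp [e]
  have hsnd : ∀ G, (e G).snd = ∑ i, w i * eval ξ (map κ (pderiv i G)) := by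
    intro G
    induction G using MvPolynomial.induction_on with
    | C a => simp [e]
    | add p q hp hq => simp [hp, hq, mul_add, Finset.sum_add_distrib]
    | mul_X p i hp =>
      have : e (X i) = TrivSqZeroExt.inl (ξ i) + TrivSqZeroExt.inr (w i) := by simp [e]
      rw [map_mul, this, TrivSqZeroExt.snd_mul, hp, hfst]
      simp [pderiv_mul, pderiv_X, Pi.single_apply, apply_ite, mul_add, Finset.sum_add_distrib, Finset.mul_sum]
      congr 1
      · ring
      · rw [Finset.sum_mul]
        refine Finset.sum_congr rfl fun j _ => ?_
        ring
  have heF : e F = 0 := by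
    apply TrivSqZeroExt.ext
    · rw [hfst, h0]; rfl
    · rw [hsnd, hw]; rfl
  let I := Ideal.span {F}
  haveI : I.IsPrime := (Ideal.span_singleton_prime hF.ne_zero).2 hF
  have hI : ∀ a ∈ I, e a = 0 := by
    intro a ha
    obtain ⟨b, rfl⟩ := Ideal.mem_span_singleton.1 ha
    rw [map_mul, heF, zero_mul]
  let e1 : (MvPolynomial (Fin N) K ⧸ I) →+* DualNumber E := Ideal.Quotient.lift I e hI
  have hu : ∀ y : nonZeroDivisors (MvPolynomial (Fin N) K ⧸ I), IsUnit (e1 y) := by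
    rintro ⟨y, hy⟩
    obtain ⟨G, rfl⟩ := Ideal.Quotient.mk_surjective y
    have hG : ¬ F ∣ G := by
      intro h
      exact nonZeroDivisors.ne_zero hy (Ideal.Quotient.eq_zero_iff_mem.2 (Ideal.mem_span_singleton.2 h))
    change IsUnit (e G)
    rw [TrivSqZeroExt.isUnit_iff_isUnit_fst, hfst]
    exact (h1 G hG).isUnit
  let j : FractionRing (MvPolynomial (Fin N) K ⧸ I) →+* DualNumber E := IsLocalization.lift (M := nonZeroDivisors (MvPolynomial (Fin N) K ⧸ I)) (g := e1) hu
  let g : DualNumber E →+* E := (TrivSqZeroExt.fstHom E E E).toRingHom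
  haveI : CharZero K := RingHom.charZero κ
  haveI : CharZero (FractionRing (MvPolynomial (Fin N) K ⧸ I)) :=
    charZero_of_injective_ringHom (f := (((algebraMap (MvPolynomial (Fin N) K ⧸ I) (FractionRing (MvPolynomial (Fin N) K ⧸ I))).comp (Ideal.Quotient.mk I)).comp C)) (RingHom.injective _)
  obtain ⟨δ, hδ1, hδ2⟩ := lift_gen (g.comp j) j g rfl (fun x => ⟨TrivSqZeroExt.inl x, rfl⟩) (by
    refine ⟨2, ?_⟩
    rw [pow_two, Ideal.zero_eq_bot, eq_bot_iff, Ideal.mul_le]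
    intro r hr s hs
    have hr : r.fst = 0 := hr
    have hs : s.fst = 0 := hs
    rw [Ideal.mem_bot]
    apply TrivSqZeroExt.ext
    · simp [hr]
    · simp [hr, hs])
  have hf : ∀ x, (δ x).fst = x := fun x => congrArg (fun φ => φ x) hδ1
  have hjG : ∀ G, δ (eval ξ (map κ G)) = e G := by
    intro G
    have h2 : j (algebraMap _ _ (Ideal.Quotient.mk I G)) = e G := by
      rw [IsLocalization.lift_eq]; rfl
    rw [← h2, ← hδ2, ← hfst, ← h2]; rfl
  refine ⟨Derivation.mk' (AddMonoidHom.toIntLinearMap { toFun := fun x => (δ x).snd, map_zero' := by simp, map_add' := by simp }) ?_, ?_, ?_⟩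
  · intro a b
    simp [hf, mul_comm]
  · intro c
    have := congrArg TrivSqZeroExt.snd (hjG (C c))
    simp only [map_C, eval_C] at this
    refine this.trans ?_
    rw [hsnd]; simp
  · intro i
    have := congrArg TrivSqZeroExt.snd (hjG (X i))
    simp only [map_X, eval_X] at this
    refine this.trans ?_
    simp [e]

theorem los_conv {K β : Type} [Field K] {U : Ultrafilter β} {E : Type} [Field E] (θ : (β → K) →+* E)
    (hs : Function.Surjective θ) (hU : ∀ f, θ f = 0 ↔ ∀ᶠ b in (U : Filter β), f b = 0) {N r : ℕ}
    (F : MvPolynomial (Fin N) (β → K)) (a x : Fin N → β → K)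
    (h : LD (map θ F) (θ ∘ a) (θ ∘ x) r) :
    ∀ᶠ b in (U : Filter β), LD (map (Pi.evalRingHom (fun _ => K) b) F) (fun i => a i b) (fun i => x i b) r := by
  classical
  have hE : ∀ f g : β → K, θ f = θ g → ∀ᶠ b in (U : Filter β), f b = g b := by
    intro f g hfg
    have := (hU (f - g)).1 (by rw [map_sub, hfg, sub_self])
    exact this.mono fun b hb => sub_eq_zero.1 hb
  obtain ⟨M, Li, c, h1, h2, h3, h4⟩ := h
  obtain ⟨s, hs⟩ := hs.hasRightInverse
  let M' : Matrix (Fin r) (Fin N) (β → K) := M.map s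
  let L' : Matrix (Fin N) (Fin r) (β → K) := Li.map s
  let c' : Fin r → β → K := s ∘ c
  have eM : M'.map θ = M := by ext i j; exact hs _
  have eL : L'.map θ = Li := by ext i j; exact hs _
  have ec : θ ∘ c' = c := by ext i; exact hs _
  rw [← eM, ← eL, ← Matrix.map_mul] at h1
  rw [← eM] at h2 h4
  rw [← eM, ← ec] at h3
  rw [← sb_map] at h4
  have e1 : ∀ᶠ b in (U : Filter β), ∀ i j, (M' * L') i j b = (1 : Matrix (Fin r) (Fin r) (β → K)) i j b := by
    rw [Filter.eventually_all]; intro i; rw [Filter.eventually_all]; intro j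
    apply hE
    have := congrFun (congrFun h1 i) j
    rw [Matrix.map_apply] at this
    rw [this, Matrix.one_apply, Matrix.one_apply]; split_ifs <;> simp
  have e2 : ∀ᶠ b in (U : Filter β), ∀ i, (M'.mulVec a) i b = 0 := by
    rw [Filter.eventually_all]; intro i
    rw [← hU, RingHom.map_mulVec, h2]; rfl
  have e3 : ∀ᶠ b in (U : Filter β), ∀ i, (Matrix.vecMul c' M') i b = x i b := by
    rw [Filter.eventually_all]; intro i
    apply hE
    rw [RingHom.map_vecMul, h3]; rfl
  have e4 : ∀ᶠ b in (U : Filter β), ∀ m ∈ (sb M' F).support, coeff m (sb M' F) b = 0 := by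
    rw [Filter.eventually_all_finset]
    intro m _
    rw [← hU, ← coeff_map, h4, coeff_zero]
  filter_upwards [e1, e2, e3, e4] with b h1 h2 h3 h4
  refine ⟨M'.map (Pi.evalRingHom (fun _ => K) b), L'.map (Pi.evalRingHom (fun _ => K) b), fun i => c' i b, ?_, ?_, ?_, ?_⟩
  · rw [← Matrix.map_mul]
    ext i j
    rw [Matrix.map_apply]
    refine (h1 i j).trans ?_
    rw [Matrix.one_apply, Matrix.one_apply]; split_ifs <;> rfl
  · ext i
    have := h2 i
    simp only [Matrix.mulVec, dotProduct, Finset.sum_apply] at this ⊢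
    exact this
  · ext i
    have := h3 i
    simp only [Matrix.vecMul, dotProduct, Finset.sum_apply] at this ⊢
    exact this
  · rw [← sb_map]
    ext m
    rw [coeff_map, coeff_zero]
    by_cases hm : m ∈ (sb M' F).support
    · exact h4 m hm
    · rw [notMem_support_iff.1 hm]; rfl

theorem GEN {K : Type} [Field K] [IsAlgClosed K] [CharZero K] {n : ℕ} (F : MvPolynomial (Fin (n+1)) K) (hP : Prime F)
    (H : ∀ a x, a ≠ 0 → x ≠ 0 → x ⬝ᵥ a = 0 → eval x F = 0 → LD F a x (n-2)) (x0 : Fin (n+1) → K)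
    (hx0 : eval x0 F = 0) (hL : ¬ LD F 0 x0 (n-1)) :
    ∃ (E : Type) (_ : Field E) (_ : IsAlgClosed E) (_ : CharZero E) (κ : K →+* E) (ξ : Fin (n+1) → E),
      eval ξ (map κ F) = 0 ∧ (∀ G, ¬ F ∣ G → eval ξ (map κ G) ≠ 0) ∧
      (∀ a x, a ≠ 0 → x ≠ 0 → x ⬝ᵥ a = 0 → eval x (map κ F) = 0 → LD (map κ F) a x (n-2)) ∧
      ¬ LD (map κ F) 0 ξ (n-1) := by
  classical
  let β := {x : Fin (n+1) → K // eval x F = 0}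
  let res : MvPolynomial (Fin (n+1)) K →+* (β → K) := RingHom.pi fun b => eval b.1
  let S : Submonoid (β → K) :=
    { carrier := {f | ∃ G, ¬ F ∣ G ∧ res G = f}
      one_mem' := ⟨1, fun h => hP.not_isUnit (isUnit_of_dvd_one h), map_one _⟩
      mul_mem' := by
        rintro _ _ ⟨G, hG, rfl⟩ ⟨H, hH, rfl⟩
        exact ⟨G * H, fun h => (hP.dvd_or_dvd h).elim hG hH, map_mul _ _ _⟩ }
  obtain ⟨U, E, i1, i2, θ, hs, hU, hS⟩ := ultra S (by
    rintro ⟨G, hG, h⟩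
    exact hG (nullst hP fun x hx => congrFun h ⟨x, hx⟩))
  let κ : K →+* E := θ.comp (Pi.constRingHom β K)
  let ξ' : Fin (n+1) → β → K := fun i b => b.1 i
  let ξ : Fin (n+1) → E := θ ∘ ξ'
  have hev : ∀ G, eval ξ (map κ G) = θ (res G) := by
    intro G
    have : map κ G = map θ (map (Pi.constRingHom β K) G) := by rw [MvPolynomial.map_map]
    rw [this, ev_map]
    congr 1
    funext b
    have h2 := ev_map (Pi.evalRingHom (fun _ : β => K) b) ξ' (map (Pi.constRingHom β K) G)
    rw [MvPolynomial.map_map] at h2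
    have e : (Pi.evalRingHom (fun _ => K) b).comp (Pi.constRingHom β K) = RingHom.id K := by ext; rfl
    rw [e, MvPolynomial.map_id] at h2
    exact h2.symm
  have hid : ∀ (b : β), map (Pi.evalRingHom (fun _ => K) b) (map (Pi.constRingHom β K) F) = F := by
    intro b
    have e : (Pi.evalRingHom (fun _ => K) b).comp (Pi.constRingHom β K) = RingHom.id K := by ext; rfl
    rw [MvPolynomial.map_map, e, MvPolynomial.map_id]
  have hmm : map κ F = map θ (map (Pi.constRingHom β K) F) := by rw [MvPolynomial.map_map]
  refine ⟨E, i1, i2, charZero_of_injective_ringHom κ.injective, κ, ξ, ?_, ?_, ?_, ?_⟩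
  · rw [hev]
    have : res F = 0 := by funext b; exact b.2
    rw [this, map_zero]
  · intro G hG
    rw [hev]; exact hS _ ⟨G, hG, rfl⟩
  · intro a x ha hx hax hFx
    obtain ⟨s, hs⟩ := hs.hasRightInverse
    have ea : θ ∘ (s ∘ a) = a := by funext i; exact hs _
    have ex : θ ∘ (s ∘ x) = x := by funext i; exact hs _
    have := los_LD (U := U) (r := n-2) θ hU (map (Pi.constRingHom β K) F) (s ∘ a) (s ∘ x) (by
      have e1 : ∀ᶠ b in (U : Filter β), ∃ i, s (a i) b ≠ 0 := by
        obtain ⟨i, hi⟩ := Function.ne_iff.1 ha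
        have : ¬ ∀ᶠ b in (U : Filter β), s (a i) b = 0 := by
          rw [← hU, hs]; exact hi
        rw [← Ultrafilter.eventually_not] at this
        exact this.mono fun b hb => ⟨i, hb⟩
      have e2 : ∀ᶠ b in (U : Filter β), ∃ i, s (x i) b ≠ 0 := by
        obtain ⟨i, hi⟩ := Function.ne_iff.1 hx
        have : ¬ ∀ᶠ b in (U : Filter β), s (x i) b = 0 := by
          rw [← hU, hs]; exact hi
        rw [← Ultrafilter.eventually_not] at this
        exact this.mono fun b hb => ⟨i, hb⟩
      have e3 : ∀ᶠ b in (U : Filter β), ((s ∘ x) ⬝ᵥ (s ∘ a)) b = 0 := by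
        rw [← hU, RingHom.map_dotProduct, ea, ex, hax]
      have e4 : ∀ᶠ b in (U : Filter β), (eval (s ∘ x) (map (Pi.constRingHom β K) F)) b = 0 := by
        rw [← hU, ← ev_map, ex, ← hmm, hFx]
      filter_upwards [e1, e2, e3, e4] with b h1 h2 h3 h4
      rw [hid]
      refine H _ _ (Function.ne_iff.2 h1) (Function.ne_iff.2 h2) ?_ ?_
      · rw [dotProduct, Finset.sum_apply] at h3
        exact h3
      · have h5 := ev_map (Pi.evalRingHom (fun _ : β => K) b) (s ∘ x) (map (Pi.constRingHom β K) F)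
        rw [hid] at h5
        exact h5.trans h4)
    rw [ea, ex, ← hmm] at this
    exact this
  · intro hLD
    have : ¬ ∀ P : MvPolynomial (Fin (n+1)) K, (∀ x, LD F 0 x (n-1) → eval x P = 0) → eval x0 P = 0 :=
      fun h => hL (Yclosed F x0 h)
    push Not at this
    obtain ⟨P, hP1, hP2⟩ := this
    have h1 : θ (res P) ≠ 0 := hS _ ⟨P, fun ⟨Q, hQ⟩ => hP2 (by rw [hQ, map_mul, hx0, zero_mul]), rfl⟩
    apply h1
    rw [hU]
    have := los_conv θ hs hU (r := n-1) (map (Pi.constRingHom β K) F) 0 ξ' (by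
      rw [← hmm]
      convert hLD using 1
      funext i; exact map_zero θ)
    refine this.mono fun b hb => ?_
    rw [hid] at hb
    exact hP1 _ hb

noncomputable def dd {R : Type*} [CommRing R] {N : ℕ} (w : Fin N → R) : Derivation R (MvPolynomial (Fin N) R) (MvPolynomial (Fin N) R) :=
  mkDerivation R (fun i => C (w i))

theorem dd_eq {R : Type*} [CommRing R] {N : ℕ} (w : Fin N → R) (P : MvPolynomial (Fin N) R) :
    dd w P = ∑ i, C (w i) * pderiv i P := by
  classical
  unfold dd
  induction P using MvPolynomial.induction_on with
  | C c => simp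
  | add p q hp hq => simp only [map_add, hp, hq, mul_add, Finset.sum_add_distrib]
  | mul_X p k hp =>
    rw [Derivation.leibniz, hp, mkDerivation_X]
    simp only [Derivation.leibniz, smul_eq_mul, mul_add, Finset.sum_add_distrib]
    congr 1
    · rw [Finset.sum_eq_single k]
      · simp; ring
      · intro b _ hb; rw [pderiv_X_of_ne hb.symm]; simp
      · simp
    · rw [Finset.mul_sum]
      refine Finset.sum_congr rfl fun j _ => by ring

theorem dd_mul {R : Type*} [CommRing R] {N : ℕ} (w : Fin N → R) (P Q : MvPolynomial (Fin N) R) :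
    dd w (P * Q) = P * dd w Q + Q * dd w P := by
  rw [Derivation.leibniz]; rfl

theorem dd_add {R : Type*} [CommRing R] {N : ℕ} (u w : Fin N → R) (P : MvPolynomial (Fin N) R) :
    dd (u + w) P = dd u P + dd w P := by
  simp only [dd_eq, Pi.add_apply, map_add, add_mul, Finset.sum_add_distrib]

theorem dd_smul {R : Type*} [CommRing R] {N : ℕ} (c : R) (w : Fin N → R) (P : MvPolynomial (Fin N) R) :
    dd (c • w) P = C c * dd w P := by
  simp only [dd_eq, Pi.smul_apply, smul_eq_mul, map_mul, Finset.mul_sum, mul_assoc]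

theorem dd_hom {R : Type*} [CommRing R] {N d : ℕ} (w : Fin N → R) {P : MvPolynomial (Fin N) R} (hP : P.IsHomogeneous d) :
    (dd w P).IsHomogeneous (d - 1) := by
  rw [dd_eq]
  refine IsHomogeneous.sum _ _ _ fun i _ => ?_
  simpa using (isHomogeneous_C _ (w i)).mul (hP.pderiv (i := i))

theorem dd_comm {R : Type*} [CommRing R] {N : ℕ} (u w : Fin N → R) (P : MvPolynomial (Fin N) R) :
    dd u (dd w P) = dd w (dd u P) := by
  have : ⁅dd u, dd w⁆ = 0 := by
    apply MvPolynomial.derivation_ext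
    intro i
    rw [Derivation.commutator_apply]
    simp [dd, mkDerivation_X]
  have h2 := congrArg (fun D => D P) this
  simp only [Derivation.commutator_apply] at h2
  exact sub_eq_zero.1 h2

theorem dd_hc {R : Type*} [CommRing R] {N : ℕ} (w : Fin N → R) (P : MvPolynomial (Fin N) R) (j : ℕ) :
    homogeneousComponent j (dd w P) = dd w (homogeneousComponent (j+1) P) := by
  classical
  rw [dd_eq, dd_eq, map_sum]
  refine Finset.sum_congr rfl fun i _ => ?_
  rw [homogeneousComponent_C_mul]
  congr 1
  ext m
  rw [coeff_homogeneousComponent, coeff_pderiv, coeff_pderiv, coeff_homogeneousComponent]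
  have : (m + Finsupp.single i 1).degree = m.degree + 1 := by
    rw [map_add, Finsupp.degree_single]
  rw [this]
  simp only [add_left_inj]
  split_ifs <;> simp

theorem dd_sb {R : Type*} [CommRing R] {r N : ℕ} (M : Matrix (Fin r) (Fin N) R) (P : MvPolynomial (Fin N) R) (u : Fin r → R) :
    dd u (sb M P) = sb M (dd (Matrix.vecMul u M) P) := by
  have hsum : ∀ (f : Fin N → MvPolynomial (Fin N) R), sb M (∑ j, f j) = ∑ j, sb M (f j) := fun f => by
    unfold sb; rw [map_sum]
  rw [dd_eq, dd_eq, hsum]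
  have : ∀ c Q, sb M (C c * Q) = C c * sb M Q := fun c Q => by
    unfold sb; rw [map_mul, algHom_C]; rfl
  simp only [this, pderiv_sb]
  simp only [Matrix.vecMul, dotProduct, map_sum, Finset.sum_mul, Finset.mul_sum]
  rw [Finset.sum_comm]
  refine Finset.sum_congr rfl fun j _ => Finset.sum_congr rfl fun i _ => ?_
  rw [map_mul]; ring

theorem dd_euler {R : Type*} [CommRing R] {N d : ℕ} {P : MvPolynomial (Fin N) R} (hP : P.IsHomogeneous d) (x : Fin N → R) :
    eval x (dd x P) = d * eval x P := by
  have := congrArg (eval x) hP.sum_X_mul_pderiv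
  rw [dd_eq]
  simpa using this

theorem hom1_dd {R : Type*} [CommRing R] {N : ℕ} {P : MvPolynomial (Fin N) R} (hP : P.IsHomogeneous 1) (v : Fin N → R) :
    dd v P = C (eval v P) := by
  have h1 := dd_hom v hP
  have h2 : dd v P = C (coeff 0 (dd v P)) := by
    rw [← homogeneousComponent_zero, homogeneousComponent_eq_self h1]
  have h3 := dd_euler hP v
  rw [h2, eval_C, Nat.cast_one, one_mul] at h3
  rw [h2, h3]

theorem hom1_add {R : Type*} [CommRing R] {N : ℕ} {P : MvPolynomial (Fin N) R} (hP : P.IsHomogeneous 1) (u v : Fin N → R) :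
    eval (u + v) P = eval u P + eval v P := by
  have := dd_add u v P
  rw [hom1_dd hP, hom1_dd hP, hom1_dd hP, ← C_add] at this
  exact C_injective _ _ this

theorem B_symm {R : Type*} [CommRing R] {N : ℕ} {q : MvPolynomial (Fin N) R} (hq : q.IsHomogeneous 2) (u v : Fin N → R) :
    eval v (dd u q) = eval u (dd v q) := by
  have := dd_comm v u q
  rw [hom1_dd (dd_hom u hq), hom1_dd (dd_hom v hq)] at this
  exact C_injective _ _ this

theorem q_add {R : Type*} [Field R] [CharZero R] {N : ℕ} {q : MvPolynomial (Fin N) R} (hq : q.IsHomogeneous 2) (u v : Fin N → R) :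
    eval (u + v) q = eval u q + eval v q + eval v (dd u q) := by
  have h1 := dd_euler hq (u + v)
  have h2 := dd_euler hq u
  have h3 := dd_euler hq v
  rw [dd_add, map_add, hom1_add (dd_hom u hq), hom1_add (dd_hom v hq), h2, h3, B_symm hq v u] at h1
  push_cast at h1
  have : (2 : R) ≠ 0 := two_ne_zero
  apply mul_left_cancel₀ this
  linear_combination -h1

theorem hom1_vec {R : Type*} [CommRing R] {N : ℕ} {P : MvPolynomial (Fin N) R} (hP : P.IsHomogeneous 1) :
    ∃ a : Fin N → R, ∀ x, eval x P = x ⬝ᵥ a := by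
  refine ⟨fun i => eval 0 (pderiv i P), fun x => ?_⟩
  have := congrArg (eval (0 : Fin N → R)) (hom1_dd hP x)
  rw [eval_C, dd_eq] at this
  rw [← this]
  simp [dotProduct]

theorem hom1_prime {R : Type*} [Field R] {N : ℕ} {P : MvPolynomial (Fin N) R} (hP : P.IsHomogeneous 1) (h0 : P ≠ 0) :
    Prime P := by
  rw [← UniqueFactorizationMonoid.irreducible_iff_prime]
  apply not_Red_irr (hP.totalDegree h0) one_pos
  rintro ⟨G, H, rfl, h1, h2⟩
  have := hP.totalDegree h0
  have := totalDegree_mul G H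
  omega

theorem hc_mul {R : Type*} [CommRing R] {N a b : ℕ} {B : MvPolynomial (Fin N) R} (hB : B.IsHomogeneous a)
    (P : MvPolynomial (Fin N) R) : homogeneousComponent (a+b) (B * P) = B * homogeneousComponent b P := by
  conv_lhs => rw [← sum_homogeneousComponent P, Finset.mul_sum, map_sum]
  have : ∀ i ∈ Finset.range (P.totalDegree + 1), homogeneousComponent (a+b) (B * homogeneousComponent i P) =
      if i = b then B * homogeneousComponent b P else 0 := by
    intro i _
    rw [homogeneousComponent_of_mem (hB.mul (homogeneousComponent_isHomogeneous i P))]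
    by_cases h : i = b
    · subst h; simp
    · rw [if_neg (by omega), if_neg h]
  rw [Finset.sum_congr rfl this, Finset.sum_ite_eq']
  split_ifs with h
  · rfl
  · rw [homogeneousComponent_eq_zero, mul_zero]
    simpa using h

theorem not_irr_hom2 {R : Type*} [Field R] {N : ℕ} {q : MvPolynomial (Fin N) R} (hq : q.IsHomogeneous 2) (h0 : q ≠ 0)
    (h : ¬ Irreducible q) : ∃ l m : MvPolynomial (Fin N) R, l.IsHomogeneous 1 ∧ m.IsHomogeneous 1 ∧ q = l * m := by
  have hR : Red q 2 := by
    by_contra hR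
    exact h (not_Red_irr (hq.totalDegree h0) two_pos hR)
  obtain ⟨G, H, hGH, h1, h2⟩ := hR
  refine ⟨homogeneousComponent 1 G, homogeneousComponent 1 H, homogeneousComponent_isHomogeneous _ _,
    homogeneousComponent_isHomogeneous _ _, ?_⟩
  have e : ∀ P : MvPolynomial (Fin N) R, P.totalDegree < 2 → P = homogeneousComponent 0 P + homogeneousComponent 1 P := by
    intro P hP
    conv_lhs => rw [← sum_homogeneousComponent P]
    have : Finset.range (P.totalDegree + 1) ⊆ Finset.range 2 := by
      intro x; simp; omega
    rw [Finset.sum_subset this]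
    · simp [Finset.sum_range_succ]
    · intro x _ hx
      apply homogeneousComponent_eq_zero
      simpa using hx
  have h3 : homogeneousComponent 2 q = q := homogeneousComponent_eq_self hq
  rw [← h3, hGH]
  conv_lhs => rw [e G h1, add_mul, map_add]
  have a1 := hc_mul (b := 2) (homogeneousComponent_isHomogeneous 0 G) H
  have a2 := hc_mul (b := 1) (homogeneousComponent_isHomogeneous 1 G) H
  rw [homogeneousComponent_eq_zero _ _ h2, mul_zero] at a1
  rw [show (0:ℕ) + 2 = 2 from rfl] at a1
  rw [show (1:ℕ) + 1 = 2 from rfl] at a2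
  rw [a1, a2, zero_add]

section
variable {E : Type} [Field E] {n : ℕ}

def hyp (a : Fin n → E) : Submodule E (Fin n → E) where
  carrier := {z | z ⬝ᵥ a = 0}
  zero_mem' := by simp
  add_mem' := by
    intro x y hx hy
    simp only [Set.mem_ofPred_eq] at *
    rw [add_dotProduct, hx, hy, add_zero]
  smul_mem' := by
    intro c x hx
    simp only [Set.mem_ofPred_eq] at *
    rw [smul_dotProduct, hx, smul_zero]

theorem mem_hyp {a z : Fin n → E} : z ∈ hyp a ↔ z ⬝ᵥ a = 0 := Iff.rfl

theorem hyp_rank {a : Fin n → E} (ha : a ≠ 0) : Module.finrank E (hyp a) = n - 1 := by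
  classical
  let f : Module.Dual E (Fin n → E) := ∑ i, a i • LinearMap.proj i
  have hf : ∀ z, f z = z ⬝ᵥ a := by intro z; simp [f, dotProduct, mul_comm]
  have hf0 : f ≠ 0 := by
    obtain ⟨i, hi⟩ := Function.ne_iff.1 ha
    intro h
    have := hf (Pi.single i 1)
    rw [h] at this
    simp at this
    exact hi this.symm
  have h := Module.Dual.finrank_ker_add_one_of_ne_zero hf0
  have e : hyp a = LinearMap.ker f := by
    ext z; rw [mem_hyp, LinearMap.mem_ker, hf]
  rw [e]
  simp at h
  omega

theorem subW_mem {l a u v : Fin n → E} (ha : a ≠ 0) {W : Submodule E (Fin n → E)} (hW : Module.finrank E W = n - 2)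
    (h1 : W ≤ hyp a) (h2 : W ≤ hyp l) (hu1 : u ⬝ᵥ l = 0) (hu2 : u ⬝ᵥ a = 0) (hv1 : v ⬝ᵥ l ≠ 0) (hv2 : v ⬝ᵥ a = 0) :
    u ∈ W := by
  have hlt : hyp a ⊓ hyp l < hyp a := by
    refine lt_of_le_of_ne inf_le_left fun h => hv1 ?_
    have : v ∈ hyp a ⊓ hyp l := by rw [h]; exact hv2
    exact this.2
  have h3 := Submodule.finrank_lt_finrank_of_lt hlt
  rw [hyp_rank ha] at h3
  have : W = hyp a ⊓ hyp l := Submodule.eq_of_le_of_finrank_le (le_inf h1 h2) (by omega)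
  rw [this]
  exact ⟨hu2, hu1⟩

theorem exists_perp (hn : 4 ≤ n) (x y z : Fin n → E) : ∃ a : Fin n → E, a ≠ 0 ∧ x ⬝ᵥ a = 0 ∧ y ⬝ᵥ a = 0 ∧ z ⬝ᵥ a = 0 := by
  have := LinearMap.ker_ne_bot_of_finrank_lt (f := Matrix.mulVecLin (Matrix.of ![x, y, z])) (by simp; omega)
  obtain ⟨a, ha, ha0⟩ := Submodule.exists_mem_ne_zero_of_ne_bot this
  have ha : (Matrix.of ![x, y, z]).mulVec a = 0 := ha
  exact ⟨a, ha0, congrFun ha 0, congrFun ha 1, congrFun ha 2⟩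

theorem sub_union {l m : Fin n → E} {W : Submodule E (Fin n → E)} (h : ∀ w ∈ W, (w ⬝ᵥ l) * (w ⬝ᵥ m) = 0) :
    W ≤ hyp l ∨ W ≤ hyp m := by
  by_contra hc
  push Not at hc
  obtain ⟨h1, h2⟩ := hc
  obtain ⟨x, hx, hxl⟩ := SetLike.not_le_iff_exists.1 h1
  obtain ⟨y, hy, hym⟩ := SetLike.not_le_iff_exists.1 h2
  rw [mem_hyp] at hxl hym
  have hxm := (mul_eq_zero.1 (h x hx)).resolve_left hxl
  have hyl := (mul_eq_zero.1 (h y hy)).resolve_right hym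
  have := h _ (W.add_mem hx hy)
  rw [add_dotProduct, add_dotProduct, hyl, hxm, add_zero, zero_add] at this
  exact (mul_ne_zero hxl hym) this

theorem vec_ne {P : MvPolynomial (Fin n) E} [Infinite E] {a : Fin n → E} (h : ∀ x, eval x P = x ⬝ᵥ a) (hP : P ≠ 0) : a ≠ 0 := by
  rintro rfl
  apply hP
  apply MvPolynomial.funext
  intro x; rw [h]; simp

theorem exists_nonperp {a : Fin n → E} (ha : a ≠ 0) : ∃ v : Fin n → E, v ⬝ᵥ a ≠ 0 := by
  classical
  obtain ⟨i, hi⟩ := Function.ne_iff.1 ha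
  exact ⟨Pi.single i 1, by simpa using hi⟩

theorem claimA_eq (hn : 4 ≤ n) {F : MvPolynomial (Fin n) E} {η l m : Fin n → E}
    (Hsec : ∀ a : Fin n → E, a ≠ 0 → η ⬝ᵥ a = 0 → ∃ W : Submodule E (Fin n → E), Module.finrank E W = n - 2 ∧ η ∈ W ∧
      ∀ u ∈ W, u ⬝ᵥ a = 0 ∧ (u ⬝ᵥ l) * (u ⬝ᵥ m) = 0 ∧ eval u F = 0)
    (NL : ∀ W : Submodule E (Fin n → E), Module.finrank E W = n - 1 → η ∈ W → ∃ u ∈ W, eval u F ≠ 0)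
    (hl : l ≠ 0) (hηl : η ⬝ᵥ l = 0) (h : ∀ x, x ⬝ᵥ m = 0 → x ⬝ᵥ l = 0) : False := by
  obtain ⟨u, hu, hFu⟩ := NL _ (hyp_rank hl) hηl
  obtain ⟨v, hv⟩ := exists_nonperp hl
  obtain ⟨a, ha, h1, h2, h3⟩ := exists_perp hn η u v
  obtain ⟨W, hW, hηW, hWW⟩ := Hsec a ha h1
  have hWl : W ≤ hyp l := by
    rcases sub_union (fun w hw => (hWW w hw).2.1) with h' | h'
    · exact h'
    · exact fun w hw => h w (h' hw)
  exact hFu (hWW u (subW_mem ha hW (fun w hw => (hWW w hw).1) hWl hu h2 hv h3)).2.2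

theorem dvd_swap [Infinite E] {P Q : MvPolynomial (Fin n) E} (hP : P.IsHomogeneous 1) (hQ : Q.IsHomogeneous 1) (hQ0 : Q ≠ 0)
    (h : P ∣ Q) : Q ∣ P := by
  obtain ⟨c, rfl⟩ := h
  have h1 := totalDegree_mul_of_isDomain (left_ne_zero_of_mul hQ0) (right_ne_zero_of_mul hQ0)
  rw [hQ.totalDegree hQ0, hP.totalDegree (left_ne_zero_of_mul hQ0)] at h1
  have h2 : c.totalDegree = 0 := by omega
  rw [totalDegree_eq_zero_iff_eq_C] at h2
  have h3 : coeff 0 c ≠ 0 := by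
    intro h; rw [h, map_zero] at h2; rw [h2, mul_zero] at hQ0; exact hQ0 rfl
  refine ⟨C (coeff 0 c)⁻¹, ?_⟩
  rw [h2, mul_assoc, ← C_mul, coeff_C]
  simp [h3]

theorem claimA [IsAlgClosed E] [CharZero E] (hn : 4 ≤ n) {F q : MvPolynomial (Fin n) E} {η : Fin n → E}
    (Hsec : ∀ a : Fin n → E, a ≠ 0 → η ⬝ᵥ a = 0 → ∃ W : Submodule E (Fin n → E), Module.finrank E W = n - 2 ∧ η ∈ W ∧
      ∀ u ∈ W, u ⬝ᵥ a = 0 ∧ eval u q = 0 ∧ eval u F = 0)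
    (NL : ∀ W : Submodule E (Fin n → E), Module.finrank E W = n - 1 → η ∈ W → ∃ u ∈ W, eval u F ≠ 0)
    (hq : q.IsHomogeneous 2) (hq0 : q ≠ 0) (hη : ∀ u, eval η (dd u q) = 0) : Irreducible q := by
  by_contra hirr
  obtain ⟨l, m, hl, hm, rfl⟩ := not_irr_hom2 hq hq0 hirr
  have hl0 := left_ne_zero_of_mul hq0
  have hm0 := right_ne_zero_of_mul hq0
  obtain ⟨lv, hlv⟩ := hom1_vec hl
  obtain ⟨mv, hmv⟩ := hom1_vec hm
  have hlv0 := vec_ne hlv hl0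
  have hmv0 := vec_ne hmv hm0
  have hder : ∀ u, eval η l * eval u m + eval η m * eval u l = 0 := by
    intro u
    have := hη u
    rw [dd_mul, map_add, map_mul, map_mul, hom1_dd hl, hom1_dd hm, eval_C, eval_C] at this
    exact this
  have hηη : eval η l * eval η m = 0 := by
    have := hder η
    have h2 : (2:E) * (eval η l * eval η m) = 0 := by linear_combination this
    exact (mul_eq_zero.1 h2).resolve_left two_ne_zero
  have hηlm : eval η l = 0 ∧ eval η m = 0 := by
    rcases mul_eq_zero.1 hηη with h | h
    · refine ⟨h, ?_⟩
      obtain ⟨v, hv⟩ := exists_nonperp hlv0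
      have := hder v
      rw [h, zero_mul, zero_add, hlv v] at this
      exact (mul_eq_zero.1 this).resolve_right hv
    · refine ⟨?_, h⟩
      obtain ⟨v, hv⟩ := exists_nonperp hmv0
      have := hder v
      rw [h, zero_mul, add_zero, hmv v] at this
      exact (mul_eq_zero.1 this).resolve_right hv
  have hηl : η ⬝ᵥ lv = 0 := by rw [← hlv]; exact hηlm.1
  have hηm : η ⬝ᵥ mv = 0 := by rw [← hmv]; exact hηlm.2
  have Hs : ∀ a : Fin n → E, a ≠ 0 → η ⬝ᵥ a = 0 → ∃ W : Submodule E (Fin n → E), Module.finrank E W = n - 2 ∧ η ∈ W ∧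
      ∀ u ∈ W, u ⬝ᵥ a = 0 ∧ (u ⬝ᵥ lv) * (u ⬝ᵥ mv) = 0 ∧ eval u F = 0 := by
    intro a ha hηa
    obtain ⟨W, h1, h2, h3⟩ := Hsec a ha hηa
    refine ⟨W, h1, h2, fun u hu => ?_⟩
    obtain ⟨h4, h5, h6⟩ := h3 u hu
    rw [map_mul, hlv, hmv] at h5
    exact ⟨h4, h5, h6⟩
  have Hs' : ∀ a : Fin n → E, a ≠ 0 → η ⬝ᵥ a = 0 → ∃ W : Submodule E (Fin n → E), Module.finrank E W = n - 2 ∧ η ∈ W ∧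
      ∀ u ∈ W, u ⬝ᵥ a = 0 ∧ (u ⬝ᵥ mv) * (u ⬝ᵥ lv) = 0 ∧ eval u F = 0 := by
    simpa only [mul_comm] using Hs
  have hlF : ¬ l ∣ F := by
    rintro ⟨c, rfl⟩
    obtain ⟨u, hu, hFu⟩ := NL _ (hyp_rank hlv0) hηl
    apply hFu
    rw [map_mul, hlv, mem_hyp.1 hu, zero_mul]
  have hmF : ¬ m ∣ F := by
    rintro ⟨c, rfl⟩
    obtain ⟨u, hu, hFu⟩ := NL _ (hyp_rank hmv0) hηm
    apply hFu
    rw [map_mul, hmv, mem_hyp.1 hu, zero_mul]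
  have hlp := hom1_prime hl hl0
  have hmp := hom1_prime hm hm0
  by_cases hlm : l ∣ m
  · have hml := dvd_swap hl hm hm0 hlm
    refine claimA_eq hn Hs NL hlv0 hηl fun x hx => ?_
    obtain ⟨c, hc⟩ := hml
    rw [← hlv, hc, map_mul, hmv, hx, zero_mul]
  · have hml : ¬ m ∣ l := fun h => hlm (dvd_swap hm hl hl0 h)
    have e1 : ∃ u, eval u l = 0 ∧ eval u (F * m) ≠ 0 := by
      by_contra hc
      push Not at hc
      rcases hlp.dvd_or_dvd (nullst hlp hc) with h | h
      · exact hlF h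
      · exact hlm h
    have e2 : ∃ u, eval u m = 0 ∧ eval u (F * l) ≠ 0 := by
      by_contra hc
      push Not at hc
      rcases hmp.dvd_or_dvd (nullst hmp hc) with h | h
      · exact hmF h
      · exact hml h
    obtain ⟨u, hu1, hu2⟩ := e1
    obtain ⟨v, hv1, hv2⟩ := e2
    rw [map_mul, hmv] at hu2
    rw [map_mul, hlv] at hv2
    rw [hlv] at hu1
    rw [hmv] at hv1
    obtain ⟨a, ha, h1, h2, h3⟩ := exists_perp hn η u v
    obtain ⟨W, hW, hηW, hWW⟩ := Hs a ha h1
    rcases sub_union (fun w hw => (hWW w hw).2.1) with h' | h'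
    · exact left_ne_zero_of_mul hu2 (hWW u (subW_mem ha hW (fun w hw => (hWW w hw).1) h' hu1 h2 (right_ne_zero_of_mul hv2) h3)).2.2
    · exact left_ne_zero_of_mul hv2 (hWW v (subW_mem ha hW (fun w hw => (hWW w hw).1) h' hv1 h3 (right_ne_zero_of_mul hu2) h2)).2.2

end

section
variable {E : Type} [Field E] [IsAlgClosed E] [CharZero E] {n : ℕ}

theorem two_sq_red {h1 h2 : MvPolynomial (Fin n) E} (H1 : h1.IsHomogeneous 1) (H2 : h2.IsHomogeneous 1) (α β : E) :
    Red (C α * h1 ^ 2 + C β * h2 ^ 2) 2 := by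
  obtain ⟨a, ha⟩ := IsAlgClosed.exists_pow_nat_eq α (n := 2) two_pos
  obtain ⟨b, hb⟩ := IsAlgClosed.exists_pow_nat_eq (-β) (n := 2) two_pos
  have hdeg : ∀ c : E, (C a * h1 + C c * h2).totalDegree < 2 := by
    intro c
    have : (C a * h1 + C c * h2).IsHomogeneous 1 := by
      apply IsHomogeneous.add
      · simpa using (isHomogeneous_C _ a).mul H1
      · simpa using (isHomogeneous_C _ c).mul H2
    have := this.totalDegree_le
    omega
  refine ⟨C a * h1 + C b * h2, C a * h1 + C (-b) * h2, ?_, hdeg _, hdeg _⟩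
  have e : β = - b ^ 2 := by rw [hb]; ring
  rw [← ha, e]
  simp only [map_pow, map_neg]
  ring

theorem q_scale {q : MvPolynomial (Fin n) E} (hq : q.IsHomogeneous 2) (c : E) (u : Fin n → E) :
    eval (c • u) q = c ^ 2 * eval u q := eval_smul_hom hq c u

theorem triple {q : MvPolynomial (Fin n) E} (hq : q.IsHomogeneous 2) (hI : Irreducible q) :
    ∃ u1 u2 u3 : Fin n → E, eval u1 q ≠ 0 ∧ eval u2 q ≠ 0 ∧ eval u3 q ≠ 0 ∧
      eval u2 (dd u1 q) = 0 ∧ eval u3 (dd u1 q) = 0 ∧ eval u3 (dd u2 q) = 0 := by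
  have hnR := irr_not_Red hI (hq.totalDegree hI.ne_zero)
  have h1 : ∃ u, eval u q ≠ 0 := by
    by_contra hc; push Not at hc
    exact hI.ne_zero (MvPolynomial.funext fun x => by rw [hc, map_zero])
  obtain ⟨u1, hu1⟩ := h1
  have H1 := dd_hom u1 hq
  have h2 : ∃ z, eval z q - (4 * eval u1 q)⁻¹ * eval z (dd u1 q) ^ 2 ≠ 0 := by
    by_contra hc; push Not at hc
    apply hnR
    convert two_sq_red (dd_hom u1 hq) H1 (4 * eval u1 q)⁻¹ 0 using 1
    apply MvPolynomial.funext
    intro z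
    have := hc z
    simp
    linear_combination this
  obtain ⟨z, hz⟩ := h2
  have h4 : (4 : E) ≠ 0 := by norm_num
  have h20 : (2 : E) ≠ 0 := by norm_num
  have proj1 : ∀ (u z : Fin n → E), eval u q ≠ 0 →
      eval (z + (-(eval z (dd u q)) / (2 * eval u q)) • u) (dd u q) = 0 ∧
      eval (z + (-(eval z (dd u q)) / (2 * eval u q)) • u) q = eval z q - (4 * eval u q)⁻¹ * eval z (dd u q) ^ 2 := by
    intro u z hu
    constructor
    · rw [hom1_add (dd_hom u hq), eval_smul_hom (dd_hom u hq), dd_euler hq]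
      push_cast
      field_simp
      ring
    · rw [q_add hq, q_scale hq, eval_smul_hom (dd_hom z hq), B_symm hq z u, show 2 - 1 = 1 from rfl, pow_one]
      field_simp
      ring
  obtain ⟨p1, p2⟩ := proj1 u1 z hu1
  set u2 := z + (-(eval z (dd u1 q)) / (2 * eval u1 q)) • u1 with hu2
  rw [← p2] at hz
  clear_value u2
  have h3 : ∃ y, eval y q - (4 * eval u1 q)⁻¹ * eval y (dd u1 q) ^ 2 - (4 * eval u2 q)⁻¹ * eval y (dd u2 q) ^ 2 ≠ 0 := by
    by_contra hc; push Not at hc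
    apply hnR
    convert two_sq_red (dd_hom u1 hq) (dd_hom u2 hq) (4 * eval u1 q)⁻¹ (4 * eval u2 q)⁻¹ using 1
    apply MvPolynomial.funext
    intro z
    have := hc z
    simp only [map_add, map_mul, map_pow, eval_C]
    linear_combination this
  obtain ⟨y, hy⟩ := h3
  obtain ⟨r1, r2⟩ := proj1 u1 y hu1
  obtain ⟨s1, s2⟩ := proj1 u2 (y + (-(eval y (dd u1 q)) / (2 * eval u1 q)) • u1) hz
  have e : eval (y + (-(eval y (dd u1 q)) / (2 * eval u1 q)) • u1) (dd u2 q) = eval y (dd u2 q) := by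
    rw [hom1_add (dd_hom u2 hq), eval_smul_hom (dd_hom u2 hq), B_symm hq u2 u1, p1]; ring
  refine ⟨u1, u2, _, hu1, hz, ?_, p1, ?_, s1⟩
  · rw [s2, r2, e]; exact hy
  · rw [hom1_add (dd_hom u1 hq), r1, eval_smul_hom (dd_hom u1 hq), p1]; ring

theorem claimB (hn : 4 ≤ n) {G q : MvPolynomial (Fin n) E} {η : Fin n → E}
    (Hsec : ∀ a : Fin n → E, a ≠ 0 → η ⬝ᵥ a = 0 → ∃ W : Submodule E (Fin n → E), Module.finrank E W = n - 2 ∧ η ∈ W ∧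
      ∀ u ∈ W, u ⬝ᵥ a = 0 ∧ eval u q = 0 ∧ eval u G = 0)
    (hq : q.IsHomogeneous 2) (hI : Irreducible q) (hη : ∀ u, eval η (dd u q) = 0) : q ∣ G := by
  have hp : Prime q := UniqueFactorizationMonoid.irreducible_iff_prime.1 hI
  have hnR := irr_not_Red hI (hq.totalDegree hI.ne_zero)
  have key : ∀ z, eval z q = 0 → dd z q ≠ 0 → eval z G = 0 := by
    intro z hz hdz
    have H1 := dd_hom z hq
    obtain ⟨a, ha⟩ := hom1_vec H1
    have ha0 := vec_ne ha hdz
    obtain ⟨W, hW, hηW, hWW⟩ := Hsec a ha0 (by rw [← ha]; exact hη z)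
    by_cases hzW : z ∈ W
    · exact (hWW z hzW).2.2
    exfalso
    have hza : z ⬝ᵥ a = 0 := by rw [← ha, dd_euler hq, hz, mul_zero]
    have hle : W ⊔ Submodule.span E {z} ≤ hyp a := by
      refine sup_le (fun w hw => (hWW w hw).1) ?_
      rw [Submodule.span_singleton_le_iff_mem]; exact hza
    have hlt : W < W ⊔ Submodule.span E {z} := by
      refine lt_of_le_of_ne le_sup_left fun h => hzW ?_
      rw [h]
      exact Submodule.mem_sup_right (Submodule.mem_span_singleton_self z)
    have h3 := Submodule.finrank_lt_finrank_of_lt hlt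
    have heq := Submodule.eq_of_le_of_finrank_le hle (by rw [hyp_rank ha0]; omega)
    have hdvd : dd z q ∣ q := by
      apply nullst (hom1_prime H1 hdz)
      intro x hx
      rw [ha] at hx
      have hx' : x ∈ W ⊔ Submodule.span E {z} := by rw [heq]; exact hx
      obtain ⟨w, hw, y, hy, rfl⟩ := Submodule.mem_sup.1 hx'
      obtain ⟨c, rfl⟩ := Submodule.mem_span_singleton.1 hy
      rw [q_add hq, q_scale hq, hz, (hWW w hw).2.1, eval_smul_hom (dd_hom w hq), B_symm hq w z, ha, (hWW w hw).1]
      simp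
    obtain ⟨c, hc⟩ := hdvd
    apply hnR
    refine ⟨_, c, hc, ?_, ?_⟩
    · have := H1.totalDegree_le; omega
    · have h5 := totalDegree_mul_of_isDomain (f := dd z q) (g := c) hdz (by rintro rfl; rw [mul_zero] at hc; exact hI.ne_zero hc)
      rw [← hc, hq.totalDegree hI.ne_zero, H1.totalDegree hdz] at h5
      omega
  have hu : ∃ u, dd u q ≠ 0 := by
    obtain ⟨i, hi⟩ := pd_zero hq two_pos hI.ne_zero
    classical
    refine ⟨Pi.single i 1, ?_⟩
    rw [dd_eq, Finset.sum_eq_single i]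
    · simpa using hi
    · intro b _ hb; simp [hb]
    · simp
  obtain ⟨u, hu⟩ := hu
  have : q ∣ G * dd u q := by
    apply nullst hp
    intro x hx
    rw [map_mul]
    by_cases hdx : dd x q = 0
    · rw [B_symm hq u x, hdx, map_zero, mul_zero]
    · rw [key x hx hdx, zero_mul]
  rcases hp.dvd_or_dvd this with h | h
  · exact h
  · exact absurd h (not_dvd_hom hq (dd_hom u hq) hu (by norm_num))
end

section
variable {E : Type} [Field E] [CharZero E] {N : ℕ}

noncomputable def tay (ξ : Fin N → E) : MvPolynomial (Fin N) E →ₐ[E] MvPolynomial (Fin N) E := aeval (fun i => X i + C (ξ i))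

noncomputable def fj (ξ : Fin N → E) (F : MvPolynomial (Fin N) E) (j : ℕ) : MvPolynomial (Fin N) E :=
  homogeneousComponent j (tay ξ F)

theorem fj_hom (ξ : Fin N → E) (F : MvPolynomial (Fin N) E) (j : ℕ) : (fj ξ F j).IsHomogeneous j :=
  homogeneousComponent_isHomogeneous _ _

theorem eval_tay (ξ w : Fin N → E) (F : MvPolynomial (Fin N) E) : eval w (tay ξ F) = eval (ξ + w) F := by
  unfold tay
  induction F using MvPolynomial.induction_on with
  | C c => rw [algHom_C]; simp [algebraMap_eq]
  | add p q hp hq => simp only [map_add, hp, hq]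
  | mul_X p i hp => rw [map_mul, map_mul, hp, aeval_X]; simp [add_comm]

theorem tay_C (ξ : Fin N → E) (c : E) : tay ξ (C c) = C c := by
  unfold tay; rw [algHom_C]; rfl

theorem tay_X (ξ : Fin N → E) (i : Fin N) : tay ξ (X i) = X i + C (ξ i) := by
  unfold tay; rw [aeval_X]

theorem dd_C (w : Fin N → E) (c : E) : dd w (C c) = 0 := by
  rw [dd_eq]; simp

theorem dd_X (w : Fin N → E) (i : Fin N) : dd w (X i) = C (w i) := by
  unfold dd; rw [mkDerivation_X]

theorem dd_tay (ξ w : Fin N → E) (F : MvPolynomial (Fin N) E) : dd w (tay ξ F) = tay ξ (dd w F) := by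
  induction F using MvPolynomial.induction_on with
  | C c => rw [tay_C, dd_C, map_zero]
  | add p q hp hq => simp only [map_add, hp, hq]
  | mul_X p i hp => rw [map_mul, dd_mul, dd_mul, map_add, map_mul, map_mul, hp, tay_X, map_add, dd_C, dd_X, tay_C, add_zero]

theorem line_coeff (ξ w : Fin N → E) (F : MvPolynomial (Fin N) E) (j : ℕ) :
    (aeval (fun i => Polynomial.C (ξ i) + Polynomial.X * Polynomial.C (w i)) F : Polynomial E).coeff j = eval w (fj ξ F j) := by
  have h : (aeval (fun i => Polynomial.C (ξ i) + Polynomial.X * Polynomial.C (w i)) F : Polynomial E) =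
      ∑ k ∈ Finset.range ((tay ξ F).totalDegree + 1), Polynomial.C (eval w (fj ξ F k)) * Polynomial.X ^ k := by
    apply Polynomial.funext
    intro s
    rw [line_eval, ← eval_tay, ← sum_homogeneousComponent (tay ξ F), map_sum, Polynomial.eval_finsetSum]
    refine Finset.sum_congr (by rw [sum_homogeneousComponent]) fun k _ => ?_
    rw [eval_smul_hom (homogeneousComponent_isHomogeneous k _)]
    rw [Polynomial.eval_mul, Polynomial.eval_C, Polynomial.eval_pow, Polynomial.eval_X, mul_comm]; rfl
  rw [h, Polynomial.finsetSum_coeff]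
  simp only [Polynomial.coeff_C_mul, Polynomial.coeff_X_pow, mul_ite, mul_one, mul_zero]
  rw [Finset.sum_ite_eq]
  split_ifs with hj
  · rfl
  · unfold fj
    rw [homogeneousComponent_eq_zero, map_zero]
    simpa using hj

theorem fj_vanish (ξ w : Fin N → E) (F : MvPolynomial (Fin N) E) (h : ∀ s : E, eval (ξ + s • w) F = 0) (j : ℕ) :
    eval w (fj ξ F j) = 0 := by
  rw [← line_coeff]
  have : (aeval (fun i => Polynomial.C (ξ i) + Polynomial.X * Polynomial.C (w i)) F : Polynomial E) = 0 := by
    apply Polynomial.funext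
    intro s
    rw [line_eval, h, Polynomial.eval_zero]
  rw [this, Polynomial.coeff_zero]

theorem fj_zero (ξ : Fin N → E) (F : MvPolynomial (Fin N) E) : fj ξ F 0 = C (eval ξ F) := by
  unfold fj
  rw [homogeneousComponent_zero]
  have := eval_tay ξ 0 F
  rw [add_zero] at this
  rw [← this, ← constantCoeff_eq, constantCoeff_eq, eval_zero, constantCoeff_eq]

theorem fj_one (ξ w : Fin N → E) (F : MvPolynomial (Fin N) E) : eval w (fj ξ F 1) = eval ξ (dd w F) := by
  have h1 := dd_hc w (tay ξ F) 0
  have h2 := hom1_dd (fj_hom ξ F 1) w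
  unfold fj at h2 ⊢
  rw [zero_add] at h1
  rw [h2, dd_tay] at h1
  have := fj_zero ξ (dd w F)
  unfold fj at this
  rw [this] at h1
  exact (C_injective _ _ h1).symm

theorem fj_euler {d : ℕ} (ξ : Fin N → E) {F : MvPolynomial (Fin N) E} (hF : F.IsHomogeneous d) (j : ℕ) :
    dd ξ (fj ξ F (j+1)) = C ((d : E) - j) * fj ξ F j := by
  let Θ : MvPolynomial (Fin N) E →ₗ[E] MvPolynomial (Fin N) E := ∑ i, (LinearMap.mulLeft E (X i)).comp (pderiv i).toLinearMap
  have hΘ : ∀ P, Θ P = ∑ i, X i * pderiv i P := by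
    intro P; simp [Θ]
  have h1 : Θ (tay ξ F) + dd ξ (tay ξ F) = C (d : E) * tay ξ F := by
    have := congrArg (tay ξ) hF.sum_X_mul_pderiv
    rw [map_sum, nsmul_eq_mul, map_mul, map_natCast] at this
    rw [hΘ, dd_eq, ← Finset.sum_add_distrib]
    rw [show (C (d : E) : MvPolynomial (Fin N) E) = (d : MvPolynomial (Fin N) E) by simp, ← this]
    refine Finset.sum_congr rfl fun i _ => ?_
    classical
    have h := dd_tay ξ (Pi.single i 1) F
    have e : ∀ P : MvPolynomial (Fin N) E, dd (Pi.single i 1) P = pderiv i P := by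
      intro P
      rw [dd_eq, Finset.sum_eq_single i]
      · simp
      · intro b _ hb; simp [hb]
      · simp
    rw [e, e] at h
    rw [map_mul, tay_X, h]; ring
  have h2 := congrArg (homogeneousComponent j) h1
  rw [map_add, homogeneousComponent_C_mul, dd_hc] at h2
  have h3 : homogeneousComponent j (Θ (tay ξ F)) = C (j : E) * fj ξ F j := by
    conv_lhs => rw [← sum_homogeneousComponent (tay ξ F), map_sum, map_sum]
    have : ∀ k ∈ Finset.range ((tay ξ F).totalDegree + 1), homogeneousComponent j (Θ (homogeneousComponent k (tay ξ F))) =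
        if k = j then C (j : E) * fj ξ F j else 0 := by
      intro k _
      rw [hΘ, (homogeneousComponent_isHomogeneous k (tay ξ F)).sum_X_mul_pderiv, map_nsmul,
        homogeneousComponent_of_mem (homogeneousComponent_isHomogeneous k (tay ξ F))]
      by_cases h : j = k
      · subst h; simp [fj]
      · rw [if_neg h, if_neg (Ne.symm h)]; simp
    rw [Finset.sum_congr rfl this, Finset.sum_ite_eq']
    split_ifs with h
    · rfl
    · unfold fj
      rw [homogeneousComponent_eq_zero, mul_zero]
      simpa using h
  rw [h3] at h2
  unfold fj at h2 ⊢
  rw [map_sub, sub_mul, ← h2]; ring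

theorem fj_top {d : ℕ} (ξ : Fin N → E) {F : MvPolynomial (Fin N) E} (hF : F.IsHomogeneous d) : fj ξ F d = F := by
  apply MvPolynomial.funext
  intro w
  rw [← line_coeff]
  exact (lead_aux F hF ξ w).2

/-- coefficientwise derivation -/
noncomputable def cD (D : Derivation ℤ E E) (P : MvPolynomial (Fin N) E) : MvPolynomial (Fin N) E :=
  ∑ m ∈ P.support, monomial m (D (coeff m P))

variable (D : Derivation ℤ E E)

theorem coeff_cD (P : MvPolynomial (Fin N) E) (m : Fin N →₀ ℕ) : coeff m (cD D P) = D (coeff m P) := by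
  classical
  unfold cD
  rw [coeff_sum]
  simp only [coeff_monomial]
  rw [Finset.sum_ite_eq']
  split_ifs with h
  · rfl
  · rw [notMem_support_iff.1 h, map_zero]

theorem cD_add (P Q : MvPolynomial (Fin N) E) : cD D (P + Q) = cD D P + cD D Q := by
  ext m; simp only [coeff_add, coeff_cD, map_add]

theorem cD_zero : cD D (0 : MvPolynomial (Fin N) E) = 0 := by
  ext m; simp [coeff_cD]

theorem cD_sub (P Q : MvPolynomial (Fin N) E) : cD D (P - Q) = cD D P - cD D Q := by
  ext m; simp only [coeff_sub, coeff_cD, map_sub]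

theorem cD_mul (P Q : MvPolynomial (Fin N) E) : cD D (P * Q) = cD D P * Q + P * cD D Q := by
  classical
  ext m
  simp only [coeff_add, coeff_cD, coeff_mul, map_sum, Derivation.leibniz, smul_eq_mul, ← Finset.sum_add_distrib]
  refine Finset.sum_congr rfl fun x _ => by ring

theorem cD_C (c : E) : cD D (C c : MvPolynomial (Fin N) E) = C (D c) := by
  classical
  ext m; simp only [coeff_cD, coeff_C, apply_ite, map_zero]
  split_ifs <;> simp

theorem cD_X (i : Fin N) : cD D (X i : MvPolynomial (Fin N) E) = 0 := by
  classical
  ext m; simp only [coeff_cD, coeff_X]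
  rw [coeff_zero]
  split_ifs <;> simp

theorem cD_hc (P : MvPolynomial (Fin N) E) (j : ℕ) : cD D (homogeneousComponent j P) = homogeneousComponent j (cD D P) := by
  classical
  ext m; simp only [coeff_cD, coeff_homogeneousComponent]
  split_ifs <;> simp

theorem cD_hom {P : MvPolynomial (Fin N) E} {j : ℕ} (h : P.IsHomogeneous j) : (cD D P).IsHomogeneous j := by
  rw [← homogeneousComponent_eq_self h, cD_hc]
  exact homogeneousComponent_isHomogeneous _ _

theorem cD_tay (ξ w : Fin N → E) (hD : ∀ i, D (ξ i) = w i) (P : MvPolynomial (Fin N) E) :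
    cD D (tay ξ P) = dd w (tay ξ P) + tay ξ (cD D P) := by
  induction P using MvPolynomial.induction_on with
  | C c => rw [tay_C, dd_C, cD_C, tay_C, zero_add]
  | add p q hp hq => simp only [map_add, cD_add, hp, hq]; ring
  | mul_X p i hp =>
    rw [map_mul, cD_mul, dd_mul, hp, tay_X, cD_add, cD_C, cD_X, map_add, dd_C, dd_X, cD_mul, cD_X, map_add, map_mul, map_mul,
      tay_X, map_zero, hD]
    ring

theorem cD_fj (ξ w : Fin N → E) (hD : ∀ i, D (ξ i) = w i) (F : MvPolynomial (Fin N) E) (hF : cD D F = 0) (j : ℕ) :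
    cD D (fj ξ F j) = dd w (fj ξ F (j+1)) := by
  unfold fj
  rw [cD_hc, cD_tay D ξ w hD, hF, map_zero, add_zero, dd_hc]

end

noncomputable def sbA {R : Type*} [CommRing R] {r N : ℕ} (M : Matrix (Fin r) (Fin N) R) :
    MvPolynomial (Fin N) R →ₐ[R] MvPolynomial (Fin r) R := aeval (fun i => ∑ j, C (M j i) * X j)

theorem sbA_eq {R : Type*} [CommRing R] {r N : ℕ} (M : Matrix (Fin r) (Fin N) R) (P : MvPolynomial (Fin N) R) : sbA M P = sb M P := rfl

theorem sbA_C {R : Type*} [CommRing R] {r N : ℕ} (M : Matrix (Fin r) (Fin N) R) (c : R) : sbA M (C c) = C c := by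
  unfold sbA; rw [algHom_C]; rfl

structure Sit {E : Type} [Field E] {n : ℕ} (d : ℕ) (F L q f3 : MvPolynomial (Fin (n+1)) E)
    (M : Matrix (Fin n) (Fin (n+1)) E) (Li : Matrix (Fin (n+1)) (Fin n) E) : Prop where
  hF : F.IsHomogeneous d
  hL : L.IsHomogeneous 1
  hq : q.IsHomogeneous 2
  h3 : f3.IsHomogeneous 3
  inv : M * Li = 1
  barL : sbA M L = 0
  ker : ∀ P, sbA M P = 0 → L ∣ P
  irr : Irreducible (sbA M q)
  dvd3 : sbA M q ∣ sbA M f3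
  dvdF : sbA M q ∣ sbA M F
  nsq : ¬ (sbA M q) * (sbA M q) ∣ sbA M F
  der : ∀ u : Fin n → E, ∃ D : Derivation ℤ E E, cD D F = 0 ∧ cD D L = dd (Matrix.vecMul u M) q ∧ cD D q = dd (Matrix.vecMul u M) f3

theorem setup {E : Type} [Field E] [IsAlgClosed E] [CharZero E] {n d : ℕ} (hn : 4 ≤ n) (hd : 3 ≤ d)
    (F : MvPolynomial (Fin (n+1)) E) (hF : F.IsHomogeneous d) (hR : ¬ Red F d) (ξ : Fin (n+1) → E) (hξ : eval ξ F = 0)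
    (hξ0 : ξ ≠ 0) (H : ∀ a x, a ≠ 0 → x ≠ 0 → x ⬝ᵥ a = 0 → eval x F = 0 → LD F a x (n-2)) (hNL : ¬ LD F 0 ξ (n-1))
    (hD : ∀ w, eval ξ (dd w F) = 0 → ∃ D : Derivation ℤ E E, cD D F = 0 ∧ ∀ i, D (ξ i) = w i) (hl : fj ξ F 1 ≠ 0) :
    ∃ M Li, Sit d F (fj ξ F 1) (fj ξ F 2) (fj ξ F 3) M Li := by
  classical
  obtain ⟨lv, hlv⟩ := hom1_vec (fj_hom ξ F 1)
  have hlv0 := vec_ne hlv hl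
  have hLp := hom1_prime (fj_hom ξ F 1) hl
  obtain ⟨M, Li, -, hMLi, hMl, -, -⟩ := (LD_iff (0 : MvPolynomial (Fin (n+1)) E) lv 0 n).2
    ⟨hyp lv, by rw [hyp_rank hlv0]; rfl, Submodule.zero_mem _, fun z hz => hz, fun z _ => by simp⟩
  have inT : ∀ u : Fin n → E, eval (Matrix.vecMul u M) (fj ξ F 1) = 0 := by
    intro u
    rw [hlv, ← Matrix.dotProduct_mulVec, hMl, dotProduct_zero]
  have barL : sbA M (fj ξ F 1) = 0 := by
    apply MvPolynomial.funext
    intro c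
    rw [sbA_eq, eval_sb, inT, map_zero]
  have hker : ∀ P, sbA M P = 0 → fj ξ F 1 ∣ P := by
    intro P hP
    apply nullst hLp
    intro x hx
    rw [hlv] at hx
    obtain ⟨c, rfl⟩ := row_space M Li lv hlv0 hMLi hMl x hx
    rw [← eval_sb, ← sbA_eq, hP, map_zero]
  have hLξ : eval ξ (fj ξ F 1) = 0 := by
    rw [fj_one, dd_euler hF, hξ, mul_zero]
  obtain ⟨η, hη⟩ := row_space M Li lv hlv0 hMLi hMl ξ (by rw [← hlv, hLξ])
  have hder : ∀ u : Fin n → E, ∃ D : Derivation ℤ E E, cD D F = 0 ∧ ∀ j, cD D (fj ξ F j) = dd (Matrix.vecMul u M) (fj ξ F (j+1)) := by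
    intro u
    obtain ⟨D, h1, h2⟩ := hD (Matrix.vecMul u M) (by rw [← fj_one, inT])
    exact ⟨D, h1, fun j => cD_fj D ξ _ h2 F h1 j⟩
  have hqh : (sbA M (fj ξ F 2)).IsHomogeneous 2 := sb_hom M (fj_hom ξ F 2)
  have hηq : ∀ u, eval η (dd u (sbA M (fj ξ F 2))) = 0 := by
    intro u
    rw [B_symm hqh, sbA_eq, dd_sb, hη, fj_euler ξ hF 1, ← sbA_eq, map_mul, barL, mul_zero, map_zero]
  have hF0 : F ≠ 0 := by
    rintro rfl
    exact hR ⟨0, 0, by simp, by simp; omega, by simp; omega⟩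
  have hLF : ¬ fj ξ F 1 ∣ F := by
    rintro ⟨c, hc⟩
    apply hR
    refine ⟨_, c, hc, ?_, ?_⟩
    · have := (fj_hom ξ F 1).totalDegree_le; omega
    · have hc0 : c ≠ 0 := by rintro rfl; rw [mul_zero] at hc; exact hF0 hc
      have h5 := totalDegree_mul_of_isDomain hl hc0
      rw [← hc, hF.totalDegree hF0, (fj_hom ξ F 1).totalDegree hl] at h5
      omega
  have hq0 : sbA M (fj ξ F 2) ≠ 0 := by
    intro hq0
    have hall : ∀ j, sbA M (fj ξ F (j+1)) = 0 := by
      intro j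
      induction j with
      | zero => exact barL
      | succ j ih =>
        apply MvPolynomial.funext
        intro u
        obtain ⟨D, h1, h2⟩ := hder u
        obtain ⟨c, hc⟩ := hker _ ih
        have h3 := dd_sb M (fj ξ F (j+1+1)) u
        rw [← h2, hc, cD_mul, ← sbA_eq, ← sbA_eq, map_add, map_mul, map_mul, barL, zero_mul, add_zero, h2, sbA_eq M (dd (Matrix.vecMul u M) _), ← dd_sb,
          ← sbA_eq, hq0, map_zero, zero_mul] at h3
        have h4 := dd_euler (sb_hom M (fj_hom ξ F (j+1+1))) u
        rw [← sbA_eq, h3, map_zero] at h4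
        rw [map_zero]
        exact (mul_eq_zero.1 h4.symm).resolve_left (Nat.cast_ne_zero.2 (by omega))
    have := hall (d-1)
    rw [show d - 1 + 1 = d by omega, fj_top ξ hF] at this
    exact hLF (hker F this)
  have hinj : Function.Injective (Matrix.vecMulLinear M) := by
    intro x y hxy
    have := congrArg (fun w => Matrix.vecMul w Li) hxy
    simpa [Matrix.vecMul_vecMul, hMLi] using this
  have Hsec : ∀ a : Fin n → E, a ≠ 0 → η ⬝ᵥ a = 0 → ∃ W : Submodule E (Fin n → E), Module.finrank E W = n - 2 ∧ η ∈ W ∧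
      ∀ u ∈ W, u ⬝ᵥ a = 0 ∧ ∀ j, eval u (sbA M (fj ξ F j)) = 0 := by
    intro a ha hηa
    have hMa : M.mulVec (Li.mulVec a) = a := by rw [Matrix.mulVec_mulVec, hMLi, Matrix.one_mulVec]
    obtain ⟨W, hW1, hW2, hW3, hW4⟩ := (LD_iff F (Li.mulVec a) ξ (n-2)).1 (H (Li.mulVec a) ξ
      (by intro h; rw [h, Matrix.mulVec_zero] at hMa; exact ha hMa.symm) hξ0
      (by rw [← hη, ← Matrix.dotProduct_mulVec, hMa, hηa]) hξ)
    have hv : ∀ w ∈ W, ∀ j, eval w (fj ξ F j) = 0 := by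
      intro w hw j
      apply fj_vanish
      intro s
      exact hW4 _ (W.add_mem hW2 (W.smul_mem s hw))
    refine ⟨W.comap (Matrix.vecMulLinear M), ?_, ?_, ?_⟩
    · have hmc : (W.comap (Matrix.vecMulLinear M)).map (Matrix.vecMulLinear M) = W := by
        apply Submodule.map_comap_eq_of_le
        intro w hw
        obtain ⟨c, hc⟩ := row_space M Li lv hlv0 hMLi hMl w (by rw [← hlv]; exact hv w hw 1)
        exact ⟨c, hc⟩
      rw [← hW1]
      conv_rhs => rw [← hmc]
      exact (Submodule.equivMapOfInjective _ hinj _).finrank_eq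
    · change Matrix.vecMul η M ∈ W
      rw [hη]; exact hW2
    · intro u hu
      have hu : Matrix.vecMul u M ∈ W := hu
      constructor
      · have := hW3 _ hu
        rwa [← Matrix.dotProduct_mulVec, hMa] at this
      · intro j
        rw [sbA_eq, eval_sb]; exact hv _ hu j
  have NL : ∀ W : Submodule E (Fin n → E), Module.finrank E W = n - 1 → η ∈ W → ∃ u ∈ W, eval u (sbA M F) ≠ 0 := by
    intro W hW hηW
    by_contra hc
    push Not at hc
    apply hNL
    rw [LD_iff]
    refine ⟨W.map (Matrix.vecMulLinear M), ?_, ⟨η, hηW, hη⟩, fun z _ => dotProduct_zero z, ?_⟩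
    · rw [← hW]; exact (Submodule.equivMapOfInjective _ hinj _).finrank_eq.symm
    · rintro _ ⟨u, hu, rfl⟩
      have := hc u hu
      rwa [sbA_eq, eval_sb] at this
  have hI : Irreducible (sbA M (fj ξ F 2)) := by
    refine claimA hn (F := sbA M F) (η := η) ?_ NL hqh hq0 hηq
    intro a ha hηa
    obtain ⟨W, h1, h2, h3⟩ := Hsec a ha hηa
    refine ⟨W, h1, h2, fun u hu => ⟨(h3 u hu).1, (h3 u hu).2 2, ?_⟩⟩
    have := (h3 u hu).2 d
    rwa [fj_top ξ hF] at this
  have hB : ∀ j, sbA M (fj ξ F 2) ∣ sbA M (fj ξ F j) := by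
    intro j
    refine claimB hn (η := η) ?_ hqh hI hηq
    intro a ha hηa
    obtain ⟨W, h1, h2, h3⟩ := Hsec a ha hηa
    exact ⟨W, h1, h2, fun u hu => ⟨(h3 u hu).1, (h3 u hu).2 2, (h3 u hu).2 j⟩⟩
  refine ⟨M, Li, hF, fj_hom _ _ _, fj_hom _ _ _, fj_hom _ _ _, hMLi, barL, hker, hI, hB 3, ?_, ?_, ?_⟩
  · have := hB d
    rwa [fj_top ξ hF] at this
  · rintro ⟨c, hc⟩
    have hex : ∃ u, eval u (sbA M (fj ξ F 2)) ≠ 0 := by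
      by_contra hc; push Not at hc
      exact hq0 (MvPolynomial.funext fun x => by rw [hc, map_zero])
    obtain ⟨u, hu⟩ := hex
    apply hu
    rw [sbA_eq, eval_sb, ← line_coeff]
    have hηη : eval η (sbA M (fj ξ F 2)) = 0 := by
      have := dd_euler hqh η
      rw [hηq] at this
      exact (mul_eq_zero.1 this.symm).resolve_left (by norm_num)
    have e : (aeval (fun i => Polynomial.C (ξ i) + Polynomial.X * Polynomial.C (Matrix.vecMul u M i)) F : Polynomial E) =
        Polynomial.X ^ 4 * (Polynomial.C (eval u (sbA M (fj ξ F 2)) ^ 2) *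
          (aeval (fun i => Polynomial.C (η i) + Polynomial.X * Polynomial.C (u i)) c : Polynomial E)) := by
      apply Polynomial.funext
      intro s
      rw [line_eval]
      have : ξ + s • Matrix.vecMul u M = Matrix.vecMul (η + s • u) M := by
        rw [Matrix.add_vecMul, Matrix.smul_vecMul, hη]
      rw [this, ← eval_sb, ← sbA_eq, hc]
      rw [map_mul, map_mul, q_add hqh, q_scale hqh, hηη, B_symm hqh, hηq, Polynomial.eval_mul, Polynomial.eval_mul, Polynomial.eval_pow, Polynomial.eval_X, Polynomial.eval_C,
        line_eval]
      ring
    rw [e, Polynomial.coeff_X_pow_mul']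
    simp
  · intro u
    obtain ⟨D, h1, h2⟩ := hder u
    exact ⟨D, h1, h2 1, h2 2⟩

section endgame
variable {E : Type} [Field E] [CharZero E] {n d : ℕ} {F L q f3 : MvPolynomial (Fin (n+1)) E}
  {M : Matrix (Fin n) (Fin (n+1)) E} {Li : Matrix (Fin (n+1)) (Fin n) E}

theorem hc_low {R : Type*} [CommRing R] {N a b : ℕ} {B : MvPolynomial (Fin N) R} (hB : B.IsHomogeneous a) (hab : b < a)
    (P : MvPolynomial (Fin N) R) : homogeneousComponent b (B * P) = 0 := by
  rw [← sum_homogeneousComponent P, Finset.mul_sum, map_sum]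
  refine Finset.sum_eq_zero fun i _ => ?_
  rw [homogeneousComponent_of_mem (hB.mul (homogeneousComponent_isHomogeneous i P)), if_neg (by omega)]

theorem Sit.surj (S : Sit d F L q f3 M Li) (P : MvPolynomial (Fin n) E) : ∃ P', sbA M P' = P :=
  ⟨sb Li P, by rw [sbA_eq, ← sb_mul, S.inv, sb_one]⟩

theorem Sit.prime (S : Sit d F L q f3 M Li) : Prime (sbA M q) := UniqueFactorizationMonoid.irreducible_iff_prime.1 S.irr

theorem Sit.L0 (S : Sit d F L q f3 M Li) : L ≠ 0 := by
  rintro rfl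
  have hD := hom1_vec S.hL
  have : ∀ P, sbA M P = 0 → P = 0 := fun P hP => by
    obtain ⟨c, hc⟩ := S.ker P hP
    rw [hc, zero_mul]
  obtain ⟨v, hv, hv0⟩ : ∃ v : Fin (n+1) → E, v ≠ 0 ∧ M.mulVec v = 0 := by
    have : ¬ Function.Injective (Matrix.mulVecLin M) := by
      intro h
      have := LinearMap.finrank_le_finrank_of_injective h
      simp at this
    rw [← LinearMap.ker_eq_bot, Submodule.eq_bot_iff] at this
    push Not at this
    obtain ⟨x, h1, h2⟩ := this
    exact ⟨x, h2, h1⟩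
  have h0 := this (∑ i, C (v i) * X i) (by
    apply MvPolynomial.funext
    intro c
    rw [sbA_eq, eval_sb, map_zero]
    have := Matrix.dotProduct_mulVec c M v
    rw [hv0, dotProduct_zero] at this
    simpa [dotProduct, mul_comm] using this.symm)
  apply hv
  funext i
  have := congrArg (eval (Pi.single i 1)) h0
  simpa [Pi.single_apply] using this

theorem Sit.Lp (S : Sit d F L q f3 M Li) : Prime L := hom1_prime S.hL S.L0

theorem Sit.barh (_ : Sit d F L q f3 M Li) (u : Fin n → E) : sbA M (dd (Matrix.vecMul u M) q) = dd u (sbA M q) := by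
  rw [sbA_eq, sbA_eq, dd_sb]

theorem Sit.ddL (S : Sit d F L q f3 M Li) (u : Fin n → E) : dd (Matrix.vecMul u M) L = 0 := by
  rw [hom1_dd S.hL, ← eval_sb, ← sbA_eq, S.barL, map_zero, C_0]

theorem cD_pow {N : ℕ} (D : Derivation ℤ E E) (P : MvPolynomial (Fin N) E) (k : ℕ) : cD D (P ^ (k+1)) = C ((k+1 : ℕ) : E) * P ^ k * cD D P := by
  induction k with
  | zero => simp
  | succ k ih => rw [pow_succ, cD_mul, ih]; push_cast; rw [map_add, map_add]; ring_nf; simp; ring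

theorem Sit.stepA (S : Sit d F L q f3 M Li) (D : Derivation ℤ E E) (hDF : cD D F = 0) {Q R T α β : MvPolynomial (Fin (n+1)) E} {k : ℕ}
    (hQ : sbA M Q = sbA M q) (hk : F = Q * R + L ^ (k+1) * T) (hDQ : cD D Q = α * Q + β * L ^ k) :
    sbA M q ∣ sbA M β * sbA M R + C ((k+1 : ℕ) : E) * sbA M (cD D L) * sbA M T := by
  have h1 : Q * (α * R + cD D R) + L ^ k * (β * R + C ((k+1 : ℕ) : E) * cD D L * T + L * cD D T) = 0 := by
    rw [← hDF]
    conv_rhs => rw [hk]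
    rw [cD_add, cD_mul, cD_mul, hDQ, cD_pow]
    ring
  have h2 : ¬ L ∣ Q := by
    rintro ⟨c, hc⟩
    rw [hc, map_mul, S.barL, zero_mul] at hQ
    exact S.irr.ne_zero hQ.symm
  have h3 : L ^ k ∣ Q * (α * R + cD D R) := by
    rw [eq_neg_of_add_eq_zero_left h1, dvd_neg]
    exact dvd_mul_right _ _
  obtain ⟨X', hX⟩ := S.Lp.pow_dvd_of_dvd_mul_left k h2 h3
  have h4 : Q * X' + (β * R + C ((k+1 : ℕ) : E) * cD D L * T + L * cD D T) = 0 := by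
    have : L ^ k * (Q * X' + (β * R + C ((k+1 : ℕ) : E) * cD D L * T + L * cD D T)) = 0 := by
      rw [← h1, hX]; ring
    exact (mul_eq_zero.1 this).resolve_left (pow_ne_zero _ S.L0)
  have h5 := congrArg (sbA M) h4
  simp only [map_add, map_mul, S.barL, zero_mul, add_zero, map_zero, hQ, sbA_C] at h5
  exact ⟨- sbA M X', by linear_combination h5⟩

theorem Sit.stepB (S : Sit d F L q f3 M Li) {Q R T m : MvPolynomial (Fin (n+1)) E} {k : ℕ}
    (hQ : sbA M Q = sbA M q) (hk : F = Q * R + L ^ (k+1) * T) (hd : sbA M q ∣ sbA M T + sbA M m * sbA M R) :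
    ∃ R' T', F = (Q - m * L ^ (k+1)) * R' + L ^ (k+2) * T' ∧ sbA M (Q - m * L ^ (k+1)) = sbA M q ∧ sbA M R' = sbA M R := by
  obtain ⟨c, hc⟩ := hd
  obtain ⟨A, rfl⟩ := S.surj c
  obtain ⟨B, hB⟩ := S.ker (T + m * R - Q * A) (by rw [map_sub, map_add, map_mul, map_mul, hc, hQ, sub_self])
  refine ⟨R + L ^ (k+1) * A, B + m * L ^ k * A, ?_, ?_, ?_⟩
  · rw [hk]
    linear_combination L ^ (k+1) * hB
  · simp [S.barL, hQ]
  · simp [S.barL]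

theorem dvd_hom_low {N a b : ℕ} {A B : MvPolynomial (Fin N) E} (hA : A.IsHomogeneous a) (hB : B.IsHomogeneous b) (hab : b < a)
    (h : A ∣ B) : B = 0 := by
  obtain ⟨c, hc⟩ := h
  rw [← homogeneousComponent_eq_self hB, hc, hc_low hA hab]

theorem dvd_hom_eq {N a b : ℕ} {A B : MvPolynomial (Fin N) E} (hA : A.IsHomogeneous a) (hB : B.IsHomogeneous (a+b))
    (h : A ∣ B) : ∃ c, c.IsHomogeneous b ∧ B = A * c := by
  obtain ⟨c, hc⟩ := h
  refine ⟨homogeneousComponent b c, homogeneousComponent_isHomogeneous _ _, ?_⟩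
  conv_lhs => rw [← homogeneousComponent_eq_self hB, hc, hc_mul hA]

theorem hom_zero_C {N : ℕ} {c : MvPolynomial (Fin N) E} (h : c.IsHomogeneous 0) : ∃ e, c = C e :=
  ⟨coeff 0 c, by rw [← homogeneousComponent_zero, homogeneousComponent_eq_self h]⟩

theorem Sit.cancel (S : Sit d F L q f3 M Li) {R T b1 b2 g1 g2 : MvPolynomial (Fin n) E} (hR : ¬ sbA M q ∣ R)
    (h1 : sbA M q ∣ b1 * R + g1 * T) (h2 : sbA M q ∣ b2 * R + g2 * T) : sbA M q ∣ b1 * g2 - b2 * g1 := by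
  have : sbA M q ∣ (b1 * g2 - b2 * g1) * R := by
    have := dvd_sub (h1.mul_left g2) (h2.mul_left g1)
    convert this using 1; ring
  exact (S.prime.dvd_or_dvd this).resolve_right hR

theorem dd_ne {N : ℕ} {p : MvPolynomial (Fin N) E} (hp : p.IsHomogeneous 2) {u : Fin N → E} (hu : eval u p ≠ 0) :
    eval u (dd u p) ≠ 0 := by
  rw [dd_euler hp]
  exact mul_ne_zero (by norm_num) hu

theorem lam {N : ℕ} {p b1 b2 : MvPolynomial (Fin N) E} (hp : p.IsHomogeneous 2) (hb1 : b1.IsHomogeneous 1) (hb2 : b2.IsHomogeneous 1)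
    {u1 u2 u3 : Fin N → E} (h1 : eval u1 p ≠ 0) (h2 : eval u2 p ≠ 0) (h3 : eval u3 p ≠ 0)
    (h12 : eval u2 (dd u1 p) = 0) (h13 : eval u3 (dd u1 p) = 0) (h23 : eval u3 (dd u2 p) = 0)
    (h : p ∣ b1 * dd u2 p - b2 * dd u1 p) : ∃ l, b1 = C l * dd u1 p ∧ b2 = C l * dd u2 p := by
  obtain ⟨c, hc, he⟩ := dvd_hom_eq (a := 2) (b := 0) hp ((hb1.mul (dd_hom u2 hp)).sub (hb2.mul (dd_hom u1 hp))) h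
  obtain ⟨e, rfl⟩ := hom_zero_C hc
  have e1 := congrArg (eval u3) he
  simp only [map_sub, map_mul, h13, h23, mul_zero, sub_zero, eval_C] at e1
  have e0 := (mul_eq_zero.1 e1.symm).resolve_left h3
  rw [e0, C_0, mul_zero] at he
  have k2 := dd_ne hp h2
  have e2 := congrArg (eval u2) he
  simp only [map_sub, map_mul, h12, mul_zero, sub_zero, map_zero] at e2
  have e3 := (mul_eq_zero.1 e2).resolve_right k2
  have e4 := congrArg (dd u2) he
  rw [map_sub, dd_mul, dd_mul, hom1_dd hb1, hom1_dd hb2, hom1_dd (dd_hom u2 hp), hom1_dd (dd_hom u1 hp), e3, h12, map_zero,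
    map_zero, mul_zero, mul_zero, add_zero, zero_add] at e4
  have e5 : b1 = C (eval u2 b2 / eval u2 (dd u2 p)) * dd u1 p := by
    have : C (eval u2 (dd u2 p)) * b1 = C (eval u2 (dd u2 p)) * (C (eval u2 b2 / eval u2 (dd u2 p)) * dd u1 p) := by
      rw [← mul_assoc, ← C_mul, mul_div_cancel₀ _ k2]
      linear_combination e4
    exact mul_left_cancel₀ (C_ne_zero.2 k2) this
  refine ⟨_, e5, ?_⟩
  have k1 : dd u1 p ≠ 0 := fun h => dd_ne hp h1 (by rw [h, map_zero])
  apply mul_left_cancel₀ k1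
  rw [e5] at he
  linear_combination -he

theorem dvdC {N : ℕ} {p x : MvPolynomial (Fin N) E} {k : ℕ} (h : p ∣ C ((k+1 : ℕ) : E) * x) : p ∣ x := by
  have := h.mul_left (C (((k+1 : ℕ) : E)⁻¹))
  rwa [← mul_assoc, ← C_mul, inv_mul_cancel₀ (Nat.cast_ne_zero.2 (by omega)), C_1, one_mul] at this

theorem endg (hd : 3 ≤ d) (S : Sit d F L q f3 M Li) [IsAlgClosed E] : Red F d := by
  have hqb : (sbA M q).IsHomogeneous 2 := sb_hom M S.hq
  obtain ⟨u1, u2, u3, hu1, hu2, hu3, h12, h13, h23⟩ := triple hqb S.irr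
  have hh : ∀ u, (dd u (sbA M q)).IsHomogeneous 1 := fun u => dd_hom u hqb
  have hndvd : ∀ u, eval u (sbA M q) ≠ 0 → ¬ sbA M q ∣ dd u (sbA M q) := by
    intro u hu h
    have := dvd_hom_low hqb (hh u) one_lt_two h
    exact dd_ne hqb hu (by rw [this, map_zero])
  -- decomposition of f3
  obtain ⟨ℓ, Q3, hℓ, hQ3, hf3⟩ : ∃ ℓ Q3 : MvPolynomial (Fin (n+1)) E, ℓ.IsHomogeneous 1 ∧ Q3.IsHomogeneous 2 ∧ f3 = q * ℓ + L * Q3 := by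
    obtain ⟨c, hc⟩ := S.dvd3
    obtain ⟨c, rfl⟩ := S.surj c
    obtain ⟨e, he⟩ := S.ker (f3 - q * c) (by rw [map_sub, map_mul, hc, sub_self])
    refine ⟨homogeneousComponent 1 c, homogeneousComponent 2 e, homogeneousComponent_isHomogeneous _ _,
      homogeneousComponent_isHomogeneous _ _, ?_⟩
    have := congrArg (homogeneousComponent 3) (sub_eq_iff_eq_add'.1 he)
    rw [map_add, show 3 = 2 + 1 from rfl, hc_mul S.hq, homogeneousComponent_eq_self S.h3, show 2 + 1 = 1 + 2 from rfl,
      hc_mul S.hL] at this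
    exact this
  obtain ⟨R0, T0, hF0⟩ : ∃ R T, F = q * R + L ^ (0+1) * T := by
    obtain ⟨c, hc⟩ := S.dvdF
    obtain ⟨c, rfl⟩ := S.surj c
    obtain ⟨e, he⟩ := S.ker (F - q * c) (by rw [map_sub, map_mul, hc, sub_self])
    exact ⟨c, e, by rw [zero_add, pow_one, ← he]; ring⟩
  have hR0 : ¬ sbA M q ∣ sbA M R0 := by
    intro h
    apply S.nsq
    rw [hF0]
    simp only [map_add, map_mul, zero_add, pow_one, S.barL, zero_mul, add_zero]
    exact mul_dvd_mul_left _ h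
  -- derivations
  have hder : ∀ u : Fin n → E, ∃ D : Derivation ℤ E E, cD D F = 0 ∧ cD D L = dd (Matrix.vecMul u M) q ∧
      cD D q = C (eval (Matrix.vecMul u M) ℓ) * q + (ℓ * dd (Matrix.vecMul u M) q + L * dd (Matrix.vecMul u M) Q3) := by
    intro u
    obtain ⟨D, h1, h2, h3⟩ := S.der u
    refine ⟨D, h1, h2, ?_⟩
    rw [h3, hf3, map_add, dd_mul, dd_mul, S.ddL, hom1_dd hℓ]
    ring
  -- k = 1
  obtain ⟨D1, hDF1, hDL1, hDq1⟩ := hder u1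
  obtain ⟨D2, hDF2, hDL2, hDq2⟩ := hder u2
  have hb1 : sbA M (cD D1 L) = dd u1 (sbA M q) := by rw [hDL1, S.barh]
  have hb2 : sbA M (cD D2 L) = dd u2 (sbA M q) := by rw [hDL2, S.barh]
  have s1 : sbA M q ∣ sbA M T0 + sbA M ℓ * sbA M R0 := by
    have := S.stepA D1 hDF1 rfl hF0 (α := C (eval (Matrix.vecMul u1 M) ℓ)) (β := ℓ * dd (Matrix.vecMul u1 M) q + L * dd (Matrix.vecMul u1 M) Q3)
      (by rw [hDq1, pow_zero, mul_one])
    rw [hb1, map_add, map_mul, map_mul, S.barL, S.barh] at this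
    have h : sbA M q ∣ dd u1 (sbA M q) * (sbA M T0 + sbA M ℓ * sbA M R0) := by
      convert this using 1
      simp; ring
    exact (S.prime.dvd_or_dvd h).resolve_left (hndvd u1 hu1)
  obtain ⟨R1, T1, hF1, hQ1, hR1⟩ := S.stepB rfl hF0 s1
  set Q1 := q - ℓ * L ^ (0+1) with hQ1d
  -- k = 2
  have hDQ : ∀ (u : Fin n → E) (D : Derivation ℤ E E), cD D L = dd (Matrix.vecMul u M) q →
      cD D q = C (eval (Matrix.vecMul u M) ℓ) * q + (ℓ * dd (Matrix.vecMul u M) q + L * dd (Matrix.vecMul u M) Q3) →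
      ∃ β, β.IsHomogeneous 1 ∧ cD D Q1 = C (eval (Matrix.vecMul u M) ℓ) * Q1 + β * L ^ 1 := by
    intro u D h1 h2
    refine ⟨C (eval (Matrix.vecMul u M) ℓ) * ℓ + dd (Matrix.vecMul u M) Q3 - cD D ℓ, ?_, ?_⟩
    · refine (IsHomogeneous.add ?_ (dd_hom _ hQ3)).sub (cD_hom D hℓ)
      simpa using (isHomogeneous_C _ _).mul hℓ
    · rw [hQ1d, zero_add, pow_one, cD_sub, cD_mul, h1, h2]
      ring
  obtain ⟨β1, hβ1, hDQ1⟩ := hDQ u1 D1 hDL1 hDq1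
  obtain ⟨β2, hβ2, hDQ2⟩ := hDQ u2 D2 hDL2 hDq2
  clear_value Q1
  have t1 := S.stepA D1 hDF1 hQ1 hF1 hDQ1
  have t2 := S.stepA D2 hDF2 hQ1 hF1 hDQ2
  rw [hb1, hR1] at t1
  rw [hb2, hR1] at t2
  have t3 := S.cancel hR0 t1 t2
  have t4 : sbA M q ∣ sbA M β1 * dd u2 (sbA M q) - sbA M β2 * dd u1 (sbA M q) := by
    apply dvdC (k := 1)
    convert t3 using 1; ring
  obtain ⟨l, hl1, hl2⟩ := lam hqb (sb_hom M hβ1) (sb_hom M hβ2) hu1 hu2 hu3 h12 h13 h23 t4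
  have s2 : sbA M q ∣ sbA M T1 + sbA M (C (l / 2)) * sbA M R1 := by
    rw [sbA_eq M β1, hl1] at t1
    have h : sbA M q ∣ dd u1 (sbA M q) * (sbA M T1 + sbA M (C (l / 2)) * sbA M R1) := by
      apply dvdC (k := 1)
      convert t1 using 1
      rw [sbA_C, hR1]
      have : C ((1 + 1 : ℕ) : E) * C (l / 2) = (C l : MvPolynomial (Fin n) E) := by
        rw [← C_mul]; congr 1; push_cast; ring
      linear_combination (dd u1 (sbA M q)) * sbA M R0 * this
    exact (S.prime.dvd_or_dvd h).resolve_left (hndvd u1 hu1)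
  obtain ⟨R2, T2, hF2, hQ2, hR2⟩ := S.stepB hQ1 hF1 s2
  set Q2 := Q1 - C (l / 2) * L ^ (1+1) with hQ2d
  have hQ2h : Q2.IsHomogeneous 2 := by
    rw [hQ2d, hQ1d]
    refine (S.hq.sub ?_).sub ?_
    · exact hℓ.mul (S.hL.pow 1)
    · simpa using (isHomogeneous_C _ _).mul (S.hL.pow 2)
  -- k = 3
  have hDR : ∀ (u : Fin n → E) (D : Derivation ℤ E E) (β : MvPolynomial (Fin (n+1)) E), β.IsHomogeneous 1 → cD D L = dd (Matrix.vecMul u M) q →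
      sb M β = C l * dd u (sbA M q) →
      cD D Q1 = C (eval (Matrix.vecMul u M) ℓ) * Q1 + β * L ^ 1 →
      ∃ γ : E, cD D Q2 = C (eval (Matrix.vecMul u M) ℓ) * Q2 + C γ * L ^ 2 := by
    intro u D β hβ h1 h2 h3
    have h4 : L ∣ β - C l * dd (Matrix.vecMul u M) q := by
      apply S.ker
      rw [map_sub, map_mul, S.barh, sbA_C, sbA_eq M β, h2, sub_self]
    obtain ⟨c, hc, he⟩ := dvd_hom_eq (a := 1) (b := 0) S.hL (hβ.sub (by simpa using (isHomogeneous_C _ l).mul (dd_hom (Matrix.vecMul u M) S.hq))) h4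
    obtain ⟨γ, rfl⟩ := hom_zero_C hc
    refine ⟨γ + eval (Matrix.vecMul u M) ℓ * (l / 2) - D (l / 2), ?_⟩
    have h5 : (C ((1 + 1 : ℕ) : E) * C (l / 2) : MvPolynomial (Fin (n+1)) E) = C l := by
      rw [← C_mul]; congr 1; push_cast; ring
    rw [hQ2d, cD_sub, cD_mul, cD_C, cD_pow, h3, h1, C_sub, C_add, C_mul]
    linear_combination L * he - L * dd (Matrix.vecMul u M) q * h5
  obtain ⟨γ1, hg1⟩ := hDR u1 D1 β1 hβ1 hDL1 hl1 hDQ1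
  obtain ⟨γ2, hg2⟩ := hDR u2 D2 β2 hβ2 hDL2 hl2 hDQ2
  clear_value Q2
  have v1 := S.stepA D1 hDF1 hQ2 hF2 hg1
  have v2 := S.stepA D2 hDF2 hQ2 hF2 hg2
  rw [hb1, hR2, hR1] at v1
  rw [hb2, hR2, hR1] at v2
  have v3 := S.cancel hR0 v1 v2
  have v4 : C γ1 * dd u2 (sbA M q) - C γ2 * dd u1 (sbA M q) = 0 := by
    apply dvd_hom_low hqb (b := 1) ?_ one_lt_two
    · apply dvdC (k := 2)
      convert v3 using 1
      rw [sbA_C, sbA_C]; ring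
    · exact IsHomogeneous.sub (by simpa using (isHomogeneous_C _ γ1).mul (hh u2)) (by simpa using (isHomogeneous_C _ γ2).mul (hh u1))
  have v5 := congrArg (eval u2) v4
  simp only [map_sub, map_mul, eval_C, h12, mul_zero, sub_zero, map_zero] at v5
  have v6 := (mul_eq_zero.1 v5).resolve_right (dd_ne hqb hu2)
  rw [v6, C_0, zero_mul, add_zero] at hg1
  -- all k
  have all : ∀ k, ∃ R T, F = Q2 * R + L ^ (k+1) * T := by
    intro k
    induction k with
    | zero => exact ⟨R2, L ^ 2 * T2, by rw [hF2]; ring⟩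
    | succ k ih =>
      obtain ⟨R, T, h⟩ := ih
      have w := S.stepA D1 hDF1 hQ2 h (α := C (eval (Matrix.vecMul u1 M) ℓ)) (β := 0) (by rw [hg1]; ring)
      rw [map_zero, zero_mul, zero_add, mul_assoc, hb1] at w
      have w2 := (S.prime.dvd_or_dvd (dvdC w)).resolve_left (hndvd u1 hu1)
      obtain ⟨R', T', h', -, -⟩ := S.stepB (m := 0) hQ2 h (by simpa using w2)
      exact ⟨R', T', by simpa using h'⟩
  obtain ⟨R, T, h⟩ := all d
  have hl := congrArg (homogeneousComponent (2 + (d-2))) h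
  rw [map_add, hc_mul hQ2h, hc_low (S.hL.pow (d+1)) (by omega), show 2 + (d-2) = d by omega, homogeneousComponent_eq_self S.hF, add_zero] at hl
  refine ⟨_, _, hl, ?_, ?_⟩
  · have := hQ2h.totalDegree_le; omega
  · have := (homogeneousComponent_isHomogeneous (d-2) R).totalDegree_le; omega

end endgame

theorem main_contra {K : Type} [Field K] [IsAlgClosed K] [CharZero K] {n d : ℕ} (hn : 4 ≤ n) (hd : 3 ≤ d)
    (F : MvPolynomial (Fin (n+1)) K) (hF : F.IsHomogeneous d) (hI : Irreducible F)
    (x0 : Fin (n+1) → K) (hx0 : eval x0 F = 0) (hL : ¬ LD F 0 x0 (n-1)) :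
    ∃ a x, a ≠ 0 ∧ x ≠ 0 ∧ x ⬝ᵥ a = 0 ∧ eval x F = 0 ∧ ¬ LD F a x (n-2) := by
  by_contra H
  push Not at H
  have hP : Prime F := UniqueFactorizationMonoid.irreducible_iff_prime.1 hI
  obtain ⟨E, iE, iA, iC, κ, ξ, h1, h2, h3, h4⟩ := GEN F hP H x0 hx0 hL
  have hR : ¬ Red F d := irr_not_Red hI (hF.totalDegree hI.ne_zero)
  have hRE : ¬ Red (map κ F) d := fun h => hR (h.desc κ)
  have hev : ∀ w, eval ξ (dd w (map κ F)) = ∑ i, w i * eval ξ (map κ (pderiv i F)) := by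
    intro w
    rw [dd_eq, map_sum]
    refine Finset.sum_congr rfl fun i _ => ?_
    rw [map_mul, eval_C, pderiv_map]
  have hξ0 : ξ ≠ 0 := by
    rintro rfl
    apply h2 (X 0) (not_dvd_hom hF (isHomogeneous_X K 0) (X_ne_zero _) (by omega))
    simp
  obtain ⟨i, hi⟩ := pd_zero hF (by omega) hI.ne_zero
  have hl : fj ξ (map κ F) 1 ≠ 0 := by
    intro h
    have h5 := fj_one ξ (Pi.single i 1) (map κ F)
    rw [h, map_zero, hev, Finset.sum_eq_single i (by intro j _ hj; rw [Pi.single_eq_of_ne hj, zero_mul]) (by simp),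
      Pi.single_eq_same, one_mul] at h5
    exact h2 _ (not_dvd_hom hF hF.pderiv hi (by omega)) h5.symm
  obtain ⟨M, Li, S⟩ := setup hn hd (map κ F) (hF.map κ) hRE ξ h1 hξ0 h3 h4 (by
    intro w hw
    rw [hev] at hw
    obtain ⟨D, hD1, hD2⟩ := deriv_ext κ F hP ξ h1 h2 w hw
    refine ⟨D, ?_, hD2⟩
    ext m
    rw [coeff_cD, coeff_map, hD1, coeff_zero]) hl
  exact hRE (endg hd S)

theorem sec_nonzero {K : Type} [Field K] [IsAlgClosed K] {n d : ℕ} (hd : 2 ≤ d)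
    (F : MvPolynomial (Fin (n+1)) K) (hF : F.IsHomogeneous d) (hI : Irreducible F) (a : Fin (n+1) → K) (ha : a ≠ 0) :
    ∃ v, v ⬝ᵥ a = 0 ∧ eval v F ≠ 0 := by
  by_contra h
  push Not at h
  let l : MvPolynomial (Fin (n+1)) K := ∑ i, C (a i) * X i
  have hle : ∀ x, eval x l = x ⬝ᵥ a := by
    intro x; simp [l, dotProduct, mul_comm]
  have hl : l.IsHomogeneous 1 := IsHomogeneous.sum _ _ _ fun i _ => by
    simpa using (isHomogeneous_C _ (a i)).mul (isHomogeneous_X K i)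
  have hl0 : l ≠ 0 := by
    intro h0
    apply ha
    funext i
    have := hle (Pi.single i 1)
    rw [h0] at this
    simpa using this.symm
  have hd1 : l ∣ F := nullst (hom1_prime hl hl0) (fun x hx => h x (by rw [← hle, hx]))
  exact not_dvd_hom hF hl hl0 (by omega) ((hom1_prime hl hl0).irreducible.associated_of_dvd hI hd1).symm.dvd

def Good (K : Type) [Field K] (n d : ℕ) (f : Mon (n+1) d → K) (a : Fin (n+1) → K) : Prop :=
  Sum.elim f a ∉ Bad1 K n d ∧ Sum.elim f a ∉ Bad2 K n d

theorem LD.scale {K : Type} [Field K] {N r : ℕ} {F : MvPolynomial (Fin N) K} {a x : Fin N → K} (t : K) (h : LD F a x r) :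
    LD F (t • a) x r := by
  obtain ⟨M, Li, c, h1, h2, h3, h4⟩ := h
  exact ⟨M, Li, c, h1, by rw [Matrix.mulVec_smul, h2, smul_zero], h3, h4⟩

theorem Good.scale {K : Type} [Field K] {n d : ℕ} {f : Mon (n+1) d → K} {a : Fin (n+1) → K} {t : K} (ht : t ≠ 0)
    (h : Good K n d f (t • a)) : Good K n d f a := by
  refine ⟨fun hb => h.1 ?_, fun hb => h.2 ?_⟩
  · obtain ⟨M, Li, h1, h2, h3⟩ := hb
    refine ⟨M, Li, h1, ?_, h3⟩
    have h2 : M.mulVec a = 0 := h2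
    change M.mulVec (t • a) = 0
    rw [Matrix.mulVec_smul, h2, smul_zero]
  · intro x hx hxa hxF
    have hxa : x ⬝ᵥ (t • a) = 0 := hxa
    rw [dotProduct_smul, smul_eq_mul] at hxa
    exact (hb x hx ((mul_eq_zero.1 hxa).resolve_left ht) hxF).scale t

theorem homog_pick {K : Type} [Field K] [Infinite K] {N : ℕ} (Φ : MvPolynomial (Fin N) K) (hΦ : Φ ≠ 0) :
    ∃ e ≤ Φ.totalDegree, ∃ Ψ : MvPolynomial (Fin N) K, Ψ ≠ 0 ∧ Ψ.IsHomogeneous e ∧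
      ∀ a, eval a Ψ ≠ 0 → ∃ t : K, t ≠ 0 ∧ eval (t • a) Φ ≠ 0 := by
  have hex : ∃ e ∈ Finset.range (Φ.totalDegree + 1), homogeneousComponent e Φ ≠ 0 := by
    by_contra h
    push Not at h
    apply hΦ
    rw [← sum_homogeneousComponent Φ]
    exact Finset.sum_eq_zero h
  obtain ⟨e, he, h0⟩ := hex
  refine ⟨e, by simpa using he, _, h0, homogeneousComponent_isHomogeneous _ _, ?_⟩
  intro a ha
  let p : Polynomial K := ∑ i ∈ Finset.range (Φ.totalDegree + 1), Polynomial.C (eval a (homogeneousComponent i Φ)) * Polynomial.X ^ i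
  have hp : p ≠ 0 := by
    intro h
    apply ha
    have := congrArg (fun p => Polynomial.coeff p e) h
    simp only [p, Polynomial.finsetSum_coeff, Polynomial.coeff_C_mul_X_pow, Polynomial.coeff_zero] at this
    rwa [Finset.sum_ite_eq, if_pos he] at this
  have : ∃ t, Polynomial.eval t (Polynomial.X * p) ≠ 0 := by
    by_contra h
    push Not at h
    exact mul_ne_zero Polynomial.X_ne_zero hp (Polynomial.funext fun t => by rw [h, Polynomial.eval_zero])
  obtain ⟨t, ht⟩ := this
  rw [Polynomial.eval_mul, Polynomial.eval_X] at ht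
  refine ⟨t, left_ne_zero_of_mul ht, ?_⟩
  convert right_ne_zero_of_mul ht using 1
  conv_lhs => rw [← sum_homogeneousComponent Φ]
  rw [map_sum, Polynomial.eval_finsetSum]
  refine Finset.sum_congr rfl fun i _ => ?_
  rw [eval_smul_hom (homogeneousComponent_isHomogeneous i Φ), Polynomial.eval_mul, Polynomial.eval_C, Polynomial.eval_pow, Polynomial.eval_X, mul_comm]

theorem overK (K : Type) [Field K] [IsAlgClosed K] [CharZero K] (n d : ℕ) (hn : 4 ≤ n) (hd : 3 ≤ d) :
    ∃ Cdeg : ℕ, ∀ F : MvPolynomial (Fin (n+1)) K, F.IsHomogeneous d → Irreducible F →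
      (∃ x0, eval x0 F = 0 ∧ ¬ LD F 0 x0 (n-1)) →
      ∃ e ≤ Cdeg, ∃ Φ : MvPolynomial (Fin (n+1)) K, Φ ≠ 0 ∧ Φ.IsHomogeneous e ∧
        ∀ a, eval a Φ ≠ 0 → Good K n d (fun m => coeff m.1 F) a := by
  obtain ⟨C1, hC1⟩ := comp_bound (Bad1 K n d)
  obtain ⟨C2, hC2⟩ := comp_bound (Bad2 K n d)
  refine ⟨C1 + C2, fun F hF hI hx => ?_⟩
  obtain ⟨x0, hx0, hL⟩ := hx
  have hpo := polyOf_coeff F hF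
  set f : Mon (n+1) d → K := fun m => coeff m.1 F with hf
  obtain ⟨Φ1, h10, h1d, h1⟩ := hC1 f (by
    obtain ⟨a, M, ha, hMa, hR⟩ := bertini (by omega) (by omega) F hF hI
    refine ⟨a, ?_⟩
    by_contra h
    push Not at h
    apply hR
    rw [← hpo]
    refine Bad1_closed f a ha h M hMa ?_
    rw [hpo]
    intro h0
    exact hR ⟨0, 0, by rw [h0, mul_zero], by simp; omega, by simp; omega⟩)
  obtain ⟨Φ2, h20, h2d, h2⟩ := hC2 f (by
    obtain ⟨a, x, ha, hx, hxa, hFx, hN⟩ := main_contra hn hd F hF hI x0 hx0 hL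
    obtain ⟨v, hv, hFv⟩ := sec_nonzero (by omega) F hF hI a ha
    refine ⟨a, ?_⟩
    by_contra h
    push Not at h
    apply hN
    rw [← hpo] at hFx hFv ⊢
    exact Bad2_closed f a ha h v hv hFv x hx hxa hFx)
  obtain ⟨e, he, Ψ, hΨ0, hΨ, hΨa⟩ := homog_pick (Φ1 * Φ2) (mul_ne_zero h10 h20)
  refine ⟨e, he.trans ((totalDegree_mul _ _).trans (by omega)), Ψ, hΨ0, hΨ, fun a ha => ?_⟩
  obtain ⟨t, ht, h⟩ := hΨa a ha
  rw [map_mul] at h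
  exact Good.scale ht ⟨h1 _ (left_ne_zero_of_mul h), h2 _ (right_ne_zero_of_mul h)⟩

theorem desc_rat {K : Type} [Field K] [Algebra ℚ K] {N e : ℕ} (Φ : MvPolynomial (Fin N) K) (h0 : Φ ≠ 0) (hΦ : Φ.IsHomogeneous e) :
    ∃ Ψ : MvPolynomial (Fin N) ℚ, Ψ ≠ 0 ∧ Ψ.IsHomogeneous e ∧
      ∀ a : Fin N → ℚ, eval a Ψ ≠ 0 → eval (algebraMap ℚ K ∘ a) Φ ≠ 0 := by
  classical
  obtain ⟨m, hm⟩ := ne_zero_iff.1 h0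
  have : ∃ ψ : K →ₗ[ℚ] ℚ, ψ (coeff m Φ) ≠ 0 := by
    by_contra h
    push Not at h
    exact hm ((Module.forall_dual_apply_eq_zero_iff ℚ _).1 h)
  obtain ⟨ψ, hψ⟩ := this
  refine ⟨∑ m ∈ Φ.support, monomial m (ψ (coeff m Φ)), ?_, ?_, ?_⟩
  · rw [ne_zero_iff]
    refine ⟨m, ?_⟩
    rw [coeff_sum, Finset.sum_eq_single m (by intro b _ hb; rw [coeff_monomial, if_neg hb])
      (by intro h; rw [coeff_monomial, if_pos rfl, notMem_support_iff.1 h, map_zero]), coeff_monomial, if_pos rfl]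
    exact hψ
  · refine IsHomogeneous.sum _ _ _ fun m hm => isHomogeneous_monomial _ ?_
    have := hΦ (mem_support_iff.1 hm)
    rwa [Finsupp.degree_eq_weight_one]
  · intro a ha h
    apply ha
    have h2 := congrArg ψ h
    rw [eval_eq', map_sum, map_zero] at h2
    rw [map_sum, ← h2]
    refine Finset.sum_congr rfl fun m _ => ?_
    have : (∏ i, (algebraMap ℚ K ∘ a) i ^ m i) = algebraMap ℚ K (∏ i, a i ^ m i) := by
      rw [map_prod]; simp
    rw [this, mul_comm, ← Algebra.smul_def, map_smul, eval_monomial, Finsupp.prod_fintype _ _ (by simp), smul_eq_mul, mul_comm]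

theorem aeval_map_eq {K : Type} [Field K] [Algebra ℚ K] {N : ℕ} (x : Fin N → K) (F : MvPolynomial (Fin N) ℚ) :
    aeval x F = eval x (map (algebraMap ℚ K) F) := by
  rw [aeval_def, eval_map]

/-- Corollary 7.8 of Salberger: let `n ≥ 4` and let `X = {F = 0} ⊂ P^n` be a
geometrically integral hypersurface over `ℚ` of degree `d ≥ 3` which is not covered by
its linear divisors.  Then there is a nonzero form `Φ(a_0,…,a_n)` over `ℚ` of degree
`≪_{d,n} 1` such that whenever `Φ(a) ≠ 0`, the hyperplane section `Π_a ∩ X` is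
geometrically integral and not covered by its linear divisors. -/
theorem stmt_17 (n d : ℕ) (hn : 4 ≤ n) (hd : 3 ≤ d) :
    ∃ Cdeg : ℕ, ∀ F : MvPolynomial (Fin (n + 1)) ℚ,
      F.IsHomogeneous d →
      Irreducible (MvPolynomial.map (algebraMap ℚ (AlgebraicClosure ℚ)) F) →
      (∃ x : Fin (n + 1) → AlgebraicClosure ℚ, x ≠ 0 ∧ aeval x F = 0 ∧
        ¬ ∃ W : Submodule (AlgebraicClosure ℚ) (Fin (n + 1) → AlgebraicClosure ℚ),
          Module.finrank (AlgebraicClosure ℚ) W = n - 1 ∧ x ∈ W ∧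
          ∀ z ∈ W, aeval z F = 0) →
      ∃ Φ : MvPolynomial (Fin (n + 1)) ℚ, Φ ≠ 0 ∧ (∃ e ≤ Cdeg, Φ.IsHomogeneous e) ∧
        ∀ a : Fin (n + 1) → ℚ, a ≠ 0 → eval a Φ ≠ 0 →
        ∀ φ : (Fin n → ℚ) ≃ₗ[ℚ]
            (LinearMap.ker (∑ i, a i • LinearMap.proj i : (Fin (n + 1) → ℚ) →ₗ[ℚ] ℚ)),
          Irreducible (MvPolynomial.map (algebraMap ℚ (AlgebraicClosure ℚ))
            (restrictPoly F
              ((LinearMap.ker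
                  (∑ i, a i • LinearMap.proj i : (Fin (n + 1) → ℚ) →ₗ[ℚ] ℚ)).subtype.comp
                φ.toLinearMap))) ∧
          ∃ y : Fin n → AlgebraicClosure ℚ, y ≠ 0 ∧
            aeval y (restrictPoly F
              ((LinearMap.ker
                  (∑ i, a i • LinearMap.proj i : (Fin (n + 1) → ℚ) →ₗ[ℚ] ℚ)).subtype.comp
                φ.toLinearMap)) = 0 ∧
            ¬ ∃ W : Submodule (AlgebraicClosure ℚ) (Fin n → AlgebraicClosure ℚ),
              Module.finrank (AlgebraicClosure ℚ) W = n - 2 ∧ y ∈ W ∧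
              ∀ z ∈ W, aeval z (restrictPoly F
                ((LinearMap.ker
                    (∑ i, a i • LinearMap.proj i : (Fin (n + 1) → ℚ) →ₗ[ℚ] ℚ)).subtype.comp
                  φ.toLinearMap)) = 0 := by
  obtain ⟨Cd, hC⟩ := overK (AlgebraicClosure ℚ) n d hn hd
  refine ⟨Cd, fun F hF hI hx => ?_⟩
  obtain ⟨x, -, hx1, hx2⟩ := hx
  set κ := algebraMap ℚ (AlgebraicClosure ℚ) with hκ
  obtain ⟨e, he, Φ, hΦ0, hΦ, hG⟩ := hC (map κ F) (hF.map κ) hI ⟨x, by rw [← aeval_map_eq, hx1], by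
    rw [LD_iff]
    rintro ⟨W, h1, h2, -, h4⟩
    exact hx2 ⟨W, h1, h2, fun z hz => by rw [aeval_map_eq]; exact h4 z hz⟩⟩
  obtain ⟨Ψ, hΨ0, hΨ, hΨa⟩ := desc_rat Φ hΦ0 hΦ
  refine ⟨Ψ, hΨ0, ⟨e, he, hΨ⟩, fun a ha hΨe φ => ?_⟩
  have hgood := hG _ (hΨa a hΨe)
  rw [← hκ] at hgood
  have hpo := polyOf_coeff (map κ F) (hF.map κ)
  set ψ := (LinearMap.ker (∑ i, a i • LinearMap.proj i : (Fin (n + 1) → ℚ) →ₗ[ℚ] ℚ)).subtype.comp φ.toLinearMap with hψ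
  have hψinj : Function.Injective ψ := by
    rw [hψ]; exact (Submodule.subtype_injective _).comp φ.injective
  have hψa : ∀ c, ψ c ⬝ᵥ a = 0 := by
    intro c
    have := (φ c).2
    rw [LinearMap.mem_ker] at this
    rw [hψ]
    change ((φ c).1) ⬝ᵥ a = 0
    rw [← this]
    simp only [LinearMap.sum_apply, LinearMap.smul_apply, LinearMap.proj_apply, smul_eq_mul, dotProduct]
    exact Finset.sum_congr rfl fun i _ => mul_comm _ _
  clear_value ψ
  let M : Matrix (Fin n) (Fin (n+1)) ℚ := Matrix.of fun j i => ψ (Pi.single j 1) i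
  have hM : ∀ c, Matrix.vecMul c M = ψ c := by
    intro c
    conv_rhs => rw [pi_eq_sum_univ' c, map_sum]
    funext i
    simp [Matrix.vecMul, dotProduct, M]
  obtain ⟨g, hg⟩ := LinearMap.exists_leftInverse_of_injective ψ (LinearMap.ker_eq_bot.2 hψinj)
  let Li : Matrix (Fin (n+1)) (Fin n) ℚ := Matrix.of fun j i => g (Pi.single j 1) i
  have hLi : ∀ c, Matrix.vecMul c Li = g c := by
    intro c
    conv_rhs => rw [pi_eq_sum_univ' c, map_sum]
    funext i
    simp [Matrix.vecMul, dotProduct, Li]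
  have hinv : M * Li = 1 := by
    apply Matrix.ext_of_single_vecMul
    intro j
    rw [← Matrix.vecMul_vecMul, hM, hLi, Matrix.vecMul_one]
    exact congrArg (fun f => f (Pi.single j 1)) hg
  have hMa : M.mulVec a = 0 := by
    funext j
    exact hψa _
  have hinvK : M.map κ * Li.map κ = 1 := by rw [← Matrix.map_mul, hinv]; simp
  have hMaK : (M.map κ).mulVec (κ ∘ a) = 0 := by
    ext i; rw [← RingHom.map_mulVec, hMa]; simp
  have haK : κ ∘ a ≠ 0 := by
    intro h
    apply ha
    funext i
    have := congrFun h i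
    simpa using this
  have hres : map κ (restrictPoly F ψ) = sb (M.map κ) (map κ F) := by
    rw [← sb_map]; rfl
  constructor
  · rw [hres]
    have hnR : ¬ Red (sb (M.map κ) (map κ F)) d := by
      intro h
      apply hgood.1
      refine ⟨M.map κ, Li.map κ, hinvK, hMaK, ?_⟩
      simp only [Sum.elim_inl]
      rw [hpo]; exact h
    have hne : sb (M.map κ) (map κ F) ≠ 0 := by
      intro h0
      exact hnR ⟨0, 0, by rw [h0, mul_zero], by simp; omega, by simp; omega⟩
    exact not_Red_irr ((sb_hom _ (hF.map κ)).totalDegree hne) (by omega) hnR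
  · have h2 := hgood.2
    unfold Bad2 at h2
    rw [Set.mem_ofPred_eq] at h2
    simp only [Sum.elim_inl, Sum.elim_inr] at h2
    rw [hpo] at h2
    push Not at h2
    obtain ⟨z, hz0, hza, hzF, hzL⟩ := h2
    obtain ⟨y, hy⟩ := row_space (M.map κ) (Li.map κ) (κ ∘ a) haK hinvK hMaK z hza
    refine ⟨y, ?_, ?_, ?_⟩
    · rintro rfl
      rw [Matrix.zero_vecMul] at hy
      exact hz0 hy.symm
    · rw [aeval_map_eq, ← hκ, hres, eval_sb, hy, hzF]
    · rintro ⟨W, hW1, hW2, hW3⟩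
      apply hzL
      rw [LD_iff]
      have hinj : Function.Injective (Matrix.vecMulLinear (M.map κ)) := by
        intro x y hxy
        have := congrArg (fun w => Matrix.vecMul w (Li.map κ)) hxy
        simpa [Matrix.vecMul_vecMul, hinvK] using this
      refine ⟨W.map (Matrix.vecMulLinear (M.map κ)), ?_, ⟨y, hW2, hy⟩, ?_, ?_⟩
      · rw [← hW1]; exact (Submodule.equivMapOfInjective _ hinj _).finrank_eq.symm
      · rintro _ ⟨u, hu, rfl⟩
        change Matrix.vecMul u _ ⬝ᵥ (κ ∘ a) = 0
        rw [← Matrix.dotProduct_mulVec, hMaK, dotProduct_zero]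
      · rintro _ ⟨u, hu, rfl⟩
        have := hW3 u hu
        rwa [aeval_map_eq, ← hκ, hres, eval_sb] at this
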